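/- arXiv:2010.02572 — 4 statements merged into one kernel-verified Lean document; each statement's English description precedes it below -/
import Mathlib

section
/- (Kallin's lemma) Suppose: (1) X₁ and X₂ are polynomially convex compact subsets of ℂⁿ; (2) Y₁ and Y₂ are polynomially convex compact subsets of ℂ such that 0 is a boundary point of both Y₁ and Y₂ and Y₁ ∩ Y₂ = {0}; (3) p is a polynomial such that p(X₁) = Y₁ and p(X₂) = Y₂; (4) p⁻¹(0) ∩ (X₁ ∪ X₂) is polynomially convex. Then X₁ ∪ X₂ is polynomially convex. -/
open Complex MvPolynomial

noncomputable section

/-- `K ⊆ ℂⁿ` is polynomially convex: every point satisfying the maximum inequality over `K`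
for all polynomials already lies in `K`. -/
def PolyConvex {n : ℕ} (K : Set (Fin n → ℂ)) : Prop :=
  ∀ z : Fin n → ℂ,
    (∀ P : MvPolynomial (Fin n) ℂ, ‖eval z P‖ ≤ sSup ((fun w => ‖eval w P‖) '' K)) → z ∈ K

/-- `K ⊆ ℂ` is polynomially convex. -/
def PolyConvex1 (K : Set ℂ) : Prop :=
  ∀ z : ℂ, (∀ P : Polynomial ℂ, ‖P.eval z‖ ≤ sSup ((fun w => ‖P.eval w‖) '' K)) → z ∈ K

open Set Filter Topology

/-- Every component of the complement of `Y` is unbounded. -/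
def Unb (Y : Set ℂ) : Prop :=
  ∀ a ∉ Y, ¬ Bornology.IsBounded (connectedComponentIn Yᶜ a)

lemma frontier_comp {Y : Set ℂ} (hY : IsClosed Y) {a : ℂ} :
    frontier (connectedComponentIn Yᶜ a) ⊆ Y := by
  intro x hx
  by_contra hxY
  have hVo : IsOpen (connectedComponentIn Yᶜ x) := hY.isOpen_compl.connectedComponentIn
  have hUo : IsOpen (connectedComponentIn Yᶜ a) := hY.isOpen_compl.connectedComponentIn
  have hxV : x ∈ connectedComponentIn Yᶜ x := mem_connectedComponentIn hxY
  obtain ⟨y, hyV, hyU⟩ := mem_closure_iff.1 (frontier_subset_closure hx) _ hVo hxV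
  have h1 := connectedComponentIn_eq hyV
  have h2 := connectedComponentIn_eq hyU
  rw [h1, ← h2] at hxV
  rw [hUo.frontier_eq] at hx
  exact hx.2 hxV

lemma unb_of_polyConvex1 {Y : Set ℂ} (hYc : IsCompact Y) (hY : PolyConvex1 Y) : Unb Y := by
  intro a ha hb
  apply ha
  apply hY
  intro P
  have haU : a ∈ connectedComponentIn Yᶜ a := mem_connectedComponentIn ha
  refine Complex.norm_le_of_forall_mem_frontier_norm_le (f := fun w => P.eval w) hb
    P.differentiable.diffContOnCl ?_ (subset_closure haU)
  intro w hw
  refine le_csSup ?_ ⟨w, frontier_comp hYc.isClosed hw, rfl⟩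
  exact (hYc.image (by fun_prop)).bddAbove

lemma chain {Y : Set ℂ} (hYc : IsClosed Y) {Q : ℂ → Prop} {η : ℝ} (hη : 0 < η)
    (hstep : ∀ b b', b ∉ Y → b' ∉ Y → (∀ w ∈ Y, 3 * ‖b - b'‖ ≤ ‖w - b'‖) → ‖b - b'‖ ≤ η →
      Q b → Q b') {a x y : ℂ} (hx : x ∈ connectedComponentIn Yᶜ a)
    (hy : y ∈ connectedComponentIn Yᶜ a) (hQ : Q x) : Q y := by
  refine isPreconnected_connectedComponentIn.induction₂' (fun x y => Q x → Q y) ?_ ?_ hx hy hQ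
  · intro x hx
    have hxY : x ∈ Yᶜ := connectedComponentIn_subset _ _ hx
    obtain ⟨δ, hδ, hball⟩ := Metric.isOpen_iff.1 hYc.isOpen_compl x hxY
    have hw : ∀ w ∈ Y, δ ≤ ‖w - x‖ := by
      intro w hw
      by_contra! h
      exact hball (by simpa [dist_eq_norm] using h) hw
    filter_upwards [self_mem_nhdsWithin, mem_nhdsWithin_of_mem_nhds
      (Metric.ball_mem_nhds x (show 0 < min (δ / 4) η by positivity))] with y hy hyb
    rw [Metric.mem_ball, dist_eq_norm, lt_min_iff] at hyb
    have hyY : y ∈ Yᶜ := connectedComponentIn_subset _ _ hy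
    have hs : ‖x - y‖ = ‖y - x‖ := norm_sub_rev _ _
    refine ⟨hstep x y hxY hyY (fun w hwY => ?_) (by linarith [hyb.2]),
      hstep y x hyY hxY (fun w hwY => ?_) (by linarith [hyb.2])⟩
    · have h1 := hw w hwY
      have h2 : ‖w - x‖ ≤ ‖w - y‖ + ‖y - x‖ := norm_sub_le_norm_sub_add_norm_sub _ _ _
      linarith [hyb.1]
    · have h1 := hw w hwY
      linarith [hyb.1]
  · intro x y z _ _ _ h1 h2 h
    exact h2 (h1 h)

lemma Unb.exists_far {Y : Set ℂ} (hY : Unb Y) {a : ℂ} (ha : a ∉ Y) (R : ℝ) :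
    ∃ b ∈ connectedComponentIn Yᶜ a, R < ‖b‖ := by
  by_contra! h
  exact hY a ha ((Metric.isBounded_closedBall (x := (0 : ℂ)) (r := R)).subset
    fun b hb => by simpa using h b hb)

lemma bound_of_compact {Y : Set ℂ} (hYc : IsCompact Y) : ∃ M, 0 < M ∧ ∀ w ∈ Y, ‖w‖ ≤ M := by
  obtain ⟨M, hM⟩ := hYc.isBounded.exists_norm_le
  exact ⟨max M 1, by positivity, fun w hw => (hM w hw).trans (le_max_left _ _)⟩

lemma one_add_mem_slit {x : ℂ} (hx : ‖x‖ < 1) : 1 + x ∈ slitPlane := by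
  exact mem_slitPlane_of_norm_lt_one hx

lemma exists_log {Y : Set ℂ} (hYc : IsCompact Y) (hY : Unb Y) {a : ℂ} (ha : a ∉ Y) :
    ∃ u : ℂ → ℂ, ContinuousOn u Y ∧ ∀ w ∈ Y, exp (u w) = w - a := by
  obtain ⟨M, hM0, hM⟩ := bound_of_compact hYc
  obtain ⟨b, hb, hbM⟩ := hY.exists_far ha M
  have hb0 : b ≠ 0 := by
    rintro rfl
    simp at hbM; linarith
  have hlt : ∀ w ∈ Y, ‖-w / b‖ < 1 := by
    intro w hw
    rw [norm_div, norm_neg, div_lt_one (by positivity)]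
    linarith [hM w hw]
  refine chain hYc.isClosed
    (Q := fun a => ∃ u : ℂ → ℂ, ContinuousOn u Y ∧ ∀ w ∈ Y, exp (u w) = w - a) one_pos ?_ hb
    (mem_connectedComponentIn ha) ?_
  · rintro b b' hb hb' h _ ⟨u, huc, hu⟩
    have hne : ∀ w ∈ Y, w - b' ≠ 0 := fun w hw h0 => hb' (by rwa [← sub_eq_zero.1 h0])
    have hne' : ∀ w ∈ Y, w - b ≠ 0 := fun w hw h0 => hb (by rwa [← sub_eq_zero.1 h0])
    have hlt : ∀ w ∈ Y, ‖(b' - b) / (w - b')‖ < 1 := by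
      intro w hw
      have : 0 < ‖w - b'‖ := norm_pos_iff.2 (hne w hw)
      rw [norm_div, div_lt_one this, norm_sub_rev]
      linarith [h w hw, norm_nonneg (b - b')]
    refine ⟨fun w => u w - Complex.log (1 + (b' - b) / (w - b')), ?_, ?_⟩
    · refine huc.sub (ContinuousOn.clog ?_ fun w hw => one_add_mem_slit (hlt w hw))
      exact continuousOn_const.add (continuousOn_const.div (by fun_prop) hne)
    · intro w hw
      have h1 : 1 + (b' - b) / (w - b') = (w - b) / (w - b') := by
        field_simp [hne w hw]; ring
      rw [Complex.exp_sub, hu w hw, Complex.exp_log (slitPlane_ne_zero (one_add_mem_slit (hlt w hw))), h1]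
      field_simp [hne w hw, hne' w hw]
  · refine ⟨fun w => Complex.log (-b) + Complex.log (1 + -w / b), ?_, ?_⟩
    · refine continuousOn_const.add (ContinuousOn.clog ?_ fun w hw => one_add_mem_slit (hlt w hw))
      fun_prop
    · intro w hw
      rw [Complex.exp_add, Complex.exp_log (by simpa using hb0), Complex.exp_log (slitPlane_ne_zero (one_add_mem_slit (hlt w hw)))]
      field_simp
      ring

lemma no_log {g : ℂ → ℂ} (hg : Continuous g) {a : ℂ} {R : ℝ}
    (h : ∀ w, R ≤ ‖w‖ → exp (g w) = w - a) : False := by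
  set ρ : ℝ := |R| + ‖a‖ + 1 with hρ
  have hρ0 : 0 < ρ := by positivity
  let ψ : ℝ → ℂ := fun t => g (a + ρ * exp (t * I)) - t * I
  have hψ : Continuous ψ := by fun_prop
  have he : ∀ t, exp (ψ t) = ρ := by
    intro t
    have : R ≤ ‖a + ρ * exp (t * I)‖ := by
      have h1 : ‖(ρ : ℂ) * exp (t * I)‖ = ρ := by
        rw [norm_mul, Complex.norm_exp_ofReal_mul_I]; simp [abs_of_pos hρ0]
      have h2 : ‖(ρ : ℂ) * exp (t * I)‖ ≤ ‖a + ρ * exp (t * I)‖ + ‖a‖ := by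
        have := norm_sub_le (a + ρ * exp (t * I)) a
        simpa using this
      linarith [le_abs_self R]
    simp only [ψ]
    rw [Complex.exp_sub, h _ this]
    field_simp [Complex.exp_ne_zero]
    ring
  have hc : ψ 0 = ψ (2 * Real.pi) := by
    refine Complex.isCoveringMap_exp.const_of_comp hψ ?_ 0 (2 * Real.pi)
    intro s t
    simp only [Subtype.mk.injEq]
    rw [he, he]
  simp only [ψ] at hc
  push_cast at hc
  rw [Complex.exp_two_pi_mul_I] at hc
  simp only [Complex.exp_zero, zero_mul, sub_zero, mul_one] at hc
  have := sub_eq_self.1 hc.symm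
  simp at this

lemma isSimplyConnected_univ' : IsSimplyConnected (univ : Set ℂ) := by
  have : ContractibleSpace (univ : Set ℂ) :=
    (convex_univ (𝕜 := ℝ) (E := ℂ)).contractibleSpace ⟨0, trivial⟩
  exact SimplyConnectedSpace.ofContractible _

lemma unb_union {Y₁ Y₂ : Set ℂ} (hc₁ : IsCompact Y₁) (hc₂ : IsCompact Y₂) (h₁ : Unb Y₁)
    (h₂ : Unb Y₂) (hY : Y₁ ∩ Y₂ = {0}) : Unb (Y₁ ∪ Y₂) := by
  classical
  intro a ha hbd
  have h0 : (0 : ℂ) ∈ Y₁ ∩ Y₂ := by rw [hY]; rfl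
  obtain ⟨u₁, hu₁c, hu₁⟩ := exists_log hc₁ h₁ (fun h => ha (Or.inl h))
  obtain ⟨u₂, hu₂c, hu₂⟩ := exists_log hc₂ h₂ (fun h => ha (Or.inr h))
  set c := u₁ 0 - u₂ 0 with hcdef
  have hc : exp c = 1 := by
    rw [hcdef, Complex.exp_sub, hu₁ 0 h0.1, hu₂ 0 h0.2, div_self]
    intro h
    have : a = 0 := by simpa using h
    exact ha (this ▸ Or.inl h0.1)
  let u : ℂ → ℂ := fun w => if w ∈ Y₁ then u₁ w else u₂ w + c
  have e₁ : EqOn u u₁ Y₁ := fun w hw => by simp [u, hw]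
  have e₂ : EqOn u (fun w => u₂ w + c) Y₂ := by
    intro w hw
    by_cases h : w ∈ Y₁
    · have : w ∈ ({0} : Set ℂ) := hY ▸ ⟨h, hw⟩
      rw [mem_singleton_iff] at this
      subst this
      simp [u, h, hcdef]
    · simp [u, h]
  have huc : ContinuousOn u (Y₁ ∪ Y₂) :=
    (hu₁c.congr e₁).union_of_isClosed ((hu₂c.add continuousOn_const).congr e₂)
      hc₁.isClosed hc₂.isClosed
  have hu : ∀ w ∈ Y₁ ∪ Y₂, exp (u w) = w - a := by
    rintro w (hw | hw)
    · rw [e₁ hw, hu₁ w hw]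
    · rw [e₂ hw, Complex.exp_add, hu₂ w hw, hc, mul_one]
  have hcl : IsClosed (Y₁ ∪ Y₂) := hc₁.isClosed.union hc₂.isClosed
  obtain ⟨F, hF⟩ := ContinuousMap.exists_restrict_eq hcl
    ⟨(Y₁ ∪ Y₂).domRestrict u, continuousOn_iff_continuous_domRestrict.1 huc⟩
  have hF' : ∀ w ∈ Y₁ ∪ Y₂, F w = u w := fun w hw => by
    have := congrArg (fun f => f ⟨w, hw⟩) hF
    simpa using this
  set U := connectedComponentIn (Y₁ ∪ Y₂)ᶜ a with hU
  let k : ℂ → ℂ := U.piecewise (fun w => exp (F w)) (fun w => w - a)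
  have hk : Continuous k := by
    refine Continuous.piecewise ?_ (by fun_prop) (by fun_prop)
    intro w hw
    have hwY := frontier_comp hcl hw
    rw [hF' w hwY, hu w hwY]
  have haU : a ∈ U := mem_connectedComponentIn ha
  have hk0 : ∀ w, k w ≠ 0 := by
    intro w
    by_cases hw : w ∈ U
    · simp [k, hw]
    · simp only [k, Set.piecewise_eq_of_notMem _ _ _ hw]
      intro h
      exact hw (by rwa [sub_eq_zero.1 h])
  obtain ⟨g, hg, hgk⟩ := Complex.exists_continuousOn_eqOn_exp_comp (U := (univ : Set ℂ)) (g := k)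
    isSimplyConnected_univ' isOpen_univ hk.continuousOn (by simpa using hk0)
  obtain ⟨R, hR⟩ := hbd.exists_norm_le
  refine no_log (continuousOn_univ.1 hg) (a := a) (R := R + 1) ?_
  intro w hw
  have hwU : w ∉ U := fun h => by linarith [hR w h]
  have := hgk (mem_univ w)
  simpa [k, hwU] using this

/-- `f` is a uniform limit of polynomials on `Y`. -/
def Ap (Y : Set ℂ) [CompactSpace Y] (f : ℂ → ℂ) : Prop :=
  ∃ F ∈ (polynomialFunctions Y).topologicalClosure, ∀ w : Y, F w = f w

namespace Ap

variable {Y : Set ℂ} [CompactSpace Y] {f g : ℂ → ℂ}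

lemma congr (hf : Ap Y f) (h : ∀ w ∈ Y, f w = g w) : Ap Y g := by
  obtain ⟨F, hF, hFf⟩ := hf
  exact ⟨F, hF, fun w => by rw [hFf, h w w.2]⟩

lemma add (hf : Ap Y f) (hg : Ap Y g) : Ap Y (fun w => f w + g w) := by
  obtain ⟨F, hF, hFf⟩ := hf
  obtain ⟨G, hG, hGg⟩ := hg
  exact ⟨F + G, add_mem hF hG, fun w => by simp [hFf, hGg]⟩

lemma mul (hf : Ap Y f) (hg : Ap Y g) : Ap Y (fun w => f w * g w) := by
  obtain ⟨F, hF, hFf⟩ := hf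
  obtain ⟨G, hG, hGg⟩ := hg
  exact ⟨F * G, mul_mem hF hG, fun w => by simp [hFf, hGg]⟩

lemma poly (P : Polynomial ℂ) : Ap Y (fun w => P.eval w) := by
  refine ⟨P.toContinuousMapOn Y, Subalgebra.le_topologicalClosure _ ?_, fun w => by simp⟩
  exact ⟨P, trivial, rfl⟩

lemma const (c : ℂ) : Ap Y (fun _ => c) := by
  simpa using poly (Y := Y) (Polynomial.C c)

lemma id : Ap Y (fun w => w) := by
  simpa using poly (Y := Y) Polynomial.X

lemma neg (hf : Ap Y f) : Ap Y (fun w => - f w) := by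
  simpa using (const (-1)).mul hf

lemma sub (hf : Ap Y f) (hg : Ap Y g) : Ap Y (fun w => f w - g w) := by
  simpa [sub_eq_add_neg] using hf.add hg.neg

lemma pow (hf : Ap Y f) (n : ℕ) : Ap Y (fun w => f w ^ n) := by
  induction n with
  | zero => simpa using const (Y := Y) 1
  | succ n ih => simpa [pow_succ] using ih.mul hf

lemma sum {ι : Type*} (s : Finset ι) {f : ι → ℂ → ℂ} (hf : ∀ i ∈ s, Ap Y (f i)) :
    Ap Y (fun w => ∑ i ∈ s, f i w) := by
  classical
  induction s using Finset.induction_on with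
  | empty => simpa using const (Y := Y) 0
  | insert i s hi ih =>
    simp only [Finset.sum_insert hi]
    exact (hf i (by simp)).add (ih fun j hj => hf j (by simp [hj]))

lemma continuousOn (hf : Ap Y f) : ContinuousOn f Y := by
  obtain ⟨F, hF, hFf⟩ := hf
  rw [continuousOn_iff_continuous_domRestrict]
  have : Y.domRestrict f = F := by ext w; simp [hFf]
  rw [this]
  exact F.continuous

lemma exists_poly (hYc : IsCompact Y) (hf : Ap Y f) {ε : ℝ} (hε : 0 < ε) :
    ∃ P : Polynomial ℂ, ∀ w ∈ Y, ‖P.eval w - f w‖ < ε := by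
  obtain ⟨F, hF, hFf⟩ := hf
  obtain ⟨G, ⟨P, -, rfl⟩, hG⟩ := Metric.mem_closure_iff.1 hF ε hε
  refine ⟨P, fun w hw => ?_⟩
  have := (ContinuousMap.dist_lt_iff hε).1 hG ⟨w, hw⟩
  rw [hFf, dist_comm, dist_eq_norm] at this
  simpa using this

lemma of_limit (hYc : IsCompact Y)
    (h : ∀ ε > 0, ∃ g, Ap Y g ∧ ∀ w ∈ Y, ‖g w - f w‖ ≤ ε) : Ap Y f := by
  have hfc : ContinuousOn f Y := by
    refine continuousOn_of_uniform_approx_of_continuousOn fun u hu => ?_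
    obtain ⟨ε, hε, hu⟩ := Metric.mem_uniformity_dist.1 hu
    obtain ⟨g, hg, hgf⟩ := h (ε / 2) (by positivity)
    refine ⟨g, hg.continuousOn, fun w hw => hu ?_⟩
    rw [dist_comm, dist_eq_norm]
    linarith [hgf w hw]
  refine ⟨⟨Y.domRestrict f, continuousOn_iff_continuous_domRestrict.1 hfc⟩, ?_, fun w => rfl⟩
  rw [← SetLike.mem_coe,
    ← (Subalgebra.isClosed_topologicalClosure (polynomialFunctions Y)).closure_eq]
  refine Metric.mem_closure_iff.2 fun ε hε => ?_
  obtain ⟨g, ⟨G, hG, hGg⟩, hgf⟩ := h (ε / 2) (by positivity)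
  refine ⟨G, hG, (ContinuousMap.dist_lt_iff hε).2 fun w => ?_⟩
  rw [dist_comm, dist_eq_norm, hGg]
  have := hgf w w.2
  simp only [ContinuousMap.coe_mk, domRestrict_apply]
  linarith

lemma comp (hYc : IsCompact Y) {Φ : ℂ → ℂ} (hΦ : DifferentiableOn ℂ Φ (Metric.ball 0 1))
    (hf : Ap Y f) (hb : ∀ w ∈ Y, ‖f w‖ ≤ 1 / 2) : Ap Y (fun w => Φ (f w)) := by
  have hs := (hΦ.mono (Metric.closedBall_subset_ball
    (show ((3 / 4 : NNReal) : ℝ) < 1 by norm_num))).hasFPowerSeriesOnBall (by norm_num)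
  have hu := hs.tendstoUniformlyOn (r' := 5 / 8) (by
    exact_mod_cast (show (5 / 8 : NNReal) < 3 / 4 by
      rw [← NNReal.coe_lt_coe]; norm_num))
  refine of_limit hYc fun ε hε => ?_
  obtain ⟨n, hn⟩ := (Metric.tendstoUniformlyOn_iff.1 hu ε hε).exists
  refine ⟨fun w => (cauchyPowerSeries Φ 0 ((3 / 4 : NNReal) : ℝ)).partialSum n (f w), ?_,
    fun w hw => ?_⟩
  rotate_left
  · have := hn (f w) (by
      have := hb w hw
      simp only [Metric.mem_ball, dist_zero_right]
      norm_num
      linarith)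
    rw [zero_add, dist_comm, dist_eq_norm] at this
    exact this.le
  · simp only [FormalMultilinearSeries.partialSum, FormalMultilinearSeries.apply_eq_pow_smul_coeff,
      smul_eq_mul]
    exact sum _ fun i _ => (hf.pow i).mul (const _)

end Ap

lemma ap_inv {Y : Set ℂ} [CompactSpace Y] (hYc : IsCompact Y) (hY : Unb Y) {a : ℂ} (ha : a ∉ Y) :
    Ap Y (fun w => (w - a)⁻¹) := by
  obtain ⟨M, hM0, hM⟩ := bound_of_compact hYc
  obtain ⟨b, hb, hbM⟩ := hY.exists_far ha (2 * M)
  have hd : DifferentiableOn ℂ (fun x : ℂ => (1 + x)⁻¹) (Metric.ball 0 1) := by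
    refine DifferentiableOn.inv (by fun_prop) fun x hx => ?_
    exact slitPlane_ne_zero (one_add_mem_slit (by simpa using hx))
  refine chain hYc.isClosed (Q := fun a => Ap Y (fun w => (w - a)⁻¹)) one_pos ?_ hb
    (mem_connectedComponentIn ha) ?_
  · rintro b b' hb hb' h _ hA
    have hne : ∀ w ∈ Y, w - b' ≠ 0 := fun w hw h0 => hb' (by rwa [← sub_eq_zero.1 h0])
    have hne' : ∀ w ∈ Y, w - b ≠ 0 := fun w hw h0 => hb (by rwa [← sub_eq_zero.1 h0])
    have h1 : Ap Y (fun w => (b - b') * (w - b)⁻¹) := (Ap.const _).mul hA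
    have h2 := h1.comp hYc hd (by
      intro w hw
      have h3 : 0 < ‖w - b‖ := norm_pos_iff.2 (hne' w hw)
      have h4 : ‖w - b'‖ ≤ ‖w - b‖ + ‖b - b'‖ := norm_sub_le_norm_sub_add_norm_sub _ _ _
      rw [norm_mul, norm_inv, ← div_eq_mul_inv, div_le_iff₀ h3]
      linarith [h w hw])
    refine (hA.mul h2).congr fun w hw => ?_
    have h3 := hne w hw
    have h4 := hne' w hw
    have h5 : 1 + (b - b') * (w - b)⁻¹ = (w - b') / (w - b) := by field_simp; ring
    simp only [h5]
    field_simp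
  · have hb0 : b ≠ 0 := by
      rintro rfl
      simp at hbM; linarith
    have h1 : Ap Y (fun w => (-1 / b) * w) := (Ap.const _).mul Ap.id
    have h2 := h1.comp hYc hd (by
      intro w hw
      have h3 : 0 < ‖b‖ := norm_pos_iff.2 hb0
      rw [norm_mul, norm_div, norm_neg, norm_one, one_div, mul_comm, ← div_eq_mul_inv,
        div_le_iff₀ h3]
      linarith [hM w hw])
    refine ((Ap.const (-1 / b)).mul h2).congr fun w hw => ?_
    have hwb : w - b ≠ 0 := by
      intro h
      rw [sub_eq_zero] at h
      subst h
      linarith [hM w hw]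
    have h5 : 1 + (-1 / b) * w = (w - b) / (-b) := by field_simp; ring
    simp only [h5]
    field_simp

lemma re_mul_pos' {g s : ℂ} (hg : 0 < g.re) (hs : 0 < s.re) (hg2 : 0 < (g ^ 2).re)
    (hs2 : 0 < (s ^ 2).re) : 0 < (g * s).re := by
  simp only [pow_two, Complex.mul_re] at *
  have h1 : |g.im| < g.re := abs_lt_of_sq_lt_sq (by nlinarith) hg.le
  have h2 : |s.im| < s.re := abs_lt_of_sq_lt_sq (by nlinarith) hs.le
  have h3 : |g.im| * |s.im| < g.re * s.re :=
    mul_lt_mul'' h1 h2 (abs_nonneg _) (abs_nonneg _)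
  rw [← abs_mul] at h3
  linarith [le_abs_self (g.im * s.im)]

lemma re_one_add_pos {x : ℂ} (hx : ‖x‖ < 1) : 0 < (1 + x).re := by
  have := (abs_le.1 (Complex.abs_re_le_norm x)).1
  simp only [Complex.add_re, Complex.one_re]
  linarith

lemma exists_sqrt {Y : Set ℂ} [CompactSpace Y] (hYc : IsCompact Y) (hY : Unb Y) {a : ℂ} (ha : a ∉ Y) {ρ : ℝ}
    (haρ : ‖a‖ < ρ) :
    ∃ b, b ∉ Y ∧ ρ / 2 ≤ ‖b‖ ∧ ‖b‖ < ρ ∧ ∃ g, Ap Y g ∧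
      ∀ w ∈ Y, g w ^ 2 * (w - b) = w - a ∧ (4 * ρ ≤ ‖w‖ → 0 < (g w).re) := by
  have hρ : 0 < ρ := (norm_nonneg a).trans_lt haρ
  by_contra! hcon
  obtain ⟨c, hc, hcρ⟩ := hY.exists_far ha ρ
  have key := chain hYc.isClosed (Q := fun b => ‖b‖ < ρ ∧ ∃ g, Ap Y g ∧
      ∀ w ∈ Y, g w ^ 2 * (w - b) = w - a ∧ (4 * ρ ≤ ‖w‖ → 0 < (g w).re))
      (η := ρ / 4) (by positivity) ?_
      (mem_connectedComponentIn ha) hc ?_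
  · exact absurd key.1 (by linarith)
  · rintro b b' hb hb' h hbb ⟨hbρ, g, hg, hgp⟩
    have hb2 : ‖b‖ < ρ / 2 := by
      by_contra! hb2
      obtain ⟨w, hw, hw2⟩ := hcon b hb hb2 hbρ g hg
      have h1 := hgp w hw
      have h2 := hw2 h1.1
      linarith [h1.2 h2.1]
    have hb'ρ : ‖b'‖ < ρ := by
      have : ‖b'‖ ≤ ‖b‖ + ‖b - b'‖ := by
        have := norm_sub_le b (b - b')
        simpa using this
      linarith
    refine ⟨hb'ρ, ?_⟩
    have hne : ∀ w ∈ Y, w - b' ≠ 0 := fun w hw h0 => hb' (by rwa [← sub_eq_zero.1 h0])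
    have hne' : ∀ w ∈ Y, w - b ≠ 0 := fun w hw h0 => hb (by rwa [← sub_eq_zero.1 h0])
    have hd : DifferentiableOn ℂ (fun x : ℂ => exp (Complex.log (1 + x) / 2))
        (Metric.ball 0 1) := by
      intro x hx
      have hsl := one_add_mem_slit (x := x) (by simpa using hx)
      have : DifferentiableAt ℂ (fun x : ℂ => Complex.log (1 + x)) x :=
        DifferentiableAt.clog (by fun_prop) hsl
      exact (this.div_const 2).cexp.differentiableWithinAt
    have h1 : Ap Y (fun w => (b' - b) * (w - b')⁻¹) := (Ap.const _).mul (ap_inv hYc hY hb')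
    have hx : ∀ w ∈ Y, ‖(b' - b) * (w - b')⁻¹‖ ≤ 1 / 2 := by
      intro w hw
      have h3 : 0 < ‖w - b'‖ := norm_pos_iff.2 (hne w hw)
      rw [norm_mul, norm_inv, ← div_eq_mul_inv, div_le_iff₀ h3, norm_sub_rev]
      linarith [h w hw, norm_nonneg (b - b')]
    have h2 := h1.comp hYc hd hx
    refine ⟨_, hg.mul h2, fun w hw => ?_⟩
    have hx1 : ‖(b' - b) * (w - b')⁻¹‖ < 1 := (hx w hw).trans_lt (by norm_num)
    have hsl := one_add_mem_slit hx1
    have hs2 : exp (Complex.log (1 + (b' - b) * (w - b')⁻¹) / 2) ^ 2 =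
        1 + (b' - b) * (w - b')⁻¹ := by
      rw [← Complex.exp_nat_mul]
      push_cast
      rw [mul_div_cancel₀ _ (two_ne_zero), Complex.exp_log (slitPlane_ne_zero hsl)]
    have hg2 := (hgp w hw).1
    refine ⟨?_, fun hw4 => ?_⟩
    · have h3 := hne w hw
      rw [mul_pow, hs2, ← hg2]
      field_simp
      ring
    · refine re_mul_pos' ((hgp w hw).2 hw4) ?_ ?_ ?_
      · rw [Complex.exp_re]
        refine mul_pos (Real.exp_pos _) (Real.cos_pos_of_mem_Ioo ?_)
        have him : (Complex.log (1 + (b' - b) * (w - b')⁻¹) / 2).im =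
          Complex.arg (1 + (b' - b) * (w - b')⁻¹) / 2 := by
          rw [show (2 : ℂ) = ((2 : ℝ) : ℂ) by norm_num, Complex.div_ofReal_im, Complex.log_im]
        have hlt : Complex.arg (1 + (b' - b) * (w - b')⁻¹) < Real.pi :=
          lt_of_le_of_ne (Complex.arg_le_pi _) (mem_slitPlane_iff_arg.1 hsl).1
        have hgt := Complex.neg_pi_lt_arg (1 + (b' - b) * (w - b')⁻¹)
        rw [him]
        constructor <;> linarith
      · have h4 := hne' w hw
        have : g w ^ 2 = 1 + (b - a) / (w - b) := by
          field_simp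
          rw [hg2]; ring
        rw [this]
        apply re_one_add_pos
        have h3 : 0 < ‖w - b‖ := norm_pos_iff.2 h4
        rw [norm_div, div_lt_one h3]
        have h5 := norm_sub_le b a
        have h6 := norm_sub_norm_le w b
        linarith
      · rw [hs2]
        exact re_one_add_pos hx1
  · refine ⟨haρ, _, Ap.const 1, fun w hw => ?_⟩
    simp

lemma exists_peak {Y : Set ℂ} (hYc : IsCompact Y) (hY : Unb Y) (h0 : (0 : ℂ) ∈ Y)
    (hcl : (0 : ℂ) ∈ closure Yᶜ) {R ε : ℝ} (hR : 0 < R) (hε : 0 < ε) :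
    ∃ P : Polynomial ℂ, 1 / 2 ≤ ‖P.eval 0‖ ∧ (∀ w ∈ Y, ‖P.eval w‖ ≤ 100) ∧
      ∀ w ∈ Y, R ≤ ‖w‖ → ‖P.eval w‖ ≤ ε := by
  have : CompactSpace Y := isCompact_iff_compactSpace.1 hYc
  obtain ⟨ρ, hρ, hρR, hρε⟩ : ∃ ρ : ℝ, 0 < ρ ∧ 4 * ρ ≤ R ∧ 4 * ρ ≤ ε * R := by
    refine ⟨min (R / 4) (ε * R / 4), by positivity, ?_, ?_⟩
    · linarith [min_le_left (R / 4) (ε * R / 4)]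
    · linarith [min_le_right (R / 4) (ε * R / 4)]
  obtain ⟨a, ha, ha0⟩ := Metric.mem_closure_iff.1 hcl (ρ / 200) (by positivity)
  rw [dist_zero_left] at ha0
  obtain ⟨b, hb, hbl, hbu, g, hg, hgp⟩ := exists_sqrt hYc hY ha (ρ := ρ) (by linarith)
  have hba : 0.99 * ‖b‖ ≤ ‖b - a‖ := by
    have := norm_sub_norm_le b a
    linarith
  have hba' : ‖b - a‖ ≤ 1.01 * ‖b‖ := by
    have := norm_sub_le b a
    linarith
  have hb0 : 0 < ‖b‖ := by linarith
  have hba0 : b - a ≠ 0 := norm_pos_iff.1 (by linarith)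
  have hf : Ap Y (fun w => (w - (a + b) / 2 - (w - b) * g w) * (2 / (b - a))) :=
    ((Ap.id.sub (Ap.const _)).sub ((Ap.id.sub (Ap.const _)).mul hg)).mul (Ap.const _)
  set f : ℂ → ℂ := fun w => (w - (a + b) / 2 - (w - b) * g w) * (2 / (b - a)) with hfdef
  have hs2 : ∀ w ∈ Y, ((w - b) * g w) ^ 2 = (w - b) * (w - a) := by
    intro w hw
    rw [← (hgp w hw).1]; ring
  have hmid : ‖(a + b) / 2‖ ≤ 0.51 * ‖b‖ := by
    rw [norm_div]
    have := norm_add_le a b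
    simp only [Complex.norm_ofNat]
    linarith
  have hmid' : 0.49 * ‖b‖ ≤ ‖(a + b) / 2‖ := by
    rw [norm_div]
    have := norm_sub_le (a + b) a
    simp only [Complex.norm_ofNat, add_sub_cancel_left] at *
    linarith
  have hf0 : 0.7 ≤ ‖f 0‖ := by
    have h1 : ‖(0 - b) * g 0‖ ≤ 0.1 * ‖b‖ := by
      have := congrArg norm (hs2 0 h0)
      rw [norm_pow, norm_mul (0 - b) (0 - a), zero_sub a, norm_neg a] at this
      refine abs_le_of_sq_le_sq' ?_ (by positivity) |>.2
      rw [this, zero_sub, norm_neg]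
      nlinarith
    have h2 : 0.39 * ‖b‖ ≤ ‖0 - (a + b) / 2 - (0 - b) * g 0‖ := by
      have := norm_sub_norm_le (0 - (a + b) / 2) ((0 - b) * g 0)
      rw [zero_sub ((a + b) / 2), norm_neg] at this
      rw [zero_sub ((a + b) / 2)]
      linarith
    simp only [hfdef]
    rw [norm_mul, norm_div, Complex.norm_ofNat, mul_div_assoc', le_div_iff₀ (by linarith)]
    linarith
  have hfar : ∀ w ∈ Y, 4 * ρ ≤ ‖w‖ → ‖f w‖ * ‖w‖ ≤ 2 * ρ := by
    intro w hw hw4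
    have hre := (hgp w hw).2 hw4
    have hwb : 3 / 4 * ‖w‖ ≤ ‖w - b‖ := by
      have := norm_sub_norm_le w b
      linarith
    have hwb0 : w - b ≠ 0 := norm_pos_iff.1 (by linarith)
    have h1 : f w * (w - (a + b) / 2 + (w - b) * g w) = (b - a) / 2 := by
      simp only [hfdef]
      have := hs2 w hw
      field_simp
      linear_combination (-4) * this
    have h2 : w - (a + b) / 2 + (w - b) * g w = (w - b) * (1 + ((b - a) / 2) / (w - b) + g w) := by
      field_simp; ring
    have h3 : 2 / 3 ≤ ‖1 + ((b - a) / 2) / (w - b) + g w‖ := by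
      refine le_trans ?_ (Complex.re_le_norm _)
      have h4 : ‖((b - a) / 2) / (w - b)‖ ≤ 1 / 3 := by
        rw [norm_div, norm_div, Complex.norm_ofNat, div_le_iff₀ (by linarith)]
        linarith
      have := (abs_le.1 (Complex.abs_re_le_norm (((b - a) / 2) / (w - b)))).1
      simp only [Complex.add_re, Complex.one_re]
      linarith
    have h5 : ‖w‖ / 2 ≤ ‖w - (a + b) / 2 + (w - b) * g w‖ := by
      rw [h2, norm_mul]
      nlinarith [norm_nonneg (w - b)]
    have h6 := congrArg norm h1
    rw [norm_mul, norm_div, Complex.norm_ofNat] at h6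
    nlinarith [norm_nonneg (f w)]
  have hbd : ∀ w ∈ Y, ‖f w‖ ≤ 50 := by
    intro w hw
    rcases le_total (4 * ρ) ‖w‖ with h | h
    · have := hfar w hw h
      nlinarith [norm_nonneg (f w)]
    · have h1 : ‖(w - b) * g w‖ ≤ 5 * ρ := by
        have := congrArg norm (hs2 w hw)
        rw [norm_pow, norm_mul (w - b) (w - a)] at this
        refine abs_le_of_sq_le_sq' ?_ (by positivity) |>.2
        rw [this]
        have h2 := norm_sub_le w b
        have h3 := norm_sub_le w a
        have : ‖w - b‖ * ‖w - a‖ ≤ (5 * ρ) * (5 * ρ) :=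
          mul_le_mul (by linarith) (by linarith) (norm_nonneg _) (by positivity)
        linarith
      have h2 : ‖w - (a + b) / 2‖ ≤ 5 * ρ := by
        have := norm_sub_le w ((a + b) / 2)
        linarith
      have h3 := norm_sub_le (w - (a + b) / 2) ((w - b) * g w)
      simp only [hfdef]
      rw [norm_mul, norm_div, Complex.norm_ofNat, mul_div_assoc', div_le_iff₀ (by linarith)]
      linarith
  obtain ⟨P, hP⟩ := hf.exists_poly hYc (ε := min (1 / 10) (ε / 2)) (by positivity)
  have hP1 : ∀ w ∈ Y, ‖P.eval w - f w‖ < 1 / 10 := fun w hw =>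
    (hP w hw).trans_le (min_le_left _ _)
  have hP2 : ∀ w ∈ Y, ‖P.eval w - f w‖ < ε / 2 := fun w hw =>
    (hP w hw).trans_le (min_le_right _ _)
  refine ⟨P, ?_, fun w hw => ?_, fun w hw hwR => ?_⟩
  · have h1 := hP1 0 h0
    have h2 := norm_sub_norm_le (f 0) (P.eval 0)
    rw [norm_sub_rev] at h2
    linarith
  · have h1 := hP1 w hw
    have h2 := norm_sub_norm_le (P.eval w) (f w)
    linarith [hbd w hw]
  · have h1 := hP2 w hw
    have h2 := norm_sub_norm_le (P.eval w) (f w)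
    have h3 := hfar w hw (hρR.trans hwR)
    have h4 : ‖f w‖ ≤ ε / 2 := by
      by_contra! h
      have : ε / 2 * R < ‖f w‖ * ‖w‖ := by
        calc ε / 2 * R < ‖f w‖ * R := by gcongr
          _ ≤ _ := by gcongr
      linarith
    linarith

lemma zero_mem_closure {Y₁ Y₂ : Set ℂ} (hc₁ : IsCompact Y₁) (hc₂ : IsCompact Y₂)
    (h0₁ : (0 : ℂ) ∈ frontier Y₁) (h0₂ : (0 : ℂ) ∈ frontier Y₂)
    (hY : Y₁ ∩ Y₂ = {0}) : (0 : ℂ) ∈ closure (Y₁ ∪ Y₂)ᶜ := by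
  by_contra hcon
  rw [closure_compl, notMem_compl_iff, mem_interior_iff_mem_nhds] at hcon
  obtain ⟨r, hr, hball⟩ := Metric.mem_nhds_iff.1 hcon
  have h0 : (0 : ℂ) ∈ Y₁ ∩ Y₂ := by rw [hY]; rfl
  -- the punctured ball is connected
  have hconn : IsPreconnected (Metric.ball (0 : ℂ) r \ {0}) := by
    have himg : Metric.ball (0 : ℂ) r \ {0} =
        (fun q : ℝ × ℝ => (q.1 : ℂ) * exp (q.2 * I)) '' (Ioo 0 r ×ˢ univ) := by
      ext x
      simp only [Set.mem_sdiff, Metric.mem_ball, dist_zero_right, mem_singleton_iff, mem_image,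
        mem_prod, mem_Ioo, mem_univ, and_true, Prod.exists]
      constructor
      · rintro ⟨h1, h2⟩
        exact ⟨‖x‖, Complex.arg x, ⟨norm_pos_iff.2 h2, h1⟩, Complex.norm_mul_exp_arg_mul_I x⟩
      · rintro ⟨t, θ, ⟨h1, h2⟩, rfl⟩
        have : ‖(t : ℂ) * exp (θ * I)‖ = t := by
          rw [norm_mul, Complex.norm_exp_ofReal_mul_I]; simp [abs_of_pos h1]
        refine ⟨by rw [this]; exact h2, ?_⟩
        exact norm_pos_iff.1 (by rw [this]; exact h1)
    rw [himg]
    exact (isPreconnected_Ioo.prod isPreconnected_univ).image _ (by fun_prop)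
  have hsub : Metric.ball (0 : ℂ) r \ {0} ⊆ Y₁ ∪ Y₂ := sdiff_subset.trans hball
  have hdisj : (Metric.ball (0 : ℂ) r \ {0}) ∩ (Y₁ ∩ Y₂) = ∅ := by
    rw [hY]; ext x; simp
  have key : ∀ Z : Set ℂ, (0 : ℂ) ∈ Z → (0 : ℂ) ∈ frontier Z →
      ¬ (Metric.ball (0 : ℂ) r \ {0} ⊆ Z) := by
    intro Z hZ0 hZ h
    apply hZ.2
    rw [mem_interior_iff_mem_nhds]
    refine mem_of_superset (Metric.ball_mem_nhds 0 hr) fun x hx => ?_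
    by_cases hx0 : x = 0
    · rwa [hx0]
    · exact h ⟨hx, hx0⟩
  rcases (isPreconnected_iff_subset_of_disjoint_closed.1 hconn) Y₁ Y₂ hc₁.isClosed hc₂.isClosed
    hsub hdisj with h | h
  · exact key _ h0.1 h0₁ h
  · exact key _ h0.2 h0₂ h

open MeasureTheory Real in
/-- bound for the Cauchy kernel -/
lemma lintegral_kernel_zero (s : ℝ) (hs : 0 < s) :
    ∫⁻ ζ : ℂ, (Metric.ball (0 : ℂ) s).indicator (fun ζ => ENNReal.ofReal ‖ζ‖⁻¹) ζ
      ≤ ENNReal.ofReal (2 * π * s) := by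
  rw [← Complex.lintegral_comp_polarCoord_symm]
  have hmeas : MeasurableSet (Ioo 0 s ×ˢ Ioo (-π) π) := measurableSet_Ioo.prod measurableSet_Ioo
  calc _ ≤ ∫⁻ p in polarCoord.target, (Ioo 0 s ×ˢ Ioo (-π) π).indicator 1 p := by
        refine setLIntegral_mono' (polarCoord.open_target.measurableSet) fun p hp => ?_
        rw [polarCoord_target, mem_prod] at hp
        have h0 : 0 < p.1 := hp.1
        by_cases h : p.1 < s
        · have h1 : Complex.polarCoord.symm p ∈ Metric.ball (0 : ℂ) s := by
            rw [mem_ball_zero_iff, Complex.norm_polarCoord_symm, abs_of_pos h0]; exact h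
          have h2 : p ∈ Ioo 0 s ×ˢ Ioo (-π) π := ⟨⟨h0, h⟩, hp.2⟩
          rw [indicator_of_mem h1, indicator_of_mem h2, Complex.norm_polarCoord_symm,
            abs_of_pos h0, smul_eq_mul, ← ENNReal.ofReal_mul h0.le, mul_inv_cancel₀ h0.ne']
          simp
        · have h1 : Complex.polarCoord.symm p ∉ Metric.ball (0 : ℂ) s := by
            rw [mem_ball_zero_iff, Complex.norm_polarCoord_symm, abs_of_pos h0]; exact h
          rw [indicator_of_notMem h1]; simp
    _ ≤ ∫⁻ p, (Ioo 0 s ×ˢ Ioo (-π) π).indicator 1 p := setLIntegral_le_lintegral _ _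
    _ = volume (Ioo 0 s ×ˢ Ioo (-π) π) := lintegral_indicator_one hmeas
    _ ≤ _ := by
        rw [Measure.volume_eq_prod, Measure.prod_prod, Real.volume_Ioo, Real.volume_Ioo,
          ← ENNReal.ofReal_mul (by linarith)]
        apply ENNReal.ofReal_le_ofReal
        apply le_of_eq; ring

open MeasureTheory Real in
lemma lintegral_kernel (s : ℝ) (hs : 0 < s) (w : ℂ) :
    ∫⁻ ζ : ℂ, (Metric.ball (0 : ℂ) s).indicator (fun ζ => ENNReal.ofReal ‖ζ - w‖⁻¹) ζ
      ≤ ENNReal.ofReal (3 * π * s) := by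
  have h1 : ∀ ζ : ℂ, (Metric.ball (0 : ℂ) s).indicator (fun ζ => ENNReal.ofReal ‖ζ - w‖⁻¹) ζ ≤
      (Metric.ball (0 : ℂ) s).indicator (fun ζ => ENNReal.ofReal ‖ζ‖⁻¹) (ζ - w) +
      (Metric.ball (0 : ℂ) s).indicator (fun _ => ENNReal.ofReal s⁻¹) ζ := by
    intro ζ
    by_cases hζ : ζ ∈ Metric.ball (0 : ℂ) s
    · rw [indicator_of_mem hζ, indicator_of_mem hζ]
      by_cases h : ζ - w ∈ Metric.ball (0 : ℂ) s
      · rw [indicator_of_mem h]; exact le_self_add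
      · rw [indicator_of_notMem h, zero_add]
        rw [mem_ball_zero_iff, not_lt] at h
        exact ENNReal.ofReal_le_ofReal (inv_anti₀ hs h)
    · rw [indicator_of_notMem hζ]; simp
  calc _ ≤ ∫⁻ ζ : ℂ, ((Metric.ball (0 : ℂ) s).indicator (fun ζ => ENNReal.ofReal ‖ζ‖⁻¹) (ζ - w) +
      (Metric.ball (0 : ℂ) s).indicator (fun _ => ENNReal.ofReal s⁻¹) ζ) := lintegral_mono h1
    _ = (∫⁻ ζ : ℂ, (Metric.ball (0 : ℂ) s).indicator (fun ζ => ENNReal.ofReal ‖ζ‖⁻¹) (ζ - w)) +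
      ∫⁻ ζ : ℂ, (Metric.ball (0 : ℂ) s).indicator (fun _ => ENNReal.ofReal s⁻¹) ζ :=
        lintegral_add_right _ (measurable_const.indicator measurableSet_ball)
    _ = (∫⁻ ζ : ℂ, (Metric.ball (0 : ℂ) s).indicator (fun ζ => ENNReal.ofReal ‖ζ‖⁻¹) ζ) +
      ENNReal.ofReal s⁻¹ * volume (Metric.ball (0 : ℂ) s) := by
        rw [lintegral_indicator_const measurableSet_ball]
        congr 1
        exact lintegral_sub_right_eq_self
          (fun ζ => (Metric.ball (0 : ℂ) s).indicator (fun ζ => ENNReal.ofReal ‖ζ‖⁻¹) ζ) w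
    _ ≤ ENNReal.ofReal (2 * π * s) + ENNReal.ofReal (π * s) := by
        gcongr
        · exact lintegral_kernel_zero s hs
        · rw [Complex.volume_ball]
          have : (NNReal.pi : ENNReal) = ENNReal.ofReal π := by
            rw [ENNReal.ofReal, ← NNReal.coe_real_pi, Real.toNNReal_coe]
          rw [this, ← ENNReal.ofReal_pow hs.le, ← ENNReal.ofReal_mul (by positivity),
            ← ENNReal.ofReal_mul (by positivity)]
          apply ENNReal.ofReal_le_ofReal
          apply le_of_eq; field_simp
    _ = _ := by
        rw [← ENNReal.ofReal_add (by positivity) (by positivity)]; congr 1; ring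

/-- the d-bar operator -/
def dbar (G : ℂ → ℂ) (ζ : ℂ) : ℂ := (1 / 2) * (fderiv ℝ G ζ 1 + I * fderiv ℝ G ζ I)

lemma dbar_continuous {G : ℂ → ℂ} (hG : ContDiff ℝ 1 G) : Continuous (dbar G) := by
  have := hG.continuous_fderiv (by norm_num)
  unfold dbar
  fun_prop

lemma dbar_mul {f g : ℂ → ℂ} (hf : ContDiff ℝ 1 f) (hg : ContDiff ℝ 1 g) (ζ : ℂ) :
    dbar (fun z => f z * g z) ζ = f ζ * dbar g ζ + g ζ * dbar f ζ := by
  have h1 := (hf.differentiable (by norm_num)) ζ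
  have h2 := (hg.differentiable (by norm_num)) ζ
  unfold dbar
  rw [fderiv_fun_mul h1 h2]
  simp
  ring

lemma dbar_congr {f g : ℂ → ℂ} {ζ : ℂ} (h : f =ᶠ[𝓝 ζ] g) : dbar f ζ = dbar g ζ := by
  unfold dbar; rw [h.fderiv_eq]

open MeasureTheory Real in
/-- Cauchy-Pompeiu for compactly supported functions -/
lemma pompeiu {G : ℂ → ℂ} (hG : ContDiff ℝ 1 G) (hs : HasCompactSupport G) (w : ℂ) :
    ∫ ζ, dbar G ζ / (ζ - w) = - π * G w := by
  -- radius beyond which everything vanishes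
  obtain ⟨R, hR, hzero⟩ : ∃ R : ℝ, 0 < R ∧ ∀ ζ, R ≤ ‖ζ - w‖ → ζ ∉ tsupport G := by
    obtain ⟨R, hR, h⟩ := bound_of_compact (Y := tsupport G) hs
    refine ⟨R + ‖w‖ + 1, by positivity, fun ζ hζ hmem => ?_⟩
    have := h ζ hmem
    have := norm_sub_le ζ w
    linarith
  have hG0 : ∀ ζ, R ≤ ‖ζ - w‖ → G ζ = 0 := fun ζ h => image_eq_zero_of_notMem_tsupport (hzero ζ h)
  have hF0 : ∀ ζ, R ≤ ‖ζ - w‖ → fderiv ℝ G ζ = 0 := fun ζ h => by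
    have := notMem_tsupport_iff_eventuallyEq.1 (hzero ζ h)
    rw [this.fderiv_eq]; simp
  have hFc := hG.continuous_fderiv (by norm_num)
  let e : ℝ → ℂ := fun θ => Complex.exp (θ * I)
  have hec : Continuous e := by fun_prop
  have hen : ∀ θ, ‖e θ‖ = 1 := fun θ => Complex.norm_exp_ofReal_mul_I θ
  let A : ℝ × ℝ → ℂ := fun p => fderiv ℝ G (w + p.1 * e p.2) (e p.2)
  let B : ℝ × ℝ → ℂ := fun p => fderiv ℝ G (w + p.1 * e p.2) (I * e p.2)
  have hA : Continuous A := by fun_prop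
  have hB : Continuous B := by fun_prop
  have hnorm : ∀ ρ θ : ℝ, 0 < ρ → ‖w + ρ * e θ - w‖ = ρ := by
    intro ρ θ h
    rw [add_sub_cancel_left, norm_mul, hen]; simp [abs_of_pos h]
  have hAi : ∀ F : ℝ × ℝ → ℂ, Continuous F → IntegrableOn F (Ioo 0 R ×ˢ Ioo (-π) π) := by
    intro F hF
    refine (hF.continuousOn.integrableOn_compact
      (isCompact_Icc.prod isCompact_Icc (s := Icc 0 R) (t := Icc (-π) π))).mono_set ?_
    exact prod_mono Ioo_subset_Icc_self Ioo_subset_Icc_self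
  have step1 : ∫ ζ, dbar G ζ / (ζ - w) =
      ∫ p in Ioo 0 R ×ˢ Ioo (-π) π, (1 / 2 : ℂ) * (A p + I * B p) := by
    rw [← integral_add_left_eq_self (fun ζ => dbar G ζ / (ζ - w)) w,
      ← Complex.integral_comp_polarCoord_symm]
    have h1 : ∫ p in polarCoord.target, p.1 • (fun ζ => dbar G (w + ζ) / (w + ζ - w))
        (Complex.polarCoord.symm p) = ∫ p in polarCoord.target, (1 / 2 : ℂ) * (A p + I * B p) := by
      refine setIntegral_congr_fun polarCoord.open_target.measurableSet fun p hp => ?_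
      rw [polarCoord_target, mem_prod] at hp
      have h0 : 0 < p.1 := hp.1
      have hpe : Complex.polarCoord.symm p = p.1 * e p.2 := by
        rw [Complex.polarCoord_symm_apply]
        simp only [e, Complex.exp_mul_I, Complex.ofReal_cos, Complex.ofReal_sin]
      have hlin : ∀ (L : ℂ →L[ℝ] ℂ) (z : ℂ), L z = z.re * L 1 + z.im * L I := by
        intro L z
        conv_lhs => rw [show z = z.re • (1 : ℂ) + z.im • I by
          simp only [Complex.real_smul, mul_one]; exact (Complex.re_add_im z).symm]
        rw [map_add, map_smul, map_smul]; simp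
      have he2 : e p.2 = Real.cos p.2 + Real.sin p.2 * I := by
        simp only [e, Complex.exp_mul_I, Complex.ofReal_cos, Complex.ofReal_sin]
      have hne : e p.2 ≠ 0 := Complex.exp_ne_zero _
      have hp0 : (p.1 : ℂ) ≠ 0 := by exact_mod_cast h0.ne'
      simp only [hpe, add_sub_cancel_left, Complex.real_smul, A, B, dbar]
      rw [hlin _ (e p.2), hlin _ (I * e p.2)]
      have hre : (e p.2).re = Real.cos p.2 := by rw [he2]; simp [-Complex.ofReal_cos, -Complex.ofReal_sin]
      have him : (e p.2).im = Real.sin p.2 := by rw [he2]; simp [-Complex.ofReal_cos, -Complex.ofReal_sin]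
      have hre' : (I * e p.2).re = - Real.sin p.2 := by simp [him]
      have him' : (I * e p.2).im = Real.cos p.2 := by simp [hre]
      rw [hre, him, hre', him']
      generalize fderiv ℝ G (w + p.1 * e p.2) 1 = a
      generalize fderiv ℝ G (w + p.1 * e p.2) I = b
      have hone : e p.2 * (Real.cos p.2 - Real.sin p.2 * I) = 1 := by
        rw [he2]
        have := Real.cos_sq_add_sin_sq p.2
        have h' : ((Real.cos p.2 : ℂ)) ^ 2 + (Real.sin p.2 : ℂ) ^ 2 = 1 := by exact_mod_cast this
        linear_combination h' - (Real.sin p.2 : ℂ) ^ 2 * Complex.I_sq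
      rw [← mul_div_assoc, mul_div_mul_left _ _ hp0, div_eq_iff hne]
      push_cast
      push_cast at hone
      linear_combination (-(1 / 2) * (a + I * b)) * hone +
        (-(1 / 2) * e p.2 * Complex.sin p.2 * b) * Complex.I_sq
    rw [h1]
    refine setIntegral_eq_of_subset_of_forall_sdiff_eq_zero
      polarCoord.open_target.measurableSet ?_ ?_
    · rw [polarCoord_target]; exact prod_mono Ioo_subset_Ioi_self le_rfl
    · rintro ⟨ρ, θ⟩ ⟨hp, hp'⟩
      rw [polarCoord_target, mem_prod] at hp
      have h0 : 0 < ρ := hp.1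
      have hRρ : R ≤ ρ := by
        by_contra h
        exact hp' ⟨⟨h0, not_le.1 h⟩, hp.2⟩
      simp only [A, B]
      rw [hF0 _ (by rw [hnorm ρ θ h0]; exact hRρ)]
      simp
  have hpi := Real.pi_pos
  have stepA : ∫ p in Ioo 0 R ×ˢ Ioo (-π) π, A p = - (2 * π) * G w := by
    rw [Measure.volume_eq_prod, ← setIntegral_prod_swap, setIntegral_prod]
    · have : ∀ θ : ℝ, ∫ ρ in Ioo 0 R, A (ρ, θ) = - G w := by
        intro θ
        rw [← integral_Ioc_eq_integral_Ioo, ← intervalIntegral.integral_of_le hR.le]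
        have hd : ∀ ρ ∈ uIcc 0 R, HasDerivAt (fun ρ : ℝ => G (w + ρ * e θ)) (A (ρ, θ)) ρ := by
          intro ρ _
          have h1 : HasDerivAt (fun ρ : ℝ => w + ρ * e θ) (e θ) ρ := by
            simpa using ((Complex.ofRealCLM.hasDerivAt (x := ρ)).mul_const (e θ)).const_add w
          exact ((hG.differentiable (by norm_num)) _).hasFDerivAt.comp_hasDerivAt ρ h1
        rw [intervalIntegral.integral_eq_sub_of_hasDerivAt hd
          ((hA.comp (by fun_prop : Continuous fun ρ : ℝ => (ρ, θ))).intervalIntegrable _ _)]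
        rw [hG0 _ (by rw [hnorm R θ hR])]
        simp
      simp only [Prod.swap_prod_mk, this]
      rw [setIntegral_const, Real.volume_real_Ioo_of_le (by linarith)]
      rw [Complex.real_smul]; push_cast; ring
    · have := (hAi A hA).swap
      exact this
  have stepB : ∫ p in Ioo 0 R ×ˢ Ioo (-π) π, B p = 0 := by
    rw [Measure.volume_eq_prod, setIntegral_prod _ (hAi B hB)]
    refine setIntegral_eq_zero_of_forall_eq_zero fun ρ hρ => ?_
    rw [← integral_Ioc_eq_integral_Ioo, ← intervalIntegral.integral_of_le (by linarith)]
    have hρ0 : (ρ : ℂ) ≠ 0 := by exact_mod_cast hρ.1.ne'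
    have hd : ∀ θ ∈ uIcc (-π) π,
        HasDerivAt (fun θ : ℝ => G (w + ρ * e θ)) (ρ * B (ρ, θ)) θ := by
      intro θ _
      have h0 : HasDerivAt e (I * e θ) θ := by
        have := ((Complex.ofRealCLM.hasDerivAt (x := θ)).mul_const I).cexp
        simp only [Complex.ofRealCLM_apply, Complex.ofReal_one, one_mul] at this
        convert this using 1
        simp only [e]; ring
      have h1 : HasDerivAt (fun θ : ℝ => w + ρ * e θ) (ρ * (I * e θ)) θ :=
        (h0.const_mul (ρ : ℂ)).const_add w
      have := ((hG.differentiable (by norm_num)) _).hasFDerivAt.comp_hasDerivAt θ h1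
      have hBe : (ρ : ℂ) * B (ρ, θ) = fderiv ℝ G (w + ρ * e θ) (ρ * (I * e θ)) := by
        change (ρ : ℂ) * fderiv ℝ G (w + ρ * e θ) (I * e θ) = _
        rw [← Complex.real_smul, ← Complex.real_smul (x := ρ) (z := I * e θ), map_smul]
      rw [hBe]
      exact this
    have hIntg := intervalIntegral.integral_eq_sub_of_hasDerivAt hd
      ((continuous_const.mul (hB.comp (by fun_prop : Continuous fun θ : ℝ => (ρ, θ)))).intervalIntegrable _ _)
    have hee : e π = e (-π) := by
      simp only [e]; rw [Complex.exp_pi_mul_I]; push_cast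
      rw [neg_mul, Complex.exp_neg, Complex.exp_pi_mul_I]; norm_num
    rw [hee, sub_self, intervalIntegral.integral_const_mul] at hIntg
    exact (mul_eq_zero.1 hIntg).resolve_left hρ0
  rw [step1, integral_const_mul, integral_add (hAi A hA) (hAi _ (by fun_prop)),
    integral_const_mul, stepA, stepB]
  ring

open MeasureTheory in
lemma kernel_continuous {k : ℂ → ℂ} (hk : Continuous k) {Y : Set ℂ}
    (hd : ∀ w ∈ Y, w ∉ tsupport k) :
    Continuous (fun q : ℂ × Y => k q.1 / (q.1 - q.2)) := by
  rw [continuous_iff_continuousAt]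
  rintro ⟨ζ, w⟩
  by_cases h : ζ = w
  · have h1 : ζ ∉ tsupport k := by rw [h]; exact hd w w.2
    have h2 := notMem_tsupport_iff_eventuallyEq.1 h1
    have h3 : (fun q : ℂ × Y => k q.1 / (q.1 - q.2)) =ᶠ[𝓝 (ζ, w)] fun _ => 0 := by
      have := (continuous_fst (X := ℂ) (Y := Y)).continuousAt (x := (ζ, w)) |>.eventually h2
      filter_upwards [this] with q hq
      simp only [hq]; simp
    exact continuousAt_const.congr h3.symm
  · refine ContinuousAt.div (by fun_prop) (by fun_prop) ?_
    simpa [sub_eq_zero] using h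

open MeasureTheory in
lemma kernel_integrable {k : ℂ → ℂ} (hk : Continuous k) (hs : HasCompactSupport k) {Y : Set ℂ}
    (hd : ∀ w ∈ Y, w ∉ tsupport k) {w : ℂ} (hw : w ∈ Y) :
    Integrable (fun ζ => k ζ / (ζ - w)) := by
  have h1 : Continuous (fun ζ => k ζ / (ζ - w)) :=
    (kernel_continuous hk hd).comp (by fun_prop : Continuous fun ζ : ℂ => (ζ, (⟨w, hw⟩ : Y)))
  refine h1.integrable_of_hasCompactSupport ?_
  refine hs.mono fun ζ hζ => ?_
  simp only [Function.mem_support] at hζ ⊢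
  intro h
  apply hζ
  rw [h, zero_div]

open MeasureTheory in
lemma ap_kernel {k : ℂ → ℂ} (hk : Continuous k) (hs : HasCompactSupport k) {Y : Set ℂ}
    [CompactSpace Y] (hYc : IsCompact Y) (hY : Unb Y)
    (hd : ∀ w ∈ Y, w ∉ tsupport k) :
    Ap Y (fun w => ∫ ζ, k ζ / (ζ - w)) := by
  let K : C(ℂ × Y, ℂ) := ⟨fun q => k q.1 / (q.1 - q.2), kernel_continuous hk hd⟩
  let M : Submodule ℂ C(Y, ℂ) := Subalgebra.toSubmodule (polynomialFunctions Y).topologicalClosure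
  have hMc : IsClosed (M : Set C(Y, ℂ)) := Subalgebra.isClosed_topologicalClosure _
  have hM : ∀ ζ, K.curry ζ ∈ M := by
    intro ζ
    change K.curry ζ ∈ (polynomialFunctions Y).topologicalClosure
    by_cases h : ζ ∈ Y
    · have h1 : k ζ = 0 := image_eq_zero_of_notMem_tsupport (hd ζ h)
      have : K.curry ζ = 0 := by
        ext w; simp [K, h1]
      rw [this]; exact zero_mem _
    · obtain ⟨F, hF, hFe⟩ := (Ap.const (Y := Y) (-k ζ)).mul (ap_inv hYc hY h)
      have : K.curry ζ = F := by
        ext w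
        rw [hFe]
        simp only [ContinuousMap.curry_apply, K, ContinuousMap.coe_mk]
        rw [← neg_sub (w : ℂ) ζ, div_neg, div_eq_mul_inv, neg_mul]
      rw [this]; exact hF
  have : CompleteSpace M := hMc.completeSpace_coe
  let F : ℂ → M := fun ζ => ⟨K.curry ζ, hM ζ⟩
  have hFc : Continuous F := (K.curry.continuous).subtype_mk _
  have hFs : HasCompactSupport F := by
    refine hs.mono fun ζ hζ => ?_
    simp only [Function.mem_support] at hζ ⊢
    intro h
    apply hζ
    ext w
    simp [F, K, h]
  have hFi : Integrable F := hFc.integrable_of_hasCompactSupport hFs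
  refine ⟨(∫ ζ, F ζ : M), (∫ ζ, F ζ : M).2, fun w => ?_⟩
  let ev : M →L[ℂ] ℂ := (ContinuousMap.evalCLM ℂ w).comp M.subtypeL
  have := ev.integral_comp_comm hFi
  change ev (∫ ζ, F ζ) = _
  rw [← this]
  rfl

/-- a fixed smooth function which vanishes near the origin and is the identity far away -/
lemma exists_psi : ∃ ψ : ℂ → ℂ, ContDiff ℝ 1 ψ ∧ (∀ ζ, ‖ζ‖ ≤ 2 → ψ ζ = 0) ∧
    (∀ ζ, 3 ≤ ‖ζ‖ → ψ ζ = ζ) ∧ (∀ ζ, ‖ψ ζ‖ ≤ ‖ζ‖) := by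
  let φ : ContDiffBump (0 : ℂ) := ⟨2, 3, by norm_num, by norm_num⟩
  refine ⟨fun ζ => ((1 - φ ζ : ℝ) : ℂ) * ζ, ?_, ?_, ?_, ?_⟩
  · have h1 : ContDiff ℝ 1 (fun ζ : ℂ => (1 - φ ζ : ℝ)) := contDiff_const.sub φ.contDiff
    exact (Complex.ofRealCLM.contDiff.comp h1).mul contDiff_id
  · intro ζ h
    have : φ ζ = 1 := φ.one_of_mem_closedBall (by simpa using h)
    simp [this]
  · intro ζ h
    have : φ ζ = 0 := φ.zero_of_le_dist (by simpa using h)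
    simp [this]
  · intro ζ
    rw [norm_mul, Complex.norm_real, Real.norm_eq_abs]
    have h0 : 0 ≤ φ ζ := φ.nonneg
    have h1 : φ ζ ≤ 1 := φ.le_one
    have : |1 - φ ζ| ≤ 1 := by rw [abs_le]; constructor <;> linarith
    nlinarith [norm_nonneg ζ]

lemma dbar_id (ζ : ℂ) : dbar (fun z => z) ζ = 0 := by
  unfold dbar
  simp

lemma dbar_scale {ψ : ℂ → ℂ} (hψ : ContDiff ℝ 1 ψ) {r : ℝ} (hr : 0 < r) (ζ : ℂ) :
    dbar (fun z => r • ψ (r⁻¹ • z)) ζ = dbar ψ (r⁻¹ • ζ) := by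
  have h1 : HasFDerivAt (fun z : ℂ => r⁻¹ • z) (r⁻¹ • ContinuousLinearMap.id ℝ ℂ) ζ :=
    (r⁻¹ • ContinuousLinearMap.id ℝ ℂ).hasFDerivAt
  have h2 := ((((hψ.differentiable (by norm_num)) (r⁻¹ • ζ)).hasFDerivAt.comp ζ h1).const_smul r)
  have h3 : fderiv ℝ (fun z => r • ψ (r⁻¹ • z)) ζ = fderiv ℝ ψ (r⁻¹ • ζ) := by
    refine (h2.fderiv).trans ?_
    ext v
    simp [smul_smul, hr.ne']
  unfold dbar
  rw [h3]

lemma dbar_bound {ψ : ℂ → ℂ} (hψ : ContDiff ℝ 1 ψ) (hψ3 : ∀ ζ, 3 ≤ ‖ζ‖ → ψ ζ = ζ) :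
    ∃ C : ℝ, 0 < C ∧ (∀ ζ, ‖dbar ψ ζ‖ ≤ C) ∧ ∀ ζ, 3 < ‖ζ‖ → dbar ψ ζ = 0 := by
  have hz : ∀ ζ : ℂ, 3 < ‖ζ‖ → dbar ψ ζ = 0 := by
    intro ζ h
    rw [← dbar_id ζ]
    apply dbar_congr
    have : ∀ᶠ z : ℂ in 𝓝 ζ, 3 < ‖z‖ := continuous_norm.continuousAt.eventually (lt_mem_nhds h)
    filter_upwards [this] with z hz using hψ3 z hz.le
  obtain ⟨C, hC⟩ := (isCompact_closedBall (0 : ℂ) 3).exists_bound_of_continuousOn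
    (dbar_continuous hψ).continuousOn
  refine ⟨max C 1, by positivity, fun ζ => ?_, hz⟩
  by_cases h : 3 < ‖ζ‖
  · rw [hz ζ h]; simp
  · exact (hC ζ (by simpa using h)).trans (le_max_left _ _)

open MeasureTheory in
lemma small_part {g : ℂ → ℂ} (hg : Continuous g) {C s : ℝ} (hC : 0 < C) (hs : 0 < s)
    (hb : ∀ ζ, ‖g ζ‖ ≤ C) (hz : ∀ ζ, s ≤ ‖ζ‖ → g ζ = 0) (w : ℂ) :
    Integrable (fun ζ => g ζ / (ζ - w)) ∧ ‖∫ ζ, g ζ / (ζ - w)‖ ≤ C * (3 * Real.pi * s) := by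
  have hpi := Real.pi_pos
  have hle : ∫⁻ ζ, ‖g ζ / (ζ - w)‖ₑ ≤ ENNReal.ofReal (C * (3 * Real.pi * s)) := by
    calc _ ≤ ∫⁻ ζ : ℂ, ENNReal.ofReal C *
          (Metric.ball (0 : ℂ) s).indicator (fun ζ => ENNReal.ofReal ‖ζ - w‖⁻¹) ζ := by
          refine lintegral_mono fun ζ => ?_
          by_cases h : ζ ∈ Metric.ball (0 : ℂ) s
          · rw [indicator_of_mem h, ← ENNReal.ofReal_mul hC.le, ← ofReal_norm, norm_div,
              div_eq_mul_inv]
            apply ENNReal.ofReal_le_ofReal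
            gcongr
            exact hb ζ
          · rw [mem_ball_zero_iff, not_lt] at h
            simp only [hz ζ h]; simp
      _ = ENNReal.ofReal C * _ := lintegral_const_mul' _ _ ENNReal.ofReal_ne_top
      _ ≤ ENNReal.ofReal C * ENNReal.ofReal (3 * Real.pi * s) := by
          gcongr; exact lintegral_kernel s hs w
      _ = _ := by rw [← ENNReal.ofReal_mul hC.le]
  constructor
  · refine ⟨(hg.measurable.div (by fun_prop)).aestronglyMeasurable, ?_⟩
    exact lt_of_le_of_lt hle ENNReal.ofReal_lt_top
  · have := (enorm_integral_le_lintegral_enorm (fun ζ => g ζ / (ζ - w))).trans hle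
    rw [← ofReal_norm] at this
    exact (ENNReal.ofReal_le_ofReal_iff (by positivity)).1 this

/-- Separation: polynomials close to the identity on `Y₁` and close to zero on `Y₂`. -/
lemma exists_sep {Y₁ Y₂ : Set ℂ} (hc₁ : IsCompact Y₁) (hc₂ : IsCompact Y₂)
    (hU : Unb (Y₁ ∪ Y₂)) (hY : Y₁ ∩ Y₂ = {0}) {ε : ℝ} (hε : 0 < ε) :
    ∃ P : Polynomial ℂ, (∀ w ∈ Y₁, ‖P.eval w - w‖ ≤ ε) ∧ ∀ w ∈ Y₂, ‖P.eval w‖ ≤ ε := by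
  have hYc := hc₁.union hc₂
  have : CompactSpace ↥(Y₁ ∪ Y₂) := isCompact_iff_compactSpace.1 hYc
  have hpi := Real.pi_pos
  obtain ⟨ψ, hψ, hψ2, hψ3, hψn⟩ := exists_psi
  obtain ⟨C, hC, hCb, hCz⟩ := dbar_bound hψ hψ3
  obtain ⟨r, hr, hr1⟩ : ∃ r : ℝ, 0 < r ∧ (6 + 12 * C) * r ≤ ε / 2 := by
    refine ⟨ε / 2 / (6 + 12 * C), by positivity, le_of_eq ?_⟩
    field_simp
  obtain ⟨T, hT, hTY⟩ := bound_of_compact hYc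
  -- the cutoff
  obtain ⟨χ₀, hχ0, hχ1, hχI⟩ := exists_contMDiffMap_zero_one_nhds_of_isClosed (n := 1)
    (modelWithCornersSelf ℝ ℂ)
    (s := (Y₂ \ Metric.ball 0 r) ∪ (Metric.ball (0 : ℂ) (T + 1))ᶜ) (t := Y₁ \ Metric.ball 0 r)
    ((hc₂.isClosed.inter Metric.isOpen_ball.isClosed_compl).union
      Metric.isOpen_ball.isClosed_compl)
    (hc₁.isClosed.inter Metric.isOpen_ball.isClosed_compl)
    (by
      rw [Set.disjoint_left]
      rintro x (⟨hx2, hxr⟩ | hx) ⟨hx1, _⟩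
      · have : x ∈ Y₁ ∩ Y₂ := ⟨hx1, hx2⟩
        rw [hY, mem_singleton_iff] at this
        rw [this] at hxr
        exact hxr (Metric.mem_ball_self hr)
      · have := hTY x (Or.inl hx1)
        rw [mem_compl_iff, mem_ball_zero_iff] at hx
        linarith)
  let χ : ℂ → ℂ := fun ζ => (χ₀ ζ : ℂ)
  have hχ : ContDiff ℝ 1 χ := Complex.ofRealCLM.contDiff.comp χ₀.contMDiff.contDiff
  have hχn : ∀ ζ, ‖χ ζ‖ ≤ 1 := fun ζ => by
    simp only [χ]
    rw [Complex.norm_real, Real.norm_eq_abs, abs_of_nonneg (hχI ζ).1]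
    exact (hχI ζ).2
  have hχ0' : ∀ ζ ∈ (Y₂ \ Metric.ball 0 r) ∪ (Metric.ball (0 : ℂ) (T + 1))ᶜ,
      χ =ᶠ[𝓝 ζ] fun _ => 0 := by
    intro ζ hζ
    have := (mem_nhdsSet_iff_forall.1 hχ0) ζ hζ
    filter_upwards [this] with z hz
    have hz' : χ₀ z = 0 := hz
    simp [χ, hz']
  have hχ1' : ∀ ζ ∈ Y₁ \ Metric.ball 0 r, χ =ᶠ[𝓝 ζ] fun _ => 1 := by
    intro ζ hζ
    have := (mem_nhdsSet_iff_forall.1 hχ1) ζ hζ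
    filter_upwards [this] with z hz
    have hz' : χ₀ z = 1 := hz
    simp [χ, hz']
  have hdc : ∀ (c : ℂ) (ζ : ℂ), dbar (fun _ => c) ζ = 0 := fun c ζ => by simp [dbar]
  have hχs : HasCompactSupport χ := by
    refine HasCompactSupport.intro (isCompact_closedBall (0 : ℂ) (T + 1)) fun ζ hζ => ?_
    refine (hχ0' ζ (Or.inr fun h => hζ (Metric.ball_subset_closedBall h))).self_of_nhds
  let ψr : ℂ → ℂ := fun z => r • ψ (r⁻¹ • z)
  have hψr : ContDiff ℝ 1 ψr := by
    have h1 : ContDiff ℝ 1 (fun z : ℂ => r⁻¹ • z) := by fun_prop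
    have h2 : ContDiff ℝ 1 (fun z : ℂ => ψ (r⁻¹ • z)) := hψ.comp h1
    exact contDiff_const.fun_smul h2
  have hnr : ∀ z : ℂ, ‖r⁻¹ • z‖ = ‖z‖ / r := fun z => by
    rw [norm_smul, Real.norm_eq_abs, abs_of_pos (by positivity)]; field_simp
  have hψr2 : ∀ z, ‖z‖ ≤ 2 * r → ψr z = 0 := fun z hz => by
    simp only [ψr]
    rw [hψ2 _ (by rw [hnr, div_le_iff₀ hr]; exact hz), smul_zero]
  have hψr3 : ∀ z, 3 * r ≤ ‖z‖ → ψr z = z := fun z hz => by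
    simp only [ψr]
    rw [hψ3 _ (by rw [hnr, le_div_iff₀ hr]; exact hz), smul_smul, mul_inv_cancel₀ hr.ne', one_smul]
  have hψrn : ∀ z, ‖ψr z‖ ≤ ‖z‖ := fun z => by
    simp only [ψr]
    rw [norm_smul, Real.norm_eq_abs, abs_of_pos hr]
    have := hψn (r⁻¹ • z)
    rw [hnr, le_div_iff₀ hr] at this
    linarith
  have hψrb : ∀ z, ‖dbar ψr z‖ ≤ C := fun z => by
    rw [dbar_scale hψ hr]; exact hCb _
  have hψrz : ∀ z, 4 * r ≤ ‖z‖ → dbar ψr z = 0 := fun z hz => by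
    rw [dbar_scale hψ hr]
    apply hCz
    rw [hnr, lt_div_iff₀ hr]; linarith
  let G : ℂ → ℂ := fun z => χ z * ψr z
  have hG : ContDiff ℝ 1 G := hχ.mul hψr
  have hGs : HasCompactSupport G := hχs.mul_right
  let k : ℂ → ℂ := fun z => ψr z * dbar χ z
  have hk : Continuous k := hψr.continuous.mul (dbar_continuous hχ)
  have hks : HasCompactSupport k := by
    refine HasCompactSupport.intro (isCompact_closedBall (0 : ℂ) (T + 1)) fun ζ hζ => ?_
    simp only [k]
    rw [dbar_congr (hχ0' ζ (Or.inr fun h => hζ (Metric.ball_subset_closedBall h))), hdc, mul_zero]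
  have hkd : ∀ w ∈ Y₁ ∪ Y₂, w ∉ tsupport k := by
    intro w hw
    rw [notMem_tsupport_iff_eventuallyEq]
    by_cases h : ‖w‖ < 2 * r
    · have : ∀ᶠ z : ℂ in 𝓝 w, ‖z‖ < 2 * r := continuous_norm.continuousAt.eventually (gt_mem_nhds h)
      filter_upwards [this] with z hz
      simp [k, hψr2 z hz.le]
    · have hwr : w ∉ Metric.ball (0 : ℂ) r := by
        rw [mem_ball_zero_iff]; intro h'; linarith
      have hc : ∃ c : ℂ, χ =ᶠ[𝓝 w] fun _ => c := by
        rcases hw with hw | hw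
        · exact ⟨1, hχ1' w ⟨hw, hwr⟩⟩
        · exact ⟨0, hχ0' w (Or.inl ⟨hw, hwr⟩)⟩
      obtain ⟨c, hc⟩ := hc
      filter_upwards [hc.eventuallyEq_nhds] with z hz
      simp only [k]
      rw [dbar_congr hz, hdc]; simp
  have hap := ap_kernel hk hks hYc hU hkd
  obtain ⟨P, hP⟩ := ((Ap.const (-(Real.pi : ℂ)⁻¹)).mul hap).exists_poly hYc (half_pos hε)
  have hsm : ∀ w, _ := small_part (g := fun z => χ z * dbar ψr z)
    (hχ.continuous.mul (dbar_continuous hψr)) hC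
    (by positivity : 0 < 4 * r) (fun ζ => by
      rw [norm_mul]
      calc _ ≤ 1 * C := by gcongr <;> [exact hχn ζ; exact hψrb ζ]
        _ = C := one_mul C) (fun ζ hζ => by rw [hψrz ζ hζ, mul_zero])
  have hPG : ∀ w ∈ Y₁ ∪ Y₂, ‖P.eval w - G w‖ ≤ ε / 2 + 12 * C * r := by
    intro w hw
    have h1 := pompeiu hG hGs w
    have h2 : ∀ ζ, dbar G ζ / (ζ - w) = χ ζ * dbar ψr ζ / (ζ - w) + k ζ / (ζ - w) := by
      intro ζ
      rw [← add_div, dbar_mul hχ hψr]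
    simp_rw [h2] at h1
    rw [MeasureTheory.integral_add (hsm w).1 (kernel_integrable hk hks hkd hw)] at h1
    have h3 := hP w hw
    have h4 := (hsm w).2
    have hpc : (Real.pi : ℂ) ≠ 0 := by exact_mod_cast hpi.ne'
    set J := ∫ ζ, k ζ / (ζ - w)
    set J' := ∫ ζ, χ ζ * dbar ψr ζ / (ζ - w)
    have h5 : -(Real.pi : ℂ)⁻¹ * J - G w = (Real.pi : ℂ)⁻¹ * J' := by
      field_simp
      linear_combination -h1
    have h6 : ‖(Real.pi : ℂ)⁻¹ * J'‖ ≤ 12 * C * r := by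
      rw [norm_mul, norm_inv, Complex.norm_real, Real.norm_eq_abs, abs_of_pos hpi,
        inv_mul_le_iff₀ hpi]
      linarith
    calc ‖P.eval w - G w‖ = ‖(P.eval w - -(Real.pi : ℂ)⁻¹ * J) + (-(Real.pi : ℂ)⁻¹ * J - G w)‖ := by
          congr 1; ring
      _ ≤ ‖P.eval w - -(Real.pi : ℂ)⁻¹ * J‖ + ‖-(Real.pi : ℂ)⁻¹ * J - G w‖ := norm_add_le _ _
      _ ≤ ε / 2 + 12 * C * r := by rw [h5]; exact add_le_add h3.le h6
  refine ⟨P, fun w hw => ?_, fun w hw => ?_⟩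
  · have h1 := hPG w (Or.inl hw)
    have h2 : ‖G w - w‖ ≤ 6 * r := by
      by_cases hwr : ‖w‖ < r
      · simp only [G]
        rw [hψr2 w (by linarith), mul_zero, zero_sub, norm_neg]; linarith
      · have hχw : χ w = 1 := (hχ1' w ⟨hw, by rwa [mem_ball_zero_iff]⟩).self_of_nhds
        simp only [G]
        rw [hχw, one_mul]
        by_cases h3 : 3 * r ≤ ‖w‖
        · rw [hψr3 w h3]; simp; positivity
        · have := norm_sub_le (ψr w) w
          have := hψrn w
          linarith
    have h3 := norm_add_le (P.eval w - G w) (G w - w)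
    rw [sub_add_sub_cancel] at h3
    linarith
  · have h1 := hPG w (Or.inr hw)
    have h2 : G w = 0 := by
      by_cases hwr : ‖w‖ < r
      · simp only [G]
        rw [hψr2 w (by linarith), mul_zero]
      · have hχw : χ w = 0 := (hχ0' w (Or.inl ⟨hw, by rwa [mem_ball_zero_iff]⟩)).self_of_nhds
        simp only [G]
        rw [hχw, zero_mul]
    rw [h2, sub_zero] at h1
    linarith

lemma eval_aeval' {n : ℕ} (p : MvPolynomial (Fin n) ℂ) (P : Polynomial ℂ) (z : Fin n → ℂ) :
    eval z (Polynomial.aeval p P) = P.eval (eval z p) := by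
  induction P using Polynomial.induction_on' with
  | add a b ha hb => simp [ha, hb]
  | monomial k c => simp [Polynomial.aeval_monomial, MvPolynomial.algebraMap_eq]

lemma eval_continuous' {n : ℕ} (q : MvPolynomial (Fin n) ℂ) :
    Continuous (fun z : Fin n → ℂ => eval z q) := MvPolynomial.continuous_eval q

lemma hull_le {n : ℕ} {X : Set (Fin n → ℂ)} {z : Fin n → ℂ}
    (hz : ∀ P : MvPolynomial (Fin n) ℂ, ‖eval z P‖ ≤ sSup ((fun w => ‖eval w P‖) '' X))
    (P : MvPolynomial (Fin n) ℂ) {c : ℝ} (hc : 0 ≤ c) (h : ∀ x ∈ X, ‖eval x P‖ ≤ c) :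
    ‖eval z P‖ ≤ c := by
  refine (hz P).trans (Real.sSup_le ?_ hc)
  rintro _ ⟨x, hx, rfl⟩
  exact h x hx

lemma exists_sep_point {n : ℕ} {K : Set (Fin n → ℂ)} (hK : IsCompact K) (hP : PolyConvex K)
    {z : Fin n → ℂ} (hz : z ∉ K) :
    ∃ q : MvPolynomial (Fin n) ℂ, eval z q = 1 ∧ ∃ δ : ℝ, 0 ≤ δ ∧ δ < 1 ∧
      ∀ x ∈ K, ‖eval x q‖ ≤ δ := by
  have h1 : ¬ ∀ P : MvPolynomial (Fin n) ℂ, ‖eval z P‖ ≤ sSup ((fun w => ‖eval w P‖) '' K) :=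
    fun h => hz (hP z h)
  push Not at h1
  obtain ⟨P, hPz⟩ := h1
  set S := sSup ((fun w => ‖eval w P‖) '' K)
  have hS : 0 ≤ S := by
    apply Real.sSup_nonneg
    rintro _ ⟨x, _, rfl⟩
    exact norm_nonneg _
  have hpos : 0 < ‖eval z P‖ := lt_of_le_of_lt hS hPz
  have hbdd : BddAbove ((fun w => ‖eval w P‖) '' K) :=
    (hK.image (eval_continuous' P).norm).bddAbove
  refine ⟨C (eval z P)⁻¹ * P, ?_, S / ‖eval z P‖, by positivity, ?_, ?_⟩
  · rw [map_mul, eval_C, inv_mul_cancel₀ (norm_pos_iff.1 hpos)]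
  · rwa [div_lt_one hpos]
  · intro x hx
    rw [map_mul, eval_C, norm_mul, norm_inv, inv_mul_eq_div]
    gcongr
    exact le_csSup hbdd ⟨x, hx, rfl⟩

lemma exists_bound' {n : ℕ} {K : Set (Fin n → ℂ)} (hK : IsCompact K)
    (q : MvPolynomial (Fin n) ℂ) : ∃ N : ℝ, 1 ≤ N ∧ ∀ x ∈ K, ‖eval x q‖ ≤ N := by
  obtain ⟨N, hN⟩ := hK.exists_bound_of_continuousOn (eval_continuous' q).continuousOn
  exact ⟨max N 1, le_max_right _ _, fun x hx => (hN x hx).trans (le_max_left _ _)⟩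

lemma kallin_step2 {n : ℕ} {X₁ X₂ : Set (Fin n → ℂ)} (hX₁c : IsCompact X₁) (hX₂c : IsCompact X₂)
    (hX₁ : PolyConvex X₁) {Y₁ Y₂ : Set ℂ} (hY₁c : IsCompact Y₁) (hY₂c : IsCompact Y₂)
    (hU : Unb (Y₁ ∪ Y₂)) (hY : Y₁ ∩ Y₂ = {0})
    {p : MvPolynomial (Fin n) ℂ} (hp₁ : ∀ x ∈ X₁, eval x p ∈ Y₁) (hp₂ : ∀ x ∈ X₂, eval x p ∈ Y₂)
    {z : Fin n → ℂ}
    (hz : ∀ P : MvPolynomial (Fin n) ℂ, ‖eval z P‖ ≤ sSup ((fun w => ‖eval w P‖) '' (X₁ ∪ X₂)))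
    (h0 : eval z p ≠ 0) (h1 : eval z p ∈ Y₁) : z ∈ X₁ := by
  by_contra hcon
  obtain ⟨q, hqz, δ, hδ0, hδ1, hq⟩ := exists_sep_point hX₁c hX₁ hcon
  obtain ⟨N, hN1, hN⟩ := exists_bound' hX₂c q
  obtain ⟨M, hM, hMY⟩ := bound_of_compact hY₁c
  have ha : 0 < ‖eval z p‖ := norm_pos_iff.2 h0
  set a := ‖eval z p‖
  obtain ⟨m, hm⟩ : ∃ m : ℕ, δ ^ m < a / 4 / (M + a) :=
    exists_pow_lt_of_lt_one (by positivity) hδ1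
  obtain ⟨P, hP1, hP2⟩ := exists_sep hY₁c hY₂c hU hY (ε := a / 4 / N ^ m) (by positivity)
  have hNm : 1 ≤ N ^ m := one_le_pow₀ hN1
  have hε : a / 4 / N ^ m ≤ a / 4 := div_le_self (by positivity) hNm
  have hle := hull_le hz (q ^ m * Polynomial.aeval p P) (c := a / 4) (by positivity) (by
    rintro x (hx | hx)
    · rw [map_mul, map_pow, eval_aeval', norm_mul, norm_pow]
      have h2 := hP1 _ (hp₁ x hx)
      have h3 := hMY _ (hp₁ x hx)
      have h4 : ‖P.eval (eval x p)‖ ≤ M + a := by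
        have := norm_add_le (P.eval (eval x p) - eval x p) (eval x p)
        rw [sub_add_cancel] at this
        linarith
      calc ‖eval x q‖ ^ m * ‖P.eval (eval x p)‖ ≤ δ ^ m * (M + a) := by
            gcongr; exact hq x hx
        _ ≤ a / 4 / (M + a) * (M + a) := by gcongr
        _ = a / 4 := by field_simp
    · rw [map_mul, map_pow, eval_aeval', norm_mul, norm_pow]
      calc ‖eval x q‖ ^ m * ‖P.eval (eval x p)‖ ≤ N ^ m * (a / 4 / N ^ m) := by
            gcongr
            · exact hN x hx
            · exact hP2 _ (hp₂ x hx)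
        _ = a / 4 := by field_simp)
  rw [map_mul, map_pow, eval_aeval', hqz, one_pow, one_mul] at hle
  have h5 := hP1 _ h1
  have h6 := norm_sub_norm_le (eval z p) (P.eval (eval z p))
  rw [norm_sub_rev] at h6
  change a - _ ≤ _ at h6
  linarith

lemma kallin_step3 {n : ℕ} {X : Set (Fin n → ℂ)} (hXc : IsCompact X)
    {Y : Set ℂ} (hYc : IsCompact Y) (hU : Unb Y) (h0Y : (0 : ℂ) ∈ Y)
    (hcl : (0 : ℂ) ∈ closure Yᶜ)
    {p : MvPolynomial (Fin n) ℂ} (hp : ∀ x ∈ X, eval x p ∈ Y)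
    (h4 : PolyConvex ({z | eval z p = 0} ∩ X)) {z : Fin n → ℂ}
    (hz : ∀ P : MvPolynomial (Fin n) ℂ, ‖eval z P‖ ≤ sSup ((fun w => ‖eval w P‖) '' X))
    (h0 : eval z p = 0) : z ∈ X := by
  by_contra hcon
  have hKc : IsCompact ({z | eval z p = 0} ∩ X) :=
    hXc.inter_left (isClosed_singleton.preimage (eval_continuous' p))
  obtain ⟨q, hqz, δ, hδ0, hδ1, hq⟩ := exists_sep_point hKc h4 (fun h => hcon h.2)
  obtain ⟨N, hN1, hN⟩ := exists_bound' hXc q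
  -- a neighbourhood of the zero fibre on which `q` is small
  obtain ⟨R, hR, hRq⟩ : ∃ R : ℝ, 0 < R ∧ ∀ x ∈ X, ‖eval x p‖ < R → ‖eval x q‖ ≤ (1 + δ) / 2 := by
    have hLc : IsCompact (X ∩ {x | (1 + δ) / 2 ≤ ‖eval x q‖}) :=
      hXc.inter_right (isClosed_le continuous_const (eval_continuous' q).norm)
    rcases (X ∩ {x | (1 + δ) / 2 ≤ ‖eval x q‖}).eq_empty_or_nonempty with he | hne
    · refine ⟨1, one_pos, fun x hx _ => ?_⟩
      by_contra h
      have : x ∈ X ∩ {x | (1 + δ) / 2 ≤ ‖eval x q‖} := ⟨hx, (not_le.1 h).le⟩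
      rw [he] at this
      exact this
    · obtain ⟨x₀, hx₀, hmin⟩ := hLc.exists_isMinOn hne (eval_continuous' p).norm.continuousOn
      refine ⟨‖eval x₀ p‖, norm_pos_iff.2 fun h => ?_, fun x hx hxp => ?_⟩
      · have h1 := hq x₀ ⟨h, hx₀.1⟩
        have h2 : (1 + δ) / 2 ≤ ‖eval x₀ q‖ := hx₀.2
        linarith
      · by_contra h
        have h1 := isMinOn_iff.1 hmin x ⟨hx, (not_le.1 h).le⟩
        linarith
  obtain ⟨m, hm⟩ : ∃ m : ℕ, ((1 + δ) / 2) ^ m < 1 / 400 :=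
    exists_pow_lt_of_lt_one (by positivity) (by linarith)
  obtain ⟨P, hP0, hP100, hPε⟩ := exists_peak hYc hU h0Y hcl hR (ε := 1 / 4 / N ^ m) (by positivity)
  have hle := hull_le hz (q ^ m * Polynomial.aeval p P) (c := 1 / 4) (by positivity) (by
    intro x hx
    rw [map_mul, map_pow, eval_aeval', norm_mul, norm_pow]
    by_cases h : ‖eval x p‖ < R
    · calc ‖eval x q‖ ^ m * ‖P.eval (eval x p)‖ ≤ ((1 + δ) / 2) ^ m * 100 := by
            gcongr
            · exact hRq x hx h
            · exact hP100 _ (hp x hx)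
        _ ≤ 1 / 400 * 100 := by gcongr
        _ = 1 / 4 := by norm_num
    · calc ‖eval x q‖ ^ m * ‖P.eval (eval x p)‖ ≤ N ^ m * (1 / 4 / N ^ m) := by
            gcongr
            · exact hN x hx
            · exact hPε _ (hp x hx) (not_lt.1 h)
        _ = 1 / 4 := by field_simp)
  rw [map_mul, map_pow, eval_aeval', hqz, one_pow, one_mul, h0] at hle
  linarith

lemma kallin_step1 {n : ℕ} {X : Set (Fin n → ℂ)} {Y : Set ℂ} (hYc : IsCompact Y) (hU : Unb Y)
    {p : MvPolynomial (Fin n) ℂ} (hp : ∀ x ∈ X, eval x p ∈ Y) {z : Fin n → ℂ}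
    (hz : ∀ P : MvPolynomial (Fin n) ℂ, ‖eval z P‖ ≤ sSup ((fun w => ‖eval w P‖) '' X)) :
    eval z p ∈ Y := by
  by_contra hcon
  have : CompactSpace Y := isCompact_iff_compactSpace.1 hYc
  obtain ⟨M, hM, hMY⟩ := bound_of_compact hYc
  set a := eval z p
  obtain ⟨f, hf⟩ := (ap_inv hYc hU hcon).exists_poly hYc
    (ε := 1 / 2 / (M + ‖a‖)) (by positivity)
  have hle := hull_le hz (Polynomial.aeval p (1 - f * (Polynomial.X - Polynomial.C a)))
    (c := 1 / 2) (by norm_num) (by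
    intro x hx
    rw [eval_aeval']
    have hxY := hp x hx
    set w := eval x p
    have hne : w - a ≠ 0 := fun h => hcon (by rw [← sub_eq_zero.1 h]; exact hxY)
    simp only [Polynomial.eval_sub, Polynomial.eval_one, Polynomial.eval_mul, Polynomial.eval_X,
      Polynomial.eval_C]
    have he : 1 - f.eval w * (w - a) = - ((f.eval w - (w - a)⁻¹) * (w - a)) := by
      field_simp; ring
    rw [he, norm_neg, norm_mul]
    have h1 := hf w hxY
    have h2 : ‖w - a‖ ≤ M + ‖a‖ := (norm_sub_le _ _).trans (by gcongr; exact hMY w hxY)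
    calc _ ≤ 1 / 2 / (M + ‖a‖) * (M + ‖a‖) := by gcongr
      _ = 1 / 2 := by field_simp)
  rw [eval_aeval'] at hle
  simp only [Polynomial.eval_sub, Polynomial.eval_one, Polynomial.eval_mul, Polynomial.eval_X,
      Polynomial.eval_C] at hle
  change ‖1 - f.eval a * (a - a)‖ ≤ _ at hle
  norm_num at hle

/-- Kallin's lemma. -/
theorem stmt4 {n : ℕ} (X₁ X₂ : Set (Fin n → ℂ)) (hX₁c : IsCompact X₁) (hX₂c : IsCompact X₂)
    -- (1) `X₁, X₂` polynomially convex
    (hX₁ : PolyConvex X₁) (hX₂ : PolyConvex X₂)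
    -- (2) `Y₁, Y₂` polynomially convex compacts in `ℂ`, `0` a boundary point of both,
    -- `Y₁ ∩ Y₂ = {0}`
    (Y₁ Y₂ : Set ℂ) (hY₁c : IsCompact Y₁) (hY₂c : IsCompact Y₂)
    (hY₁ : PolyConvex1 Y₁) (hY₂ : PolyConvex1 Y₂)
    (h0₁ : (0 : ℂ) ∈ frontier Y₁) (h0₂ : (0 : ℂ) ∈ frontier Y₂)
    (hY : Y₁ ∩ Y₂ = {0})
    -- (3) `p` is a polynomial with `p(X₁) = Y₁` and `p(X₂) = Y₂`
    (p : MvPolynomial (Fin n) ℂ)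
    (hp₁ : (fun z => eval z p) '' X₁ = Y₁) (hp₂ : (fun z => eval z p) '' X₂ = Y₂)
    -- (4) `p⁻¹(0) ∩ (X₁ ∪ X₂)` polynomially convex
    (h4 : PolyConvex ({z | eval z p = 0} ∩ (X₁ ∪ X₂))) :
    PolyConvex (X₁ ∪ X₂) := by
  intro z hz
  have hU₁ := unb_of_polyConvex1 hY₁c hY₁
  have hU₂ := unb_of_polyConvex1 hY₂c hY₂
  have hU := unb_union hY₁c hY₂c hU₁ hU₂ hY
  have hcl := zero_mem_closure hY₁c hY₂c h0₁ h0₂ hY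
  have hYc := hY₁c.union hY₂c
  have hq₁ : ∀ x ∈ X₁, eval x p ∈ Y₁ := fun x hx => hp₁ ▸ ⟨x, hx, rfl⟩
  have hq₂ : ∀ x ∈ X₂, eval x p ∈ Y₂ := fun x hx => hp₂ ▸ ⟨x, hx, rfl⟩
  have hq : ∀ x ∈ X₁ ∪ X₂, eval x p ∈ Y₁ ∪ Y₂ := by
    rintro x (hx | hx)
    · exact Or.inl (hq₁ x hx)
    · exact Or.inr (hq₂ x hx)
  have h0 : (0 : ℂ) ∈ Y₁ ∩ Y₂ := by rw [hY]; rfl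
  by_cases hz0 : eval z p = 0
  · exact kallin_step3 (hX₁c.union hX₂c) hYc hU (Or.inl h0.1) hcl hq h4 hz hz0
  · rcases kallin_step1 hYc hU hq hz with h1 | h2
    · exact Or.inl (kallin_step2 hX₁c hX₂c hX₁ hY₁c hY₂c hU hY hq₁ hq₂ hz hz0 h1)
    · rw [Set.union_comm] at hU hz
      rw [Set.inter_comm] at hY
      exact Or.inr (kallin_step2 hX₂c hX₁c hX₂ hY₂c hY₁c hU hY hq₂ hq₁ hz hz0 h2)
end
end

section
/- (Stout's theorem) Suppose: (1) X₁, X₂ are compact subsets of ℂⁿ with P(X₁) = C(X₁) and P(X₂) = C(X₂); (2) Y₁, Y₂ are polynomially convex compact subsets of ℂ such that 0 is a boundary point of both Y₁ and Y₂, and Y₁ ∩ Y₂ = {0}; (3) p is a polynomial such that p(X₁) ⊆ Y₁ and p(X₂) ⊆ Y₂; (4) p⁻¹(0) ∩ (X₁ ∪ X₂) = X₁ ∩ X₂. Then P(X₁ ∪ X₂) = C(X₁ ∪ X₂). -/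
open Complex MvPolynomial

noncomputable section

/-- `P(K) = C(K)` for `K ⊆ ℂⁿ`: every continuous function on `K` is a uniform limit on `K`
of polynomials in the coordinates. -/
def PolyEqC {n : ℕ} (K : Set (Fin n → ℂ)) : Prop :=
  ∀ f : (Fin n → ℂ) → ℂ, ContinuousOn f K → ∀ ε : ℝ, 0 < ε →
    ∃ P : MvPolynomial (Fin n) ℂ, ∀ x ∈ K, ‖f x - eval x P‖ < ε

namespace Stout

open Set Filter Topology

lemma no_log (a : ℂ) (F : ℂ → ℂ) (hF : Continuous F) (h0 : ∀ z, F z ≠ 0) (R : ℝ)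
    (hR : ∀ z, R ≤ ‖z‖ → F z = z - a) : False := by
  obtain ⟨G, hG, -⟩ := Complex.isCoveringMapOn_exp.existsUnique_continuousMap_lifts
    (⟨F, hF⟩ : C(ℂ, ℂ)) (a₀ := 0) (e₀ := Complex.log (F 0)) (by simp [Complex.exp_log (h0 0)])
    (by simpa using h0)
  have hGe : ∀ z, Complex.exp (G z) = F z := fun z => congrFun hG.2 z
  set r : ℝ := max R (‖a‖ + 1) with hr
  have hra : ‖a‖ < r := lt_of_lt_of_le (lt_add_one _) (le_max_right _ _)
  have hr0 : 0 < r := lt_of_le_of_lt (norm_nonneg _) hra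
  have hrc : (r : ℂ) ≠ 0 := by exact_mod_cast hr0.ne'
  have hslit : ∀ θ : ℝ, 1 - a / r * Complex.exp (-(θ * I)) ∈ slitPlane := by
    intro θ
    rw [sub_eq_add_neg]
    apply Complex.mem_slitPlane_of_norm_lt_one
    rw [norm_neg, norm_mul, norm_div, ← neg_mul, ← Complex.ofReal_neg, Complex.norm_exp_ofReal_mul_I,
      Complex.norm_real, Real.norm_of_nonneg hr0.le, mul_one]
    exact (div_lt_one hr0).2 hra
  let k : ℝ → ℂ := fun θ => G (r * Complex.exp (θ * I)) - θ * I
    - Complex.log (1 - a / r * Complex.exp (-(θ * I)))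
  have hk : Continuous k := by
    refine (Continuous.sub (by fun_prop) (by fun_prop)).sub ?_
    exact Continuous.clog (by fun_prop) hslit
  have hke : ∀ θ, Complex.exp (k θ) = r := by
    intro θ
    simp only [k]
    rw [Complex.exp_sub, Complex.exp_sub, hGe, Complex.exp_log (slitPlane_ne_zero (hslit θ)), hR]
    · have h1 := slitPlane_ne_zero (hslit θ)
      rw [Complex.exp_neg] at h1 ⊢
      have h2 := Complex.exp_ne_zero (θ * I)
      rw [div_div, div_eq_iff (mul_ne_zero h2 h1)]
      field_simp
    · rw [norm_mul, Complex.norm_exp_ofReal_mul_I, Complex.norm_real, Real.norm_of_nonneg hr0.le, mul_one]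
      exact le_max_left _ _
  have := Complex.isCoveringMap_exp.const_of_comp hk (fun a a' => by
    apply Subtype.ext; simp [hke]) 0 (2 * Real.pi)
  simp only [k] at this
  simp [Complex.exp_neg] at this
  exact Complex.two_pi_I_ne_zero (by linear_combination this)

lemma exists_log {K : Set ℂ} (hK : IsCompact K) (hc : PolyConvex1 K) {a : ℂ}
    (ha : a ∉ K) : ∃ g : ℂ → ℂ, ContinuousOn g K ∧ ∀ z ∈ K, Complex.exp (g z) = z - a := by
  have hop : IsOpen Kᶜ := hK.isClosed.isOpen_compl
  set V := connectedComponentIn Kᶜ a with hV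
  have hVo : IsOpen V := hop.connectedComponentIn
  have haV : a ∈ V := mem_connectedComponentIn ha
  have hVc : IsPreconnected V := isPreconnected_connectedComponentIn
  have hVK : V ⊆ Kᶜ := connectedComponentIn_subset _ _
  have hfr : frontier V ⊆ K := by
    intro x hx
    by_contra hxK
    have hxW : x ∈ connectedComponentIn Kᶜ x := mem_connectedComponentIn hxK
    obtain ⟨y, hy1, hy2⟩ := mem_closure_iff.1 (frontier_subset_closure hx) _
      (hop.connectedComponentIn (x := x)) hxW
    have h1 := connectedComponentIn_eq hy1
    have h2 := connectedComponentIn_eq (show y ∈ connectedComponentIn Kᶜ a from hy2)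
    have : x ∈ V := by rw [hV, h2, ← h1]; exact hxW
    rw [hVo.frontier_eq] at hx
    exact hx.2 this
  have hub : ¬ Bornology.IsBounded V := by
    intro hb
    apply ha
    apply hc
    intro P
    refine Complex.norm_le_of_forall_mem_frontier_norm_le hb
      (f := fun z => P.eval z) ?_ ?_ (subset_closure haV)
    · exact P.differentiable.diffContOnCl
    · intro z hz
      refine le_csSup ?_ ⟨z, hfr hz, rfl⟩
      exact (hK.image (by fun_prop : Continuous fun w => ‖P.eval w‖)).bddAbove
  obtain ⟨M, hM⟩ := hK.isBounded.exists_norm_le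
  obtain ⟨b, hbV, hbM⟩ : ∃ b ∈ V, max M 0 < ‖b‖ := by
    by_contra! h
    exact hub (isBounded_iff_forall_norm_le.2 ⟨_, h⟩)
  have hb0 : b ≠ 0 := by
    rw [← norm_pos_iff]; exact lt_of_le_of_lt (le_max_right _ _) hbM
  let Q : ℂ → ℂ → Prop := fun x y => ∃ g : ℂ → ℂ, ContinuousOn g K ∧
    ∀ z ∈ K, Complex.exp (g z) * (z - y) = z - x
  have hQ : Q a b := by
    refine hVc.induction₂' Q ?_ ?_ haV hbV
    · intro x hx
      have hxK : x ∈ Kᶜ := hVK hx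
      obtain ⟨δ, hδ, hball⟩ := Metric.isOpen_iff.1 hop x hxK
      have hev : ∀ᶠ y in 𝓝[V] x, y ∈ V ∧ y ∈ Metric.ball x (δ / 2) := by
        filter_upwards [self_mem_nhdsWithin,
          mem_nhdsWithin_of_mem_nhds (Metric.ball_mem_nhds x (half_pos hδ))] with y h1 h2
        exact ⟨h1, h2⟩
      have key : ∀ x y : ℂ, y ∉ K → (∀ z ∈ K, ‖y - x‖ < ‖z - y‖) → Q x y := by
        intro x y hy h
        have hne : ∀ z ∈ K, z - y ≠ 0 := fun z hz h0 => hy (by rwa [← sub_eq_zero.1 h0])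
        have hs : ∀ z ∈ K, 1 + (y - x) / (z - y) ∈ slitPlane := by
          intro z hz
          apply Complex.mem_slitPlane_of_norm_lt_one
          rw [norm_div]
          exact (div_lt_one (norm_pos_iff.2 (hne z hz))).2 (h z hz)
        refine ⟨fun z => Complex.log (1 + (y - x) / (z - y)), ?_, ?_⟩
        · refine ContinuousOn.clog ?_ hs
          exact continuousOn_const.add (continuousOn_const.div (by fun_prop) hne)
        · intro z hz
          rw [Complex.exp_log (slitPlane_ne_zero (hs z hz))]
          have := hne z hz
          field_simp
          ring
      filter_upwards [hev] with y hy
      have hd : ‖y - x‖ < δ / 2 := by simpa [dist_eq_norm] using hy.2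
      have hz : ∀ z ∈ K, δ ≤ ‖z - x‖ := by
        intro z hz
        by_contra! h
        exact hball (by simpa [dist_eq_norm] using h) hz
      refine ⟨key x y (hVK hy.1) ?_, key y x hxK ?_⟩
      · intro z hzK
        have h1 := hz z hzK
        have h2 := norm_sub_le_norm_sub_add_norm_sub z y x
        linarith
      · intro z hzK
        have h1 := hz z hzK
        rw [norm_sub_rev]
        linarith
    · rintro x y z hx hy hz ⟨g, hg, hg'⟩ ⟨g2, hg2, hg2'⟩
      refine ⟨fun z => g z + g2 z, hg.add hg2, ?_⟩
      intro w hw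
      rw [Complex.exp_add, mul_assoc, hg2' w hw, hg' w hw]
  obtain ⟨g, hg, hg'⟩ := hQ
  have hs : ∀ z ∈ K, 1 + (-z / b) ∈ slitPlane := by
    intro z hz
    apply Complex.mem_slitPlane_of_norm_lt_one
    rw [norm_div, norm_neg, div_lt_one (norm_pos_iff.2 hb0)]
    exact lt_of_le_of_lt ((hM z hz).trans (le_max_left _ _)) hbM
  refine ⟨fun z => g z + (Complex.log (1 + (-z / b)) + Complex.log (-b)), ?_, ?_⟩
  · exact hg.add ((ContinuousOn.clog (by fun_prop) hs).add continuousOn_const)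
  · intro z hz
    rw [Complex.exp_add, Complex.exp_add, Complex.exp_log (slitPlane_ne_zero (hs z hz)),
      Complex.exp_log (neg_ne_zero.2 hb0), ← hg' z hz]
    congr 1
    field_simp
    ring

/-- the coordinate function as an element of the closure of the polynomials -/
def coordP (Y : Set ℂ) [CompactSpace Y] : (polynomialFunctions Y).topologicalClosure :=
  ⟨⟨fun z => (z : ℂ), continuous_subtype_val⟩, by
    apply Subalgebra.le_topologicalClosure
    exact ⟨Polynomial.X, by trivial, by ext; simp⟩⟩

lemma exists_log_union {Y₁ Y₂ : Set ℂ} (hY₁c : IsCompact Y₁) (hY₂c : IsCompact Y₂)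
    (hY₁ : PolyConvex1 Y₁) (hY₂ : PolyConvex1 Y₂) (hY : Y₁ ∩ Y₂ = {0}) {a : ℂ}
    (ha : a ∉ Y₁ ∪ Y₂) :
    ∃ g : ℂ → ℂ, ContinuousOn g (Y₁ ∪ Y₂) ∧ ∀ z ∈ Y₁ ∪ Y₂, Complex.exp (g z) = z - a := by
  classical
  have h0 : (0 : ℂ) ∈ Y₁ ∩ Y₂ := by rw [hY]; rfl
  obtain ⟨g₁, hg₁, he₁⟩ := exists_log hY₁c hY₁ (fun h => ha (Or.inl h))
  obtain ⟨g₂, hg₂, he₂⟩ := exists_log hY₂c hY₂ (fun h => ha (Or.inr h))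
  let G₂ : ℂ → ℂ := fun z => g₂ z + (g₁ 0 - g₂ 0)
  have hG₂ : ContinuousOn G₂ Y₂ := hg₂.add continuousOn_const
  have heG : ∀ z ∈ Y₂, Complex.exp (G₂ z) = z - a := by
    intro z hz
    simp only [G₂]
    rw [Complex.exp_add, Complex.exp_sub, he₂ z hz, he₁ 0 h0.1, he₂ 0 h0.2, div_self, mul_one]
    intro h
    apply ha
    have : a = 0 := by simpa using h
    rw [this]; exact Or.inl h0.1
  let g : ℂ → ℂ := fun z => if z ∈ Y₁ then g₁ z else G₂ z
  have e1 : ∀ z ∈ Y₁, g z = g₁ z := fun z hz => by simp [g, hz]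
  have e2 : ∀ z ∈ Y₂, g z = G₂ z := fun z hz => by
    by_cases h : z ∈ Y₁
    · have : z = 0 := by
        have : z ∈ Y₁ ∩ Y₂ := ⟨h, hz⟩
        rwa [hY] at this
      subst this
      simp [g, h, G₂]
    · simp [g, h]
  refine ⟨g, ?_, ?_⟩
  · exact (hg₁.congr e1).union_of_isClosed (hG₂.congr e2) hY₁c.isClosed hY₂c.isClosed
  · rintro z (hz | hz)
    · rw [e1 z hz, he₁ z hz]
    · rw [e2 z hz, heG z hz]

lemma spectrum_coordP {Y : Set ℂ} [CompactSpace Y] 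
    (hlog : ∀ a ∉ Y, ∃ g : ℂ → ℂ, ContinuousOn g Y ∧ ∀ z ∈ Y, Complex.exp (g z) = z - a) :
    spectrum ℂ (coordP Y) ⊆ Y := by
  classical
  intro a haH
  by_contra haY
  have hYc : IsCompact Y := isCompact_iff_compactSpace.2 inferInstance
  have hcl : IsClosed ((polynomialFunctions Y).topologicalClosure : Set C(Y, ℂ)) :=
    Subalgebra.isClosed_topologicalClosure _
  have : CompleteSpace (polynomialFunctions Y).topologicalClosure := hcl.completeSpace_coe
  set H := spectrum ℂ (coordP Y) with hH
  have hrange : spectrum ℂ ((coordP Y : C(Y, ℂ))) = Y := by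
    rw [ContinuousMap.spectrum_eq_range]
    ext z; simp [coordP]
  have hfr : frontier H ⊆ Y := by
    have := Subalgebra.frontier_spectrum (𝕜 := ℂ) (polynomialFunctions Y).topologicalClosure (coordP Y)
    rwa [hrange] at this
  have hHc : IsCompact H := spectrum.isCompact _
  obtain ⟨g, hg, hge⟩ := hlog a haY
  obtain ⟨g', hg'⟩ := ContinuousMap.exists_restrict_eq hYc.isClosed
    (⟨fun z : Y => g z, continuousOn_iff_continuous_domRestrict.1 hg⟩ : C(Y, ℂ))
  have hg'e : ∀ z ∈ Y, g' z = g z := fun z hz => by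
    have := DFunLike.congr_fun hg' ⟨z, hz⟩
    exact this
  let F : ℂ → ℂ := fun z => if z ∈ H then Complex.exp (g' z) else z - a
  have hF : Continuous F := by
    refine Continuous.if ?_ (by fun_prop) (by fun_prop)
    intro z hz
    have hzY := hfr hz
    rw [hg'e z hzY, hge z hzY]
  obtain ⟨M, hM⟩ := hHc.isBounded.exists_norm_le
  refine no_log a F hF ?_ (M + 1) ?_
  · intro z
    by_cases hz : z ∈ H
    · simp [F, hz]
    · simp only [F, hz, if_false]
      intro h
      exact hz (by rwa [sub_eq_zero.1 h])
  · intro z hz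
    have : z ∉ H := fun h => by linarith [hM z h]
    simp [F, this]

/-- Runge: simple poles off `Y` are approximable. -/
lemma inv_mem {Y : Set ℂ} [CompactSpace Y] {a : ℂ} (ha : a ∉ spectrum ℂ (coordP Y))
    (f : C(Y, ℂ)) (hf : ∀ z : Y, f z * ((z : ℂ) - a) = 1) :
    f ∈ (polynomialFunctions Y).topologicalClosure := by
  rw [spectrum.notMem_iff] at ha
  obtain ⟨u, hu⟩ := ha
  have h2 := u.inv_mul
  rw [hu] at h2
  set v := ((u⁻¹ : _ˣ) : (polynomialFunctions Y).topologicalClosure)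
  have : f = -(v : C(Y, ℂ)) := by
    ext z
    have h3 := congrArg (fun w : (polynomialFunctions Y).topologicalClosure => (w : C(Y, ℂ)) z) h2
    simp [coordP] at h3
    have h4 := hf z
    simp only [ContinuousMap.coe_neg, Pi.neg_apply]
    have h5 : (z : ℂ) - a ≠ 0 := fun h => by simp [h] at h4
    apply mul_right_cancel₀ h5
    linear_combination h4 - h3
  rw [this]
  exact neg_mem v.2

open MeasureTheory

/-- the `∂̄` operator -/
def dbar (h : ℂ → ℂ) (ζ : ℂ) : ℂ := (fderiv ℝ h ζ 1 + I * fderiv ℝ h ζ I) / 2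

lemma pompeiu {h : ℂ → ℂ} (hh : ContDiff ℝ 1 h) (hs : HasCompactSupport h) (z : ℂ) :
    ∫ ζ, dbar h ζ / (ζ - z) = -(Real.pi * h z) := by
  have hd : Differentiable ℝ h := hh.differentiable one_ne_zero
  have hf : Continuous (fderiv ℝ h) := hh.continuous_fderiv one_ne_zero
  let e : ℝ → ℂ := fun θ => Complex.exp (θ * I)
  have he : Continuous e := by fun_prop
  have he0 : ∀ θ, e θ ≠ 0 := fun θ => Complex.exp_ne_zero _
  have heI : ∀ θ, HasDerivAt e (I * e θ) θ := by
    intro θ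
    have h1 : HasDerivAt (fun t : ℝ => (t : ℂ) * I) (1 * I) θ :=
      (Complex.ofRealCLM.hasDerivAt (x := θ)).mul_const I
    have := h1.cexp
    simpa [e, mul_comm] using this
  let A : ℝ × ℝ → ℂ := fun p => fderiv ℝ h (z + p.1 * e p.2) (e p.2)
  let B : ℝ × ℝ → ℂ := fun p => fderiv ℝ h (z + p.1 * e p.2) (I * e p.2)
  have hA : Continuous A := by
    apply Continuous.clm_apply <;> fun_prop
  have hB : Continuous B := by
    apply Continuous.clm_apply <;> fun_prop
  obtain ⟨R, hR⟩ := hs.fderiv (𝕜 := ℝ) |>.isCompact.isBounded.exists_norm_le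
  obtain ⟨R', hR'⟩ := hs.isCompact.isBounded.exists_norm_le
  set M : ℝ := max (max R R' + ‖z‖ + 1) 0 with hM
  have hbig : ∀ (r θ : ℝ), M ≤ r → max R R' < ‖z + r * e θ‖ := by
    intro r θ hr
    have h1 : max R R' + ‖z‖ + 1 ≤ r := (le_max_left _ _).trans hr
    have h0 : 0 ≤ r := (le_max_right _ _).trans hr
    have h2 : ‖(r : ℂ) * e θ‖ = r := by
      simp [e, Complex.norm_exp_ofReal_mul_I, abs_of_nonneg h0]
    have h3 := norm_sub_le (z + r * e θ) z
    rw [add_sub_cancel_left, h2] at h3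
    linarith
  have hz0 : ∀ (r θ : ℝ), M ≤ r → fderiv ℝ h (z + r * e θ) = 0 := by
    intro r θ hr
    by_contra hne
    have := hR _ (subset_tsupport _ hne)
    linarith [hbig r θ hr, le_max_left R R']
  have hh0 : ∀ (r θ : ℝ), M ≤ r → h (z + r * e θ) = 0 := by
    intro r θ hr
    by_contra hne
    have := hR' _ (subset_tsupport _ hne)
    linarith [hbig r θ hr, le_max_right R R']
  have hintegr : ∀ F : ℝ × ℝ → ℂ, Continuous F → (∀ r θ, M ≤ r → F (r, θ) = 0) →
      IntegrableOn F (Ioi (0 : ℝ) ×ˢ Ioo (-Real.pi) Real.pi) := by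
    intro F hF hF0
    have h1 : IntegrableOn F (Icc (0 : ℝ) M ×ˢ Icc (-Real.pi) Real.pi) :=
      hF.continuousOn.integrableOn_compact (isCompact_Icc.prod isCompact_Icc)
    refine h1.of_forall_sdiff_eq_zero (measurableSet_Ioi.prod measurableSet_Ioo) ?_
    rintro ⟨r, θ⟩ ⟨⟨hr, hθ⟩, hn⟩
    apply hF0
    by_contra! hlt
    exact hn ⟨⟨le_of_lt hr, hlt.le⟩, ⟨hθ.1.le, hθ.2.le⟩⟩
  have hAi := hintegr A hA (fun r θ hr => by simp [A, hz0 r θ hr])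
  have hBi := hintegr B hB (fun r θ hr => by simp [B, hz0 r θ hr])
  have step1 : ∫ ζ, dbar h ζ / (ζ - z) = ∫ w, dbar h (z + w) / w := by
    rw [← integral_add_left_eq_self _ z]
    simp
  have step2 : ∫ w, dbar h (z + w) / w =
      ∫ p in Ioi (0 : ℝ) ×ˢ Ioo (-Real.pi) Real.pi, (A p + I * B p) / 2 := by
    rw [← Complex.integral_comp_polarCoord_symm]
    apply setIntegral_congr_fun (measurableSet_Ioi.prod measurableSet_Ioo)
    rintro ⟨r, θ⟩ ⟨hr, hθ⟩
    have hr : 0 < r := hr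
    have hr0 : (r : ℂ) ≠ 0 := by exact_mod_cast hr.ne'
    have e1 : Complex.polarCoord.symm (r, θ) = r * e θ := by
      rw [Complex.polarCoord_symm_apply]
      simp [e, Complex.exp_mul_I]
    simp only [e1]
    have e2 : ∀ (L : ℂ →L[ℝ] ℂ) (u : ℂ), L u = u.re * L 1 + u.im * L I := by
      intro L u
      conv_lhs => rw [← Complex.re_add_im u]
      rw [map_add, show (u.im : ℂ) * I = u.im • I by simp,
        show (u.re : ℂ) = u.re • (1 : ℂ) by simp, map_smul, map_smul]
      simp
    simp only [A, B, dbar]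
    rw [e2 _ (e θ), e2 _ (I * e θ)]
    have h1 : (e θ) = Real.cos θ + Real.sin θ * I := by simp [e, Complex.exp_mul_I]
    have h2 : (e θ).re = Real.cos θ := by simp [h1, - Complex.ofReal_cos, - Complex.ofReal_sin]
    have h3 : (e θ).im = Real.sin θ := by simp [h1, - Complex.ofReal_cos, - Complex.ofReal_sin]
    have h4 : (I * e θ).re = - Real.sin θ := by simp [h3]
    have h5 : (I * e θ).im = Real.cos θ := by simp [h2]
    rw [h2, h3, h4, h5, Complex.real_smul]
    generalize fderiv ℝ h (z + r * e θ) 1 = a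
    generalize fderiv ℝ h (z + r * e θ) I = b
    have h6 : (Real.cos θ : ℂ) ^ 2 + (Real.sin θ : ℂ) ^ 2 = 1 := by
      exact_mod_cast Real.cos_sq_add_sin_sq θ
    have h7 : e θ * (Real.cos θ - Real.sin θ * I) = 1 := by
      rw [h1]; linear_combination h6 - (Real.sin θ : ℂ) ^ 2 * I_sq
    have h8 := he0 θ
    have h9 : (e θ)⁻¹ = Real.cos θ - Real.sin θ * I := by
      exact inv_eq_of_mul_eq_one_right h7
    calc (r : ℂ) * ((a + I * b) / 2 / (r * e θ)) = (a + I * b) / 2 * (e θ)⁻¹ := by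
          field_simp
      _ = _ := by
          rw [h9]; push_cast
          linear_combination (- b * Complex.sin θ / 2) * I_sq
  rw [step1, step2]
  have step3 : ∫ p in Ioi (0 : ℝ) ×ˢ Ioo (-Real.pi) Real.pi, A p = -(2 * Real.pi * h z) := by
    rw [Measure.volume_eq_prod, ← setIntegral_prod_swap, setIntegral_prod]
    · have : ∀ θ : ℝ, ∫ r in Ioi (0 : ℝ), A (r, θ) = - h z := by
        intro θ
        have hder : ∀ r : ℝ, HasDerivAt (fun r : ℝ => h (z + r * e θ)) (A (r, θ)) r := by
          intro r
          have h1 : HasDerivAt (fun t : ℝ => z + (t : ℂ) * e θ) (e θ) r := by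
            have := ((Complex.ofRealCLM.hasDerivAt (x := r)).mul_const (e θ)).const_add z
            simpa using this
          exact (hd (z + r * e θ)).hasFDerivAt.comp_hasDerivAt r h1
        have hlim : Tendsto (fun r : ℝ => h (z + r * e θ)) atTop (𝓝 0) := by
          apply tendsto_const_nhds.congr'
          filter_upwards [eventually_ge_atTop M] with r hr
          exact (hh0 r θ hr).symm
        have hi : IntegrableOn (fun r => A (r, θ)) (Ioi 0) := by
          have h1 : IntegrableOn (fun r => A (r, θ)) (Icc 0 M) := by
            apply Continuous.integrableOn_Icc; fun_prop
          refine h1.of_forall_sdiff_eq_zero measurableSet_Ioi ?_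
          rintro r ⟨hr, hn⟩
          have : M ≤ r := by
            by_contra! hlt
            exact hn ⟨le_of_lt hr, hlt.le⟩
          simp [A, hz0 r θ this]
        rw [integral_Ioi_of_hasDerivAt_of_tendsto' (fun r _ => hder r) hi hlim]
        simp
      simp only [Prod.swap_prod_mk, this]
      simp
      ring_nf
      rw [max_eq_left (by positivity)]
      left
      push_cast; ring
    · have := hAi.swap
      exact this
  have step4 : ∫ p in Ioi (0 : ℝ) ×ˢ Ioo (-Real.pi) Real.pi, B p = 0 := by
    rw [Measure.volume_eq_prod, setIntegral_prod _ hBi]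
    apply setIntegral_eq_zero_of_forall_eq_zero
    intro r hr
    have hr : 0 < r := hr
    have hr0 : (r : ℂ) ≠ 0 := by exact_mod_cast hr.ne'
    have hder : ∀ θ : ℝ, HasDerivAt (fun θ : ℝ => (r : ℂ)⁻¹ * h (z + r * e θ)) (B (r, θ)) θ := by
      intro θ
      have h1 : HasDerivAt (fun t : ℝ => z + (r : ℂ) * e t) (r • (I * e θ)) θ := by
        have := ((heI θ).const_mul (r : ℂ)).const_add z
        simpa using this
      have h2 := ((hd (z + r * e θ)).hasFDerivAt.comp_hasDerivAt θ h1).const_mul (r : ℂ)⁻¹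
      rw [map_smul, Complex.real_smul, inv_mul_cancel_left₀ hr0] at h2
      exact h2
    rw [← integral_Ioc_eq_integral_Ioo, ← intervalIntegral.integral_of_le (by linarith [Real.pi_pos]),
      intervalIntegral.integral_eq_sub_of_hasDerivAt (fun θ _ => hder θ)]
    · simp [e, Complex.exp_neg]
    · apply Continuous.intervalIntegrable; fun_prop
  rw [integral_div, integral_add hAi (hBi.const_mul I), integral_const_mul, step3, step4]
  ring

lemma lint_ball {ρ : ℝ} (hρ : 0 < ρ) :
    ∫⁻ w in Metric.ball (0 : ℂ) ρ, ‖w‖ₑ⁻¹ ≤ ENNReal.ofReal (2 * Real.pi * ρ) := by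
  rw [← lintegral_indicator measurableSet_ball, ← Complex.lintegral_comp_polarCoord_symm]
  have hm : MeasurableSet (Ioo (0 : ℝ) ρ ×ˢ Ioo (-Real.pi) Real.pi) :=
    measurableSet_Ioo.prod measurableSet_Ioo
  calc _ ≤ ∫⁻ p in polarCoord.target,
        (Ioo (0 : ℝ) ρ ×ˢ Ioo (-Real.pi) Real.pi).indicator (fun _ => (1 : ENNReal)) p := by
        apply setLIntegral_mono' (measurableSet_Ioi.prod measurableSet_Ioo)
        rintro ⟨r, θ⟩ ⟨hr, hθ⟩
        have hr : 0 < r := hr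
        by_cases hlt : r < ρ
        · rw [indicator_of_mem (s := Ioo (0 : ℝ) ρ ×ˢ Ioo (-Real.pi) Real.pi) ⟨⟨hr, hlt⟩, hθ⟩]
          have hn : ‖Complex.polarCoord.symm (r, θ)‖ = r := by
            rw [Complex.norm_polarCoord_symm, abs_of_pos hr]
          rw [indicator_of_mem (by rw [mem_ball_zero_iff, hn]; exact hlt)]
          rw [← ofReal_norm, hn, smul_eq_mul]
          exact ENNReal.mul_inv_le_one _
        · rw [indicator_of_notMem (s := Metric.ball (0 : ℂ) ρ)]
          · simp
          · rw [mem_ball_zero_iff, Complex.norm_polarCoord_symm, abs_of_pos hr]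
            exact hlt
    _ ≤ ∫⁻ p, (Ioo (0 : ℝ) ρ ×ˢ Ioo (-Real.pi) Real.pi).indicator (fun _ => (1 : ENNReal)) p :=
        setLIntegral_le_lintegral _ _
    _ = volume (Ioo (0 : ℝ) ρ ×ˢ Ioo (-Real.pi) Real.pi) := by
        rw [lintegral_indicator hm]; simp
    _ ≤ _ := by
        rw [Measure.volume_eq_prod, Measure.prod_prod, Real.volume_Ioo, Real.volume_Ioo,
          ← ENNReal.ofReal_mul (by linarith)]
        apply ENNReal.ofReal_le_ofReal
        linarith

lemma kernel_bound {ρ : ℝ} (hρ : 0 < ρ) (z : ℂ) :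
    ∫⁻ ζ in Metric.closedBall (0 : ℂ) ρ, ‖ζ - z‖ₑ⁻¹ ≤ ENNReal.ofReal (3 * Real.pi * ρ) := by
  have h1 : ∫⁻ ζ, (Metric.ball (0 : ℂ) ρ).indicator (fun w => ‖w‖ₑ⁻¹) (ζ - z)
      ≤ ENNReal.ofReal (2 * Real.pi * ρ) := by
    rw [lintegral_sub_right_eq_self (fun ζ => (Metric.ball (0 : ℂ) ρ).indicator (fun w => ‖w‖ₑ⁻¹) ζ),
      lintegral_indicator measurableSet_ball]
    exact lint_ball hρ
  have h2 : ∫⁻ ζ in Metric.closedBall (0 : ℂ) ρ, (ENNReal.ofReal ρ)⁻¹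
      ≤ ENNReal.ofReal (Real.pi * ρ) := by
    rw [setLIntegral_const, Complex.volume_closedBall]
    have : (NNReal.pi : ENNReal) = ENNReal.ofReal Real.pi := by
      rw [← NNReal.coe_real_pi, ENNReal.ofReal_coe_nnreal]
    rw [this, ← ENNReal.ofReal_inv_of_pos hρ, ← ENNReal.ofReal_pow hρ.le,
      ← ENNReal.ofReal_mul (by positivity), ← ENNReal.ofReal_mul (by positivity)]
    apply ENNReal.ofReal_le_ofReal
    apply le_of_eq
    field_simp
  calc _ ≤ ∫⁻ ζ in Metric.closedBall (0 : ℂ) ρ,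
        ((Metric.ball (0 : ℂ) ρ).indicator (fun w => ‖w‖ₑ⁻¹) (ζ - z) + (ENNReal.ofReal ρ)⁻¹) := by
        apply lintegral_mono
        intro ζ
        by_cases h : ζ - z ∈ Metric.ball (0 : ℂ) ρ
        · simp only [indicator_of_mem h]
          exact le_self_add
        · simp only [indicator_of_notMem h, zero_add]
          rw [mem_ball_zero_iff, not_lt] at h
          rw [← ofReal_norm]
          exact ENNReal.inv_le_inv.2 (ENNReal.ofReal_le_ofReal h)
    _ = (∫⁻ ζ in Metric.closedBall (0 : ℂ) ρ, (Metric.ball (0 : ℂ) ρ).indicator (fun w => ‖w‖ₑ⁻¹) (ζ - z))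
        + ∫⁻ ζ in Metric.closedBall (0 : ℂ) ρ, (ENNReal.ofReal ρ)⁻¹ :=
        lintegral_add_right _ measurable_const
    _ ≤ ENNReal.ofReal (2 * Real.pi * ρ) + ENNReal.ofReal (Real.pi * ρ) :=
        add_le_add ((setLIntegral_le_lintegral _ _).trans h1) h2
    _ = _ := by
        rw [← ENNReal.ofReal_add (by positivity) (by positivity)]
        congr 1; ring

lemma cauchy_bound {k : ℂ → ℂ} (hk : Continuous k) {C ρ : ℝ} (hC : 0 ≤ C) (hρ : 0 < ρ)
    (hkC : ∀ ζ, ‖k ζ‖ ≤ C) (hk0 : ∀ ζ, ρ < ‖ζ‖ → k ζ = 0) (z : ℂ) :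
    Integrable (fun ζ => k ζ / (ζ - z)) ∧ ‖∫ ζ, k ζ / (ζ - z)‖ ≤ C * (3 * Real.pi * ρ) := by
  have key : ∫⁻ ζ, ‖k ζ / (ζ - z)‖ₑ ≤ ENNReal.ofReal (C * (3 * Real.pi * ρ)) := by
    calc _ ≤ ∫⁻ ζ, (Metric.closedBall (0 : ℂ) ρ).indicator
          (fun ζ => ENNReal.ofReal C * ‖ζ - z‖ₑ⁻¹) ζ := by
          apply lintegral_mono
          intro ζ
          by_cases h : ζ ∈ Metric.closedBall (0 : ℂ) ρ
          · simp only [indicator_of_mem h]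
            rw [div_eq_mul_inv, enorm_mul]
            gcongr
            · rw [← ofReal_norm]
              exact ENNReal.ofReal_le_ofReal (hkC ζ)
            · by_cases h0 : ζ - z = 0
              · simp [h0]
              · rw [enorm_inv h0]
          · simp only [indicator_of_notMem h]
            rw [mem_closedBall_zero_iff, not_le] at h
            simp [hk0 ζ h]
      _ = ENNReal.ofReal C * ∫⁻ ζ in Metric.closedBall (0 : ℂ) ρ, ‖ζ - z‖ₑ⁻¹ := by
          rw [lintegral_indicator measurableSet_closedBall, lintegral_const_mul]
          fun_prop
      _ ≤ ENNReal.ofReal C * ENNReal.ofReal (3 * Real.pi * ρ) := by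
          gcongr
          exact kernel_bound hρ z
      _ = _ := by rw [← ENNReal.ofReal_mul hC]
  have hmeas : Measurable (fun ζ => k ζ / (ζ - z)) := by
    have := hk.measurable
    fun_prop
  refine ⟨⟨hmeas.aestronglyMeasurable, lt_of_le_of_lt key ENNReal.ofReal_lt_top⟩, ?_⟩
  have h3 := (enorm_integral_le_lintegral_enorm (fun ζ => k ζ / (ζ - z))).trans key
  rw [← ofReal_norm] at h3
  exact (ENNReal.ofReal_le_ofReal_iff (by positivity)).1 h3

lemma cauchy_mem {Y : Set ℂ} [CompactSpace Y] (hY : spectrum ℂ (coordP Y) ⊆ Y)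
    {k : ℂ → ℂ} (hk : Continuous k) (hs : HasCompactSupport k)
    (hd : ∀ y ∈ Y, k =ᶠ[𝓝 y] 0) :
    ∃ f : C(Y, ℂ), f ∈ (polynomialFunctions Y).topologicalClosure ∧
      ∀ z : Y, f z = ∫ ζ, k ζ / (ζ - z) := by
  have hcont : Continuous (fun q : ℂ × Y => k q.1 / (q.1 - (q.2 : ℂ))) := by
    rw [continuous_iff_continuousAt]
    rintro ⟨ζ, z⟩
    by_cases h : ζ = z
    · have h1 : ∀ᶠ q : ℂ × Y in 𝓝 (ζ, z), k q.1 = 0 := by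
        have := hd ζ (h ▸ z.2)
        exact (continuous_fst.tendsto (ζ, z)).eventually this
      have h2 : (fun q : ℂ × Y => k q.1 / (q.1 - (q.2 : ℂ))) =ᶠ[𝓝 (ζ, z)] fun _ => 0 := by
        filter_upwards [h1] with q hq
        simp [hq]
      exact continuousAt_const.congr h2.symm
    · exact ContinuousAt.div (by fun_prop) (by fun_prop) (sub_ne_zero.2 h)
  let Ψ : ℂ → C(Y, ℂ) := fun ζ => ⟨fun z => k ζ / (ζ - (z : ℂ)),
    hcont.comp (Continuous.prodMk_right ζ)⟩
  have hΨ : Continuous Ψ := ContinuousMap.continuous_of_continuous_uncurry _ hcont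
  have hΨm : ∀ ζ, Ψ ζ ∈ (polynomialFunctions Y).topologicalClosure := by
    intro ζ
    by_cases hζ : ζ ∈ Y
    · have : Ψ ζ = 0 := by
        ext z
        simp [Ψ, (hd ζ hζ).self_of_nhds]
      rw [this]; exact zero_mem _
    · have hne : ∀ z : Y, (z : ℂ) - ζ ≠ 0 := fun z h => hζ (by rw [← sub_eq_zero.1 h]; exact z.2)
      let f : C(Y, ℂ) := ⟨fun z => ((z : ℂ) - ζ)⁻¹, Continuous.inv₀ (by fun_prop) hne⟩
      have hf : f ∈ (polynomialFunctions Y).topologicalClosure :=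
        inv_mem (fun h => hζ (hY h)) f (fun z => inv_mul_cancel₀ (hne z))
      have : Ψ ζ = (- k ζ) • f := by
        ext z
        simp only [Ψ, f, ContinuousMap.coe_mk, ContinuousMap.smul_apply, smul_eq_mul]
        rw [← neg_sub (z : ℂ) ζ, div_neg, div_eq_mul_inv, neg_mul]
      rw [this]
      exact Subalgebra.smul_mem _ hf _
  have hcl : IsClosed ((polynomialFunctions Y).topologicalClosure : Set C(Y, ℂ)) :=
    Subalgebra.isClosed_topologicalClosure _
  have : CompleteSpace (polynomialFunctions Y).topologicalClosure := hcl.completeSpace_coe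
  let Ψ' : ℂ → (polynomialFunctions Y).topologicalClosure := fun ζ => ⟨Ψ ζ, hΨm ζ⟩
  have hΨ' : Continuous Ψ' := hΨ.subtype_mk _
  have hΨs : HasCompactSupport Ψ' := by
    apply hs.mono
    intro ζ hζ hk0
    apply hζ
    apply Subtype.ext
    ext z
    simp [Ψ', Ψ, hk0]
  have hi : Integrable Ψ' := hΨ'.integrable_of_hasCompactSupport hΨs
  refine ⟨(∫ ζ, Ψ' ζ : (polynomialFunctions Y).topologicalClosure), (∫ ζ, Ψ' ζ).2, ?_⟩
  intro z
  let L : (polynomialFunctions Y).topologicalClosure →L[ℂ] ℂ :=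
    (ContinuousMap.evalCLM ℂ z).comp
      (Subalgebra.toSubmodule (polynomialFunctions Y).topologicalClosure).subtypeL
  exact (L.integral_comp_comm hi).symm

lemma dbar_mul {u v : ℂ → ℂ} {ζ : ℂ} (hu : DifferentiableAt ℝ u ζ) (hv : DifferentiableAt ℝ v ζ) :
    dbar (fun w => u w * v w) ζ = u ζ * dbar v ζ + v ζ * dbar u ζ := by
  have := (hu.hasFDerivAt.mul hv.hasFDerivAt).fderiv
  have h2 : fderiv ℝ (fun w => u w * v w) ζ = u ζ • fderiv ℝ v ζ + v ζ • fderiv ℝ u ζ := this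
  simp only [dbar, h2]
  simp
  ring

lemma norm_dbar_le (h : ℂ → ℂ) (ζ : ℂ) : ‖dbar h ζ‖ ≤ ‖fderiv ℝ h ζ‖ := by
  have h1 := (fderiv ℝ h ζ).le_opNorm 1
  have h2 := (fderiv ℝ h ζ).le_opNorm I
  have h3 := norm_add_le (fderiv ℝ h ζ 1) (I * fderiv ℝ h ζ I)
  simp only [dbar, norm_div, norm_mul, norm_I, one_mul, norm_one, mul_one] at *
  rw [show ‖(2 : ℂ)‖ = 2 by simp]
  linarith

lemma dbar_congr {u v : ℂ → ℂ} {ζ : ℂ} (h : u =ᶠ[𝓝 ζ] v) : dbar u ζ = dbar v ζ := by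
  simp only [dbar, h.fderiv_eq]

lemma continuous_dbar {u : ℂ → ℂ} (hu : ContDiff ℝ 1 u) : Continuous (dbar u) := by
  have hf : Continuous (fderiv ℝ u) := hu.continuous_fderiv one_ne_zero
  unfold dbar
  fun_prop

/-- a family of cutoff functions with controlled derivative -/
lemma exists_cutoff : ∃ C : ℝ, 0 ≤ C ∧ ∀ δ : ℝ, 0 < δ → ∃ b : ℂ → ℂ, ContDiff ℝ 1 b ∧
    (∀ ζ, ‖ζ‖ ≤ δ → b ζ = 1) ∧ (∀ ζ, 2 * δ ≤ ‖ζ‖ → b ζ = 0) ∧ (∀ ζ, ‖1 - b ζ‖ ≤ 1) ∧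
    (∀ ζ, ‖dbar b ζ‖ ≤ C / δ) := by
  let f : ContDiffBump (0 : ℂ) := ⟨1, 2, one_pos, one_lt_two⟩
  have hf : ContDiff ℝ 1 (fun ζ : ℂ => ((f ζ : ℝ) : ℂ)) :=
    Complex.ofRealCLM.contDiff.comp f.contDiff
  have hfs : HasCompactSupport (fun ζ : ℂ => ((f ζ : ℝ) : ℂ)) :=
    f.hasCompactSupport.comp_left Complex.ofReal_zero
  obtain ⟨C, hC⟩ := (hf.continuous_fderiv one_ne_zero).bounded_above_of_compact_support
    (hfs.fderiv (𝕜 := ℝ))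
  refine ⟨C, (norm_nonneg _).trans (hC 0), ?_⟩
  intro δ hδ
  have hn : ∀ ζ : ℂ, ‖δ⁻¹ • ζ‖ = ‖ζ‖ / δ := by
    intro ζ
    rw [norm_smul, norm_inv, Real.norm_of_nonneg hδ.le]
    field_simp
  refine ⟨fun ζ => ((f (δ⁻¹ • ζ) : ℝ) : ℂ), hf.comp (contDiff_const_smul δ⁻¹), ?_, ?_, ?_, ?_⟩
  · intro ζ hζ
    show ((f (δ⁻¹ • ζ) : ℝ) : ℂ) = 1
    rw [f.one_of_mem_closedBall]
    · simp
    · rw [mem_closedBall_zero_iff, hn]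
      exact (div_le_one hδ).2 hζ
  · intro ζ hζ
    show ((f (δ⁻¹ • ζ) : ℝ) : ℂ) = 0
    rw [f.zero_of_le_dist]
    · simp
    · rw [dist_zero_right, hn]
      exact (le_div_iff₀ hδ).2 hζ
  · intro ζ
    have h1 := f.nonneg (x := δ⁻¹ • ζ)
    have h2 := f.le_one (x := δ⁻¹ • ζ)
    rw [← Complex.ofReal_one, ← Complex.ofReal_sub, Complex.norm_real, Real.norm_eq_abs, abs_le]
    constructor <;> linarith
  · intro ζ
    refine (norm_dbar_le _ _).trans ?_
    have h1 : HasFDerivAt (fun ζ : ℂ => δ⁻¹ • ζ) (δ⁻¹ • ContinuousLinearMap.id ℝ ℂ) ζ :=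
      (hasFDerivAt_id ζ).const_smul δ⁻¹
    have h2 := (hf.differentiable one_ne_zero (δ⁻¹ • ζ)).hasFDerivAt.comp ζ h1
    have h3 := h2.fderiv
    rw [show (fun ζ : ℂ => ((f (δ⁻¹ • ζ) : ℝ) : ℂ)) =
      (fun ζ : ℂ => ((f ζ : ℝ) : ℂ)) ∘ (fun ζ : ℂ => δ⁻¹ • ζ) from rfl, h3]
    rw [ContinuousLinearMap.comp_smul, ContinuousLinearMap.comp_id, norm_smul, norm_inv,
      Real.norm_of_nonneg hδ.le, div_eq_inv_mul]
    gcongr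
    exact hC _

lemma approx_step {Y₁ Y₂ : Set ℂ} (hY₁c : IsCompact Y₁) (hY₂c : IsCompact Y₂)
    (hY : Y₁ ∩ Y₂ = {0}) [CompactSpace (Y₁ ∪ Y₂ : Set ℂ)]
    (hsp : spectrum ℂ (coordP (Y₁ ∪ Y₂)) ⊆ Y₁ ∪ Y₂) {ε : ℝ} (hε : 0 < ε) :
    ∃ Q : Polynomial ℂ, (∀ z ∈ Y₁, ‖Q.eval z - z‖ < ε) ∧ ∀ z ∈ Y₂, ‖Q.eval z‖ < ε := by
  obtain ⟨C, hC, hcut⟩ := exists_cutoff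
  set δ : ℝ := ε / (2 * (12 * C + 5)) with hδdef
  have hδ : 0 < δ := by positivity
  have hδε : (12 * C + 5) * δ = ε / 2 := by rw [hδdef]; field_simp
  obtain ⟨b, hb, hb1, hb0, hbn, hbd⟩ := hcut δ hδ
  obtain ⟨M, hM⟩ := hY₁c.isBounded.exists_norm_le
  set s : Set ℂ := (Y₂ \ Metric.ball 0 δ) ∪ (Metric.ball 0 (M + 1))ᶜ with hs
  set t : Set ℂ := Y₁ \ Metric.ball 0 δ with ht
  have hsc : IsClosed s := by
    refine IsClosed.union ?_ Metric.isOpen_ball.isClosed_compl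
    exact hY₂c.isClosed.sdiff Metric.isOpen_ball
  have htc : IsClosed t := hY₁c.isClosed.sdiff Metric.isOpen_ball
  have hst : Disjoint s t := by
    rw [Set.disjoint_left]
    rintro x (hx | hx) hxt
    · have : x ∈ Y₁ ∩ Y₂ := ⟨hxt.1, hx.1⟩
      rw [hY] at this
      have : x = 0 := this
      subst this
      exact hx.2 (Metric.mem_ball_self hδ)
    · apply hx
      rw [mem_ball_zero_iff]
      linarith [hM x hxt.1]
  obtain ⟨Φ, hΦs, hΦt, hΦ⟩ := exists_contMDiffMap_zero_one_nhds_of_isClosed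
    (modelWithCornersSelf ℝ ℂ) (n := 1) hsc htc hst
  have hΦd : ContDiff ℝ 1 (Φ : ℂ → ℝ) := Φ.contMDiff.contDiff
  have hΦs' : ∀ x ∈ s, ∀ᶠ w in 𝓝 x, Φ w = 0 := fun x hx =>
    (eventually_nhdsSet_iff_forall.1 hΦs) x hx
  have hΦt' : ∀ x ∈ t, ∀ᶠ w in 𝓝 x, Φ w = 1 := fun x hx =>
    (eventually_nhdsSet_iff_forall.1 hΦt) x hx
  let φ : ℂ → ℂ := fun ζ => ζ * (Φ ζ : ℂ)
  have hφ : ContDiff ℝ 1 φ := contDiff_id.mul (Complex.ofRealCLM.contDiff.comp hΦd)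
  have hφn : ∀ ζ, ‖φ ζ‖ ≤ ‖ζ‖ := by
    intro ζ
    simp only [φ]
    rw [norm_mul, Complex.norm_real, Real.norm_of_nonneg (hΦ ζ).1]
    exact mul_le_of_le_one_right (norm_nonneg _) (hΦ ζ).2
  have hφ0 : ∀ ζ ∈ s, φ =ᶠ[𝓝 ζ] 0 := by
    intro ζ hζ
    filter_upwards [hΦs' ζ hζ] with w hw
    simp [φ, hw]
  have hφcs : ∀ u : ℂ → ℂ, (∀ ζ ∈ s, u ζ = 0) → HasCompactSupport u := by
    intro u hu
    apply HasCompactSupport.intro (isCompact_closedBall (0 : ℂ) (M + 1))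
    intro ζ hζ
    apply hu
    right
    intro h
    exact hζ (Metric.ball_subset_closedBall h)
  have hdφ0 : ∀ ζ ∈ s, dbar φ ζ = 0 := by
    intro ζ hζ
    rw [dbar_congr (hφ0 ζ hζ)]
    simp [dbar]
  let h : ℂ → ℂ := fun ζ => (1 - b ζ) * φ ζ
  have h1b : ContDiff ℝ 1 (fun ζ => 1 - b ζ) := contDiff_const.sub hb
  have hh : ContDiff ℝ 1 h := h1b.mul hφ
  have hhcs : HasCompactSupport h := hφcs _ (fun ζ hζ => by
    simp [h, (hφ0 ζ hζ).self_of_nhds])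
  let k₁ : ℂ → ℂ := fun ζ => (1 - b ζ) * dbar φ ζ
  let k₂ : ℂ → ℂ := fun ζ => φ ζ * dbar b ζ
  have hk₁ : Continuous k₁ := h1b.continuous.mul (continuous_dbar hφ)
  have hk₂ : Continuous k₂ := hφ.continuous.mul (continuous_dbar hb)
  have hdb : ∀ ζ, dbar (fun ζ => 1 - b ζ) ζ = - dbar b ζ := by
    intro ζ
    simp only [dbar, fderiv_const_sub]
    simp
    ring
  have hdh : ∀ ζ, dbar h ζ = k₁ ζ - k₂ ζ := by
    intro ζ
    simp only [h, k₁, k₂]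
    rw [dbar_mul (h1b.differentiable one_ne_zero ζ) (hφ.differentiable one_ne_zero ζ), hdb]
    ring
  have hk₁s : HasCompactSupport k₁ := hφcs _ (fun ζ hζ => by simp [k₁, hdφ0 ζ hζ])
  have hk₁0 : ∀ y ∈ Y₁ ∪ Y₂, k₁ =ᶠ[𝓝 y] 0 := by
    intro y hy
    by_cases hyδ : y ∈ Metric.ball (0 : ℂ) δ
    · filter_upwards [Metric.isOpen_ball.mem_nhds hyδ] with w hw
      simp [k₁, hb1 w (mem_ball_zero_iff.1 hw).le]
    · rcases hy with hy | hy
      · filter_upwards [(hΦt' y ⟨hy, hyδ⟩).eventually_nhds] with w hw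
        have : φ =ᶠ[𝓝 w] fun ζ => ζ := by
          filter_upwards [hw] with x hx
          simp [φ, hx]
        simp only [k₁]
        rw [dbar_congr this]
        simp [dbar]
      · filter_upwards [(hΦs' y (Or.inl ⟨hy, hyδ⟩)).eventually_nhds] with w hw
        have : φ =ᶠ[𝓝 w] fun ζ => 0 := by
          filter_upwards [hw] with x hx
          simp [φ, hx]
        simp only [k₁]
        rw [dbar_congr this]
        simp [dbar]
  have hdb0 : ∀ ζ, 2 * δ < ‖ζ‖ → dbar b ζ = 0 := by
    intro ζ hζ
    have : b =ᶠ[𝓝 ζ] fun _ => 0 := by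
      filter_upwards [(isOpen_lt continuous_const continuous_norm).mem_nhds hζ] with w hw
      exact hb0 w (le_of_lt hw)
    rw [dbar_congr this]
    simp [dbar]
  have hk₂0 : ∀ ζ, 2 * δ < ‖ζ‖ → k₂ ζ = 0 := fun ζ hζ => by simp [k₂, hdb0 ζ hζ]
  have hk₂n : ∀ ζ, ‖k₂ ζ‖ ≤ 2 * C := by
    intro ζ
    by_cases hζ : 2 * δ < ‖ζ‖
    · rw [hk₂0 ζ hζ, norm_zero]; positivity
    · simp only [k₂]
      rw [norm_mul]
      calc ‖φ ζ‖ * ‖dbar b ζ‖ ≤ (2 * δ) * (C / δ) := by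
            gcongr
            · exact (hφn ζ).trans (not_lt.1 hζ)
            · exact hbd ζ
        _ = 2 * C := by field_simp
  obtain ⟨f, hfm, hf⟩ := cauchy_mem hsp hk₁ hk₁s hk₁0
  have hfh : ∀ z : (Y₁ ∪ Y₂ : Set ℂ), ‖-(Real.pi : ℂ)⁻¹ * f z - h z‖ ≤ 12 * C * δ := by
    intro z
    obtain ⟨hi2, hb2⟩ := cauchy_bound hk₂ (by positivity : 0 ≤ 2 * C) (by positivity : 0 < 2 * δ)
      hk₂n hk₂0 (z : ℂ)
    have hi1 : Integrable (fun ζ => k₁ ζ / (ζ - (z : ℂ))) := by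
      obtain ⟨C₁, hC₁⟩ := hk₁.bounded_above_of_compact_support hk₁s
      obtain ⟨ρ, hρ⟩ := hk₁s.isCompact.isBounded.exists_norm_le
      refine (cauchy_bound hk₁ (C := C₁) (ρ := max ρ 0 + 1) ((norm_nonneg _).trans (hC₁ 0))
        (by positivity) hC₁ ?_ (z : ℂ)).1
      intro ζ hζ
      by_contra hne
      have := hρ ζ (subset_tsupport _ hne)
      linarith [le_max_left ρ 0]
    have hp := pompeiu hh hhcs (z : ℂ)
    simp_rw [hdh, sub_div] at hp
    rw [integral_sub hi1 hi2, ← hf z] at hp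
    have hpi : (Real.pi : ℂ) ≠ 0 := by exact_mod_cast Real.pi_ne_zero
    have e1 : -(Real.pi : ℂ)⁻¹ * f z - h z
        = -(Real.pi : ℂ)⁻¹ * ∫ ζ, k₂ ζ / (ζ - (z : ℂ)) := by
      field_simp
      linear_combination -hp
    rw [e1, norm_mul, norm_neg, norm_inv, Complex.norm_real, Real.norm_of_nonneg Real.pi_pos.le]
    calc Real.pi⁻¹ * ‖∫ ζ, k₂ ζ / (ζ - (z : ℂ))‖
        ≤ Real.pi⁻¹ * (2 * C * (3 * Real.pi * (2 * δ))) := by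
          gcongr
      _ = 12 * C * δ := by
          have := Real.pi_ne_zero
          field_simp
          ring
  have hgm : (-(Real.pi : ℂ)⁻¹) • f ∈ (polynomialFunctions (Y₁ ∪ Y₂)).topologicalClosure :=
    Subalgebra.smul_mem _ hfm _
  obtain ⟨q, ⟨Q, -, hQ⟩, hq⟩ := Metric.mem_closure_iff.1 hgm (ε / 2) (half_pos hε)
  have hQe : ∀ z : (Y₁ ∪ Y₂ : Set ℂ), ‖-(Real.pi : ℂ)⁻¹ * f z - Q.eval (z : ℂ)‖ < ε / 2 := by
    intro z
    have h1 := (ContinuousMap.dist_apply_le_dist z).trans_lt hq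
    rw [dist_eq_norm, ← hQ] at h1
    simpa using h1
  have htri : ∀ z : (Y₁ ∪ Y₂ : Set ℂ), ‖Q.eval (z : ℂ) - h z‖ < ε / 2 + 12 * C * δ := by
    intro z
    have h1 := norm_sub_le_norm_sub_add_norm_sub (Q.eval (z : ℂ)) (-(Real.pi : ℂ)⁻¹ * f z) (h z)
    have h2 := hQe z
    rw [norm_sub_rev] at h2
    linarith [hfh z]
  have hhn : ∀ z, ‖h z‖ ≤ ‖z‖ := by
    intro z
    simp only [h]
    rw [norm_mul]
    calc _ ≤ 1 * ‖z‖ := by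
          gcongr
          · exact hbn z
          · exact hφn z
      _ = ‖z‖ := one_mul _
  refine ⟨Q, ?_, ?_⟩
  · intro z hz
    have h1 := htri ⟨z, Or.inl hz⟩
    have h2 : ‖h z - z‖ ≤ 4 * δ := by
      by_cases hzδ : 2 * δ ≤ ‖z‖
      · have hzt : z ∈ t := ⟨hz, fun hb => by rw [mem_ball_zero_iff] at hb; linarith⟩
        have : h z = z := by
          simp [h, hb0 z hzδ, φ, (hΦt' z hzt).self_of_nhds]
        rw [this, sub_self, norm_zero]; positivity
      · have := norm_sub_le (h z) z
        have := hhn z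
        push Not at hzδ
        linarith
    have h3 := norm_sub_le_norm_sub_add_norm_sub (Q.eval z) (h z) z
    simp only at h1
    linarith
  · intro z hz
    have h1 := htri ⟨z, Or.inr hz⟩
    have h2 : ‖h z‖ ≤ δ := by
      by_cases hzδ : z ∈ Metric.ball (0 : ℂ) δ
      · exact (hhn z).trans (mem_ball_zero_iff.1 hzδ).le
      · have : h z = 0 := by
          simp [h, (hφ0 z (Or.inl ⟨hz, hzδ⟩)).self_of_nhds]
        rw [this, norm_zero]; exact hδ.le
    have h3 := norm_sub_le_norm_sub_add_norm_sub (Q.eval z) (h z) 0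
    simp only [sub_zero] at h1 h3
    linarith

lemma vanish_step {n : ℕ} {X₁ X₂ : Set (Fin n → ℂ)} (hX₁c : IsCompact X₁) (hX₂c : IsCompact X₂)
    (h₁ : PolyEqC X₁) {Y₁ Y₂ : Set ℂ} (p : MvPolynomial (Fin n) ℂ)
    (hp₁ : ∀ x ∈ X₁, eval x p ∈ Y₁) (hp₂ : ∀ x ∈ X₂, eval x p ∈ Y₂)
    (h4 : ∀ x ∈ X₁, eval x p = 0 → x ∈ X₂)
    (hQ : ∀ ε : ℝ, 0 < ε →
      ∃ Q : Polynomial ℂ, (∀ z ∈ Y₁, ‖Q.eval z - z‖ < ε) ∧ ∀ z ∈ Y₂, ‖Q.eval z‖ < ε)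
    {g : (Fin n → ℂ) → ℂ} (hg : ContinuousOn g X₁) (hg0 : ∀ x ∈ X₂, g x = 0)
    {ε : ℝ} (hε : 0 < ε) :
    ∃ P : MvPolynomial (Fin n) ℂ, ∀ x ∈ X₁ ∪ X₂, ‖g x - eval x P‖ < ε := by
  have hpc : Continuous fun x : Fin n → ℂ => eval x p := MvPolynomial.continuous_eval p
  -- lower bound for `p` where `g` is large
  have hK : IsCompact (X₁ ∩ (fun x => ‖g x‖) ⁻¹' Ici (ε / 3)) := by
    have := hg.norm.preimage_isClosed_of_isClosed hX₁c.isClosed (isClosed_Ici (a := ε / 3))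
    exact hX₁c.of_isClosed_subset this inter_subset_left
  obtain ⟨m, hm, hmK⟩ := hK.exists_forall_le' (f := fun x => ‖eval x p‖ ^ 2) (a := 0)
    (by fun_prop) (by
      rintro x ⟨hx, hgx⟩
      have hgx : ε / 3 ≤ ‖g x‖ := hgx
      have : eval x p ≠ 0 := by
        intro h0
        rw [hg0 x (h4 x hx h0), norm_zero] at hgx
        linarith
      positivity)
  obtain ⟨B, hB⟩ := hX₁c.exists_bound_of_continuousOn hg
  obtain ⟨B', hB'⟩ := hX₁c.exists_bound_of_continuousOn hpc.continuousOn
  set τ : ℝ := m * ε / (3 * (|B| + 1)) with hτ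
  have hτ0 : 0 < τ := by positivity
  let h : (Fin n → ℂ) → ℂ := fun x =>
    g x * (starRingEnd ℂ) (eval x p) / ((‖eval x p‖ ^ 2 + τ : ℝ) : ℂ)
  have hden : ∀ x, ((‖eval x p‖ ^ 2 + τ : ℝ) : ℂ) ≠ 0 := by
    intro x
    have : ‖eval x p‖ ^ 2 + τ ≠ 0 := by positivity
    exact_mod_cast this
  have hh : ContinuousOn h X₁ := by
    refine ContinuousOn.div (hg.mul ?_) ?_ (fun x _ => hden x)
    · exact (Complex.continuous_conj.comp hpc).continuousOn
    · exact (Complex.continuous_ofReal.comp (by fun_prop)).continuousOn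
  have hph : ∀ x ∈ X₁, ‖h x * eval x p - g x‖ < ε / 3 := by
    intro x hx
    have hpos : 0 < ‖eval x p‖ ^ 2 + τ := by positivity
    have e1 : h x * eval x p - g x = - (g x * ((τ / (‖eval x p‖ ^ 2 + τ) : ℝ) : ℂ)) := by
      have h1 := hden x
      have h2 : (starRingEnd ℂ) (eval x p) * eval x p = ((‖eval x p‖ ^ 2 : ℝ) : ℂ) := by
        rw [mul_comm, Complex.mul_conj, Complex.normSq_eq_norm_sq]
      simp only [h]
      rw [Complex.ofReal_div]
      field_simp
      rw [h2]
      push_cast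
      ring
    rw [e1, norm_neg, norm_mul, Complex.norm_real, Real.norm_of_nonneg (by positivity)]
    by_cases hgx : ‖g x‖ < ε / 3
    · refine lt_of_le_of_lt (mul_le_of_le_one_right (norm_nonneg _) ?_) hgx
      rw [div_le_one hpos]
      nlinarith [sq_nonneg ‖eval x p‖]
    · have hmx := hmK x ⟨hx, not_lt.1 hgx⟩
      calc ‖g x‖ * (τ / (‖eval x p‖ ^ 2 + τ)) ≤ |B| * (τ / m) := by
            gcongr
            · exact (hB x hx).trans (le_abs_self B)
            · linarith
        _ < (|B| + 1) * (τ / m) := by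
            have : 0 < τ / m := by positivity
            nlinarith
        _ = ε / 3 := by
            rw [hτ]; field_simp
  obtain ⟨f, hf⟩ := h₁ h hh (ε / (3 * (|B'| + 1))) (by positivity)
  have hfc : Continuous fun x : Fin n → ℂ => eval x f := MvPolynomial.continuous_eval f
  obtain ⟨D, hD⟩ := (hX₁c.union hX₂c).exists_bound_of_continuousOn hfc.continuousOn
  obtain ⟨Q, hQ1, hQ2⟩ := hQ (ε / (3 * (|D| + 1))) (by positivity)
  have hev : ∀ x, eval x (f * Polynomial.aeval p Q) = eval x f * Q.eval (eval x p) := by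
    intro x
    rw [map_mul]
    congr 1
    rw [Polynomial.aeval_def, Polynomial.hom_eval₂, Polynomial.eval]
    congr 1
    ext c <;> simp
  have hsmall : ∀ x ∈ X₁ ∪ X₂, ∀ w : ℂ, ‖w‖ < ε / (3 * (|D| + 1)) → ‖eval x f * w‖ ≤ ε / 3 := by
    intro x hx w hw
    rw [norm_mul]
    calc _ ≤ (|D| + 1) * (ε / (3 * (|D| + 1))) := by
          gcongr
          linarith [hD x hx, le_abs_self D]
      _ = ε / 3 := by field_simp
  refine ⟨f * Polynomial.aeval p Q, ?_⟩
  rintro x (hx | hx)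
  · rw [hev]
    have e1 : g x - eval x f * Q.eval (eval x p) =
      -(h x * eval x p - g x) + ((h x - eval x f) * eval x p
        - eval x f * (Q.eval (eval x p) - eval x p)) := by ring
    rw [e1]
    have t1 := hph x hx
    have t2 := hsmall x (Or.inl hx) _ (hQ1 _ (hp₁ x hx))
    have t3 : ‖(h x - eval x f) * eval x p‖ ≤ ε / 3 := by
      rw [norm_mul]
      calc _ ≤ (ε / (3 * (|B'| + 1))) * (|B'| + 1) := by
            gcongr
            · exact (hf x hx).le
            · linarith [hB' x hx, le_abs_self B']
        _ = ε / 3 := by field_simp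
    have t4 := norm_add_le (-(h x * eval x p - g x)) ((h x - eval x f) * eval x p
        - eval x f * (Q.eval (eval x p) - eval x p))
    have t5 := norm_sub_le ((h x - eval x f) * eval x p)
      (eval x f * (Q.eval (eval x p) - eval x p))
    rw [norm_neg] at t4
    linarith
  · rw [hev, hg0 x hx, zero_sub, norm_neg]
    have := hsmall x (Or.inr hx) _ (hQ2 _ (hp₂ x hx))
    linarith

end Stout

/-- Stout's theorem. -/
theorem stmt5 {n : ℕ} (X₁ X₂ : Set (Fin n → ℂ)) (hX₁c : IsCompact X₁) (hX₂c : IsCompact X₂)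
    -- (1) `P(Xᵢ) = C(Xᵢ)`
    (h₁ : PolyEqC X₁) (h₂ : PolyEqC X₂)
    -- (2) `Y₁, Y₂` polynomially convex compacts in `ℂ`, `0` a boundary point of both,
    -- `Y₁ ∩ Y₂ = {0}`
    (Y₁ Y₂ : Set ℂ) (hY₁c : IsCompact Y₁) (hY₂c : IsCompact Y₂)
    (hY₁ : PolyConvex1 Y₁) (hY₂ : PolyConvex1 Y₂)
    (h0₁ : (0 : ℂ) ∈ frontier Y₁) (h0₂ : (0 : ℂ) ∈ frontier Y₂)
    (hY : Y₁ ∩ Y₂ = {0})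
    -- (3) `p` is a polynomial with `p(X₁) ⊆ Y₁` and `p(X₂) ⊆ Y₂`
    (p : MvPolynomial (Fin n) ℂ)
    (hp₁ : ∀ x ∈ X₁, eval x p ∈ Y₁) (hp₂ : ∀ x ∈ X₂, eval x p ∈ Y₂)
    -- (4) `p⁻¹(0) ∩ (X₁ ∪ X₂) = X₁ ∩ X₂`
    (h4 : {z | eval z p = 0} ∩ (X₁ ∪ X₂) = X₁ ∩ X₂) :
    PolyEqC (X₁ ∪ X₂) := by
  have hcs : CompactSpace (Y₂ ∪ Y₁ : Set ℂ) := isCompact_iff_compactSpace.1 (hY₂c.union hY₁c)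
  have hY' : Y₂ ∩ Y₁ = {0} := by rw [Set.inter_comm]; exact hY
  have hsp := Stout.spectrum_coordP (Y := Y₂ ∪ Y₁)
    (fun a ha => Stout.exists_log_union hY₂c hY₁c hY₂ hY₁ hY' ha)
  intro g hg ε hε
  obtain ⟨f, hf⟩ := h₁ g (hg.mono Set.subset_union_left) (ε / 2) (half_pos hε)
  have hfc : Continuous fun x : Fin n → ℂ => eval x f := MvPolynomial.continuous_eval f
  let k : (Fin n → ℂ) → ℂ := fun x => g x - eval x f
  have hk : ContinuousOn k (X₁ ∪ X₂) := hg.sub hfc.continuousOn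
  let v : (Fin n → ℂ) → ℂ := fun x =>
    k x * ((max (‖k x‖ - ε / 2) 0 / max ‖k x‖ (ε / 2) : ℝ) : ℂ)
  have hmax : ∀ x, 0 < max ‖k x‖ (ε / 2) := fun x => lt_max_of_lt_right (half_pos hε)
  have hv : ContinuousOn v (X₁ ∪ X₂) := by
    refine hk.mul (Complex.continuous_ofReal.comp_continuousOn ?_)
    refine ContinuousOn.div ?_ ?_ (fun x _ => (hmax x).ne')
    · exact ContinuousOn.sup (hk.norm.sub continuousOn_const) continuousOn_const
    · exact ContinuousOn.sup hk.norm continuousOn_const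
  have hv0 : ∀ x ∈ X₁, v x = 0 := by
    intro x hx
    have h1 : ‖k x‖ - ε / 2 ≤ 0 := by linarith [hf x hx]
    simp [v, max_eq_right h1]
  have hkv : ∀ x, ‖k x - v x‖ ≤ ε / 2 := by
    intro x
    by_cases h1 : ‖k x‖ ≤ ε / 2
    · have h2 : ‖k x‖ - ε / 2 ≤ 0 := by linarith
      have : v x = 0 := by simp [v, max_eq_right h2]
      rw [this, sub_zero]; exact h1
    · push Not at h1
      have h2 : 0 ≤ ‖k x‖ - ε / 2 := by linarith
      have h3 : 0 < ‖k x‖ := by linarith [half_pos hε]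
      have e1 : k x - v x = k x * ((ε / 2 / ‖k x‖ : ℝ) : ℂ) := by
        simp only [v]
        rw [max_eq_left h2, max_eq_left h1.le, sub_div, div_self h3.ne']
        push_cast
        ring
      rw [e1, norm_mul, Complex.norm_real, Real.norm_of_nonneg (by positivity)]
      apply le_of_eq
      field_simp
  obtain ⟨P, hP⟩ := Stout.vanish_step hX₂c hX₁c h₂ p hp₂ hp₁
    (fun x hx h0 => by
      have : x ∈ {z | eval z p = 0} ∩ (X₁ ∪ X₂) := ⟨h0, Or.inr hx⟩
      rw [h4] at this
      exact this.1)
    (fun ε hε => Stout.approx_step hY₂c hY₁c hY' hsp hε)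
    (hv.mono Set.subset_union_right) hv0 (half_pos hε)
  refine ⟨f + P, ?_⟩
  intro x hx
  have t1 := hP x (Set.union_comm X₁ X₂ ▸ hx)
  have e1 : g x - eval x (f + P) = (k x - v x) + (v x - eval x P) := by
    simp only [k, map_add]; ring
  rw [e1]
  linarith [norm_add_le (k x - v x) (v x - eval x P), hkv x]
end
end

section
/- If K is a compact, polynomially convex subset of the complex plane, then every boundary point of K is a peak point for the algebra P(K); that is, for every x in the topological boundary of K there exists f ∈ P(K) with f(x) = 1 and |f(y)| < 1 for all y ∈ K with y ≠ x. -/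
open Complex

noncomputable section

/-- `f` belongs to `P(K)` for a compact set `K ⊆ ℂ`: `f` is continuous on `K` and is
a uniform limit on `K` of polynomials in one complex variable. -/
def MemPolyAlg (K : Set ℂ) (f : ℂ → ℂ) : Prop :=
  ContinuousOn f K ∧
    ∀ ε : ℝ, 0 < ε → ∃ P : Polynomial ℂ, ∀ x ∈ K, ‖f x - P.eval x‖ < ε

/-- Uniform approximability by polynomials on `K`. -/
def UA (K : Set ℂ) (f : ℂ → ℂ) : Prop :=
  ∀ ε : ℝ, 0 < ε → ∃ P : Polynomial ℂ, ∀ x ∈ K, ‖f x - P.eval x‖ < ε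

theorem UA.poly (K : Set ℂ) (P : Polynomial ℂ) : UA K (fun z => P.eval z) := by
  intro ε hε
  exact ⟨P, fun x _ => by simpa using hε⟩

theorem UA.const (K : Set ℂ) (c : ℂ) : UA K (fun _ => c) := by
  simpa using UA.poly K (Polynomial.C c)

theorem UA.ident (K : Set ℂ) : UA K (fun z => z) := by
  simpa using UA.poly K Polynomial.X

theorem UA.add {K : Set ℂ} {f g : ℂ → ℂ} (hf : UA K f) (hg : UA K g) :
    UA K (fun z => f z + g z) := by
  intro ε hε
  obtain ⟨P, hP⟩ := hf (ε / 2) (by positivity)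
  obtain ⟨Q, hQ⟩ := hg (ε / 2) (by positivity)
  refine ⟨P + Q, fun x hx => ?_⟩
  have : f x + g x - (P + Q).eval x = (f x - P.eval x) + (g x - Q.eval x) := by
    rw [Polynomial.eval_add]; ring
  rw [this]
  have := norm_add_le (f x - P.eval x) (g x - Q.eval x)
  linarith [hP x hx, hQ x hx]

theorem UA.lim {K : Set ℂ} {f : ℂ → ℂ}
    (h : ∀ ε : ℝ, 0 < ε → ∃ g, UA K g ∧ ∀ x ∈ K, ‖f x - g x‖ ≤ ε) : UA K f := by
  intro ε hε
  obtain ⟨g, hg, hfg⟩ := h (ε / 2) (by positivity)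
  obtain ⟨P, hP⟩ := hg (ε / 2) (by positivity)
  refine ⟨P, fun x hx => ?_⟩
  have := norm_sub_le_norm_sub_add_norm_sub (f x) (g x) (P.eval x)
  linarith [hP x hx, hfg x hx]

theorem UA.congr {K : Set ℂ} {f g : ℂ → ℂ} (hf : UA K f) (h : ∀ z ∈ K, g z = f z) :
    UA K g :=
  UA.lim fun ε hε => ⟨f, hf, fun x hx => by rw [h x hx]; simpa using hε.le⟩

theorem UA.continuousOn {K : Set ℂ} {f : ℂ → ℂ} (hf : UA K f) : ContinuousOn f K := by
  refine continuousOn_of_uniform_approx_of_continuousOn fun u hu => ?_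
  obtain ⟨ε, hε, h⟩ := Metric.mem_uniformity_dist.1 hu
  obtain ⟨P, hP⟩ := hf ε hε
  refine ⟨fun z => P.eval z, P.continuous.continuousOn, fun y hy => h ?_⟩
  rw [dist_eq_norm]
  exact hP y hy

theorem UA.bdd {K : Set ℂ} (hK : IsCompact K) {f : ℂ → ℂ} (hf : UA K f) :
    ∃ C : ℝ, 0 < C ∧ ∀ z ∈ K, ‖f z‖ ≤ C := by
  obtain ⟨C, hC⟩ := hK.exists_bound_of_continuousOn hf.continuousOn
  exact ⟨max C 1, by positivity, fun z hz => (hC z hz).trans (le_max_left _ _)⟩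

theorem UA.mul {K : Set ℂ} (hK : IsCompact K) {f g : ℂ → ℂ} (hf : UA K f) (hg : UA K g) :
    UA K (fun z => f z * g z) := by
  intro ε hε
  obtain ⟨C, hC, hfC⟩ := hf.bdd hK
  obtain ⟨D, hD, hgD⟩ := hg.bdd hK
  set δ : ℝ := min 1 (ε / (C + D + 2)) with hδ
  have hδ0 : 0 < δ := lt_min one_pos (by positivity)
  have hδ1 : δ ≤ 1 := min_le_left _ _
  have hδ2 : δ * (C + D + 2) ≤ ε := by
    have : δ ≤ ε / (C + D + 2) := min_le_right _ _
    rwa [le_div_iff₀ (by positivity)] at this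
  obtain ⟨P, hP⟩ := hf δ hδ0
  obtain ⟨Q, hQ⟩ := hg δ hδ0
  refine ⟨P * Q, fun x hx => ?_⟩
  have e : f x * g x - (P * Q).eval x
      = (f x - P.eval x) * g x + (f x - (f x - P.eval x)) * (g x - Q.eval x) := by
    rw [Polynomial.eval_mul]; ring
  rw [e]
  have h1 := norm_add_le ((f x - P.eval x) * g x) ((f x - (f x - P.eval x)) * (g x - Q.eval x))
  rw [norm_mul, norm_mul] at h1
  have h2 := norm_sub_le (f x) (f x - P.eval x)
  have h3 : ‖f x - P.eval x‖ * ‖g x‖ ≤ δ * D :=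
    mul_le_mul (hP x hx).le (hgD x hx) (norm_nonneg _) hδ0.le
  have h4 : ‖f x - (f x - P.eval x)‖ * ‖g x - Q.eval x‖ ≤ (C + 1) * δ :=
    mul_le_mul (by linarith [hP x hx, hfC x hx]) (hQ x hx).le (norm_nonneg _) (by positivity)
  nlinarith

theorem UA.pow {K : Set ℂ} (hK : IsCompact K) {f : ℂ → ℂ} (hf : UA K f) (n : ℕ) :
    UA K (fun z => f z ^ n) := by
  induction n with
  | zero => simpa using UA.const K 1
  | succ n ih => simpa [pow_succ] using ih.mul hK hf

theorem UA.sum {K : Set ℂ} {f : ℕ → ℂ → ℂ} (hf : ∀ n, UA K (f n)) (n : ℕ) :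
    UA K (fun z => ∑ i ∈ Finset.range n, f i z) := by
  induction n with
  | zero => simpa using UA.const K 0
  | succ n ih => simpa [Finset.sum_range_succ] using ih.add (hf n)

theorem UA.comp {K : Set ℂ} (hK : IsCompact K) {u : ℂ → ℂ} (hu : UA K u) {ρ : ℝ}
    (hρ1 : ρ < 1) (hb : ∀ z ∈ K, ‖u z‖ ≤ ρ) {F : ℂ → ℂ}
    (hF : DifferentiableOn ℂ F (Metric.ball 0 1)) : UA K (fun z => F (u z)) := by
  obtain ⟨r, hr, hr1⟩ : ∃ r : NNReal, max ρ 0 < r ∧ (r : ℝ) < 1 := by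
    obtain ⟨r, h1, h2⟩ := exists_between (max_lt hρ1 one_pos)
    exact ⟨⟨r, (le_max_right _ _).trans h1.le⟩, h1, h2⟩
  obtain ⟨R, hR, hR1⟩ : ∃ R : NNReal, r < R ∧ R < 1 :=
    exists_between (by exact_mod_cast hr1)
  have hR1' : (R : ℝ) < 1 := by exact_mod_cast hR1
  have hps := (hF.mono (Metric.closedBall_subset_ball hR1' :
    Metric.closedBall (0 : ℂ) (R : ℝ) ⊆ _)).hasFPowerSeriesOnBall (lt_of_le_of_lt r.2 hR)
  have ht := hps.tendstoUniformlyOn (r' := r) (by exact_mod_cast hR)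
  refine UA.lim fun ε hε => ?_
  obtain ⟨n, hn⟩ := ((Metric.tendstoUniformlyOn_iff.1 ht) ε hε).exists
  refine ⟨fun z => (cauchyPowerSeries F 0 R).partialSum n (u z), ?_, fun z hz => ?_⟩
  · unfold FormalMultilinearSeries.partialSum
    refine UA.sum (f := fun i z => (cauchyPowerSeries F 0 R i) fun _ => u z) (fun i => ?_) n
    have : (fun z => (cauchyPowerSeries F 0 R i) fun _ => u z)
        = fun z => u z ^ i * (cauchyPowerSeries F 0 R).coeff i := by
      funext z
      rw [FormalMultilinearSeries.apply_eq_pow_smul_coeff, smul_eq_mul]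
    rw [this]
    exact (hu.pow hK i).mul hK (UA.const K _)
  · have := hn (u z) (by
      rw [mem_ball_zero_iff]
      exact (hb z hz).trans_lt ((le_max_left _ _).trans_lt hr))
    rw [dist_eq_norm, zero_add] at this
    exact this.le

theorem UA.inv_sub {K : Set ℂ} (hKc : IsCompact K) (hK : PolyConvex1 K) {a : ℂ}
    (ha : a ∉ K) : UA K (fun z => (z - a)⁻¹) := by
  have : ∃ P : Polynomial ℂ, sSup ((fun w => ‖P.eval w‖) '' K) < ‖P.eval a‖ := by
    by_contra! h
    exact ha (hK a h)
  obtain ⟨P, hP⟩ := this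
  set S := sSup ((fun w => ‖P.eval w‖) '' K) with hS
  have hS0 : 0 ≤ S := Real.sSup_nonneg (by rintro _ ⟨w, _, rfl⟩; exact norm_nonneg _)
  have hle : ∀ z ∈ K, ‖P.eval z‖ ≤ S := fun z hz =>
    le_csSup (hKc.image (P.continuous.norm)).bddAbove ⟨z, hz, rfl⟩
  set c := P.eval a with hc
  have hc0 : 0 < ‖c‖ := hS0.trans_lt hP
  have hcne : c ≠ 0 := norm_pos_iff.1 hc0
  have hu : UA K (fun z => c⁻¹ * P.eval z) := (UA.const K _).mul hKc (UA.poly K P)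
  have hF : DifferentiableOn ℂ (fun w : ℂ => (1 - w)⁻¹) (Metric.ball 0 1) := by
    refine DifferentiableOn.inv (by fun_prop) fun w hw h => ?_
    rw [mem_ball_zero_iff] at hw
    have : w = 1 := (sub_eq_zero.1 h).symm
    simp [this] at hw
  have h1 := hu.comp hKc (ρ := S / ‖c‖) ((div_lt_one hc0).2 hP) (fun z hz => by
    rw [norm_mul, norm_inv, inv_mul_eq_div]
    gcongr
    exact hle z hz) hF
  obtain ⟨Q, hQ⟩ : (Polynomial.X - Polynomial.C a) ∣ P - Polynomial.C c := by
    rw [Polynomial.dvd_iff_isRoot]; simp [hc]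
  refine ((UA.poly K (Polynomial.C (-c⁻¹) * Q)).mul hKc h1).congr fun z hz => ?_
  have e := congrArg (Polynomial.eval z) hQ
  simp only [Polynomial.eval_sub, Polynomial.eval_mul, Polynomial.eval_X, Polynomial.eval_C] at e
  have hza : z - a ≠ 0 := sub_ne_zero.2 (by rintro rfl; exact ha hz)
  have hPc : c - P.eval z ≠ 0 := by
    intro h
    have := hle z hz
    rw [← sub_eq_zero.1 h] at this
    linarith
  have h2 : 1 - c⁻¹ * P.eval z = c⁻¹ * (c - P.eval z) := by field_simp
  rw [h2]
  simp only [Polynomial.eval_mul, Polynomial.eval_C]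
  field_simp
  linear_combination -e

/-- Local square roots. -/
theorem UA.sqrt {K : Set ℂ} (hKc : IsCompact K) {u : ℂ → ℂ} (hu : UA K u) {ρ : ℝ}
    (hρ1 : ρ < 1) (hb : ∀ z ∈ K, ‖u z‖ ≤ ρ) :
    ∃ s : ℂ → ℂ, UA K s ∧ ∀ z ∈ K, s z ^ 2 = 1 + u z ∧ 0 < (s z).re := by
  have hsl : ∀ w : ℂ, ‖w‖ < 1 → 1 + w ∈ Complex.slitPlane := fun w hw =>
    Complex.mem_slitPlane_of_norm_lt_one hw
  refine ⟨fun z => Complex.exp (Complex.log (1 + u z) / 2),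
    hu.comp hKc hρ1 hb (F := fun w => Complex.exp (Complex.log (1 + w) / 2)) ?_,
    fun z hz => ⟨?_, ?_⟩⟩
  · refine DifferentiableOn.cexp (DifferentiableOn.div_const (DifferentiableOn.clog (by fun_prop) ?_) 2)
    intro w hw
    exact hsl w (by simpa using hw)
  · have hw := hsl _ ((hb z hz).trans_lt hρ1)
    rw [← Complex.exp_nat_mul]
    have : ((2 : ℕ) : ℂ) * (Complex.log (1 + u z) / 2) = Complex.log (1 + u z) := by
      push_cast; ring
    rw [this, Complex.exp_log (Complex.slitPlane_ne_zero hw)]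
  · rw [Complex.exp_re]
    refine mul_pos (Real.exp_pos _) (Real.cos_pos_of_mem_Ioo ?_)
    have hw := hsl _ ((hb z hz).trans_lt hρ1)
    have e : (Complex.log (1 + u z) / 2).im = Complex.arg (1 + u z) / 2 := by
      rw [← Complex.log_im]
      exact Complex.div_ofNat_im (Complex.log (1 + u z)) 2
    rw [e]
    have h1 := Complex.arg_le_pi (1 + u z)
    have h2 := Complex.neg_pi_lt_arg (1 + u z)
    have h3 := (Complex.mem_slitPlane_iff_arg.1 hw).1
    have h4 := lt_of_le_of_ne h1 h3
    constructor <;> linarith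

/-- `b` is reachable from `a`: there is a square root of `(z - a) / (z - b)` in `P(K)`
which is the principal one far away from `x`. -/
def Reach (K : Set ℂ) (x : ℂ) (r : ℝ) (a b : ℂ) : Prop :=
  ∃ s : ℂ → ℂ, UA K s ∧ ∀ z ∈ K, s z ^ 2 = (z - a) / (z - b) ∧
    (4 * r ≤ ‖z - x‖ → 0 < (s z).re)

theorem re_mul_pos_aux {s t : ℂ} (hs : 0 < s.re) (ht : 0 < t.re)
    (hs2 : 0 < (s ^ 2).re) (ht2 : 0 < (t ^ 2).re) : 0 < (s * t).re := by
  simp only [pow_two, Complex.mul_re] at *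
  have h1 : |s.im| < s.re := abs_lt_of_sq_lt_sq (by nlinarith) hs.le
  have h2 : |t.im| < t.re := abs_lt_of_sq_lt_sq (by nlinarith) ht.le
  have h3 : |s.im| * |t.im| < s.re * t.re :=
    mul_lt_mul'' h1 h2 (abs_nonneg _) (abs_nonneg _)
  rw [← abs_mul] at h3
  linarith [le_abs_self (s.im * t.im)]

theorem re_pos_aux {u : ℂ} (hu : ‖u‖ < 1) : 0 < (1 + u).re := by
  have := (abs_le.1 (Complex.abs_re_le_norm u)).1
  simp only [Complex.add_re, Complex.one_re]
  linarith

theorem Reach.step {K : Set ℂ} (hKc : IsCompact K) (hK : PolyConvex1 K) {x : ℂ} {r : ℝ}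
    {a b b' : ℂ} (ha : ‖a - x‖ < r) (hb : ‖b - x‖ < r) (hbK : b ∉ K) (hbK' : b' ∉ K)
    (h : Reach K x r a b) (hd : ∀ z ∈ K, ‖b' - b‖ ≤ 2⁻¹ * ‖z - b'‖) :
    Reach K x r a b' := by
  obtain ⟨s, hs, hs2⟩ := h
  have hz' : ∀ z ∈ K, z - b' ≠ 0 := fun z hz => sub_ne_zero.2 (by rintro rfl; exact hbK' hz)
  have hz0 : ∀ z ∈ K, z - b ≠ 0 := fun z hz => sub_ne_zero.2 (by rintro rfl; exact hbK hz)
  have hub : ∀ z ∈ K, ‖(b' - b) * (z - b')⁻¹‖ ≤ (2⁻¹ : ℝ) := fun z hz => by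
    rw [norm_mul, norm_inv, ← div_eq_mul_inv, div_le_iff₀ (norm_pos_iff.2 (hz' z hz))]
    exact hd z hz
  obtain ⟨t, ht, ht2⟩ := UA.sqrt hKc ((UA.const K (b' - b)).mul hKc (UA.inv_sub hKc hK hbK'))
    (ρ := 2⁻¹) (by norm_num) hub
  refine ⟨fun z => s z * t z, hs.mul hKc ht, fun z hz => ⟨?_, fun hfar => ?_⟩⟩
  · have h1 := hz' z hz
    have h2 := hz0 z hz
    rw [mul_pow, (hs2 z hz).1, (ht2 z hz).1]
    field_simp
    ring
  · refine re_mul_pos_aux ((hs2 z hz).2 hfar) (ht2 z hz).2 ?_ ?_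
    · have e : (z - a) / (z - b) = 1 + (b - a) / (z - b) := by
        have h2 := hz0 z hz
        field_simp
        ring
      rw [(hs2 z hz).1, e]
      apply re_pos_aux
      rw [norm_div, div_lt_one (norm_pos_iff.2 (hz0 z hz))]
      have h1 := norm_sub_le_norm_sub_add_norm_sub b x a
      have h2 := norm_sub_le_norm_sub_add_norm_sub z b x
      rw [norm_sub_rev x a] at h1
      have h3 := norm_nonneg (a - x)
      linarith
    · rw [(ht2 z hz).1]
      exact re_pos_aux ((hub z hz).trans_lt (by norm_num))

theorem subset_of_frontier {K : Set ℂ} (hKc : IsCompact K) (hK : PolyConvex1 K)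
    {W : Set ℂ} (hW : Bornology.IsBounded W) (hf : frontier W ⊆ K) : W ⊆ K := by
  intro w hw
  refine hK w fun P => ?_
  refine Complex.norm_le_of_forall_mem_frontier_norm_le (f := fun z => P.eval z) hW
    P.differentiable.diffContOnCl (fun z hz => ?_) (subset_closure hw)
  exact le_csSup (hKc.image (P.continuous.norm)).bddAbove ⟨z, hf hz, rfl⟩

theorem exists_reach {K : Set ℂ} (hKc : IsCompact K) (hK : PolyConvex1 K) {x : ℂ}
    (hx : x ∈ frontier K) {r : ℝ} (hr : 0 < r) :
    ∃ a b : ℂ, a ∉ K ∧ b ∉ K ∧ ‖a - x‖ < r ∧ ‖b - x‖ < r ∧ r / 2 ≤ ‖b - a‖ ∧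
      Reach K x r a b := by
  rw [frontier_eq_closure_inter_closure] at hx
  obtain ⟨a, haK, hax⟩ := Metric.mem_closure_iff.1 hx.2 (r / 4) (by positivity)
  rw [dist_comm, dist_eq_norm] at hax
  have har : ‖a - x‖ < r := by linarith
  set W : Set ℂ := {b | b ∉ K ∧ ‖b - x‖ < r ∧ Reach K x r a b} with hWdef
  have haW : a ∈ W := by
    refine ⟨haK, har, fun _ => 1, UA.const K 1, fun z hz => ⟨?_, fun _ => by simp⟩⟩
    have : z - a ≠ 0 := sub_ne_zero.2 (by rintro rfl; exact haK hz)
    rw [div_self this]; simp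
  by_contra! hcon
  have hsm : ∀ b ∈ W, ‖b - x‖ ≤ 3 * r / 4 := by
    intro b hb
    by_contra! h
    have h1 := norm_sub_le_norm_sub_add_norm_sub b a x
    exact hcon a b haK hb.1 har hb.2.1 (by linarith) hb.2.2
  have hWsub : W ⊆ Metric.closedBall x (3 * r / 4) := fun b hb => by
    rw [Metric.mem_closedBall, dist_eq_norm]; exact hsm b hb
  refine haK (subset_of_frontier hKc hK (Metric.isBounded_closedBall.subset hWsub) ?_ haW)
  intro p hp
  by_contra hpK
  obtain ⟨d, hd, hball⟩ := Metric.isOpen_iff.1 hKc.isClosed.isOpen_compl p hpK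
  have hdist : ∀ z ∈ K, d ≤ ‖z - p‖ := by
    intro z hz
    by_contra! h
    exact hball (by rwa [Metric.mem_ball, dist_eq_norm]) hz
  have hpx : ‖p - x‖ < r := by
    have := closure_minimal hWsub Metric.isClosed_closedBall hp.1
    rw [Metric.mem_closedBall, dist_eq_norm] at this
    linarith
  obtain ⟨b, hbW, hbp⟩ := Metric.mem_closure_iff.1 hp.1 (d / 2) (by positivity)
  rw [dist_eq_norm] at hbp
  have hpR : Reach K x r a p := Reach.step hKc hK har hbW.2.1 hbW.1 hpK hbW.2.2
    (fun z hz => by linarith [hdist z hz])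
  apply hp.2
  rw [mem_interior_iff_mem_nhds, Metric.mem_nhds_iff]
  refine ⟨min (d / 3) (r - ‖p - x‖), lt_min (by positivity) (by linarith), fun q hq => ?_⟩
  rw [Metric.mem_ball, dist_eq_norm, lt_min_iff] at hq
  have hqK : q ∉ K := fun h => by linarith [hdist q h, hq.1]
  have h1 := norm_sub_le_norm_sub_add_norm_sub q p x
  refine ⟨hqK, by linarith, Reach.step hKc hK har hpx hpK hqK hpR fun z hz => ?_⟩
  have h2 := norm_sub_le_norm_sub_add_norm_sub z q p
  linarith [hdist z hz, hq.1]

theorem exists_local {K : Set ℂ} (hKc : IsCompact K) (hK : PolyConvex1 K) {x : ℂ}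
    (hx : x ∈ frontier K) {η : ℝ} (hη : 0 < η) :
    ∃ F : ℂ → ℂ, UA K F ∧ F x = 1 ∧ (∀ z ∈ K, ‖F z‖ ≤ 2000) ∧
      ∀ z ∈ K, η ≤ ‖z - x‖ → ‖F z‖ ≤ 1 / 4 := by
  obtain ⟨r, hr⟩ : ∃ r : ℝ, r = η / 56 := ⟨_, rfl⟩
  have hr0 : 0 < r := by rw [hr]; positivity
  obtain ⟨a, b, haK, hbK, har, hbr, hab, s, hs, hs2⟩ := exists_reach hKc hK hx hr0
  have hD0 : 0 < ‖b - a‖ := by linarith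
  have hD : b - a ≠ 0 := norm_pos_iff.1 hD0
  have hD2 : ‖b - a‖ ≤ 2 * r := by
    have h1 := norm_sub_le_norm_sub_add_norm_sub b x a
    rw [norm_sub_rev x a] at h1
    linarith
  set F : ℂ → ℂ := fun z => 1 - 4 * (z - x) * (z - b) * (s z - 1) ^ 2 / (b - a) ^ 2 with hF
  have key : ∀ z ∈ K, (z - b) * (s z - 1) * (s z + 1) = b - a := by
    intro z hz
    have h0 : z - b ≠ 0 := sub_ne_zero.2 (by rintro rfl; exact hbK hz)
    have h1 := (hs2 z hz).1
    rw [eq_div_iff h0] at h1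
    linear_combination h1
  have far : ∀ z ∈ K, 4 * r ≤ ‖z - x‖ → ‖F z‖ * ‖z - x‖ ≤ 14 * r := by
    intro z hz hzr
    have hk := key z hz
    have hσ : 1 ≤ ‖s z + 1‖ := by
      have h1 := (hs2 z hz).2 hzr
      have h2 := Complex.re_le_norm (s z + 1)
      simp only [Complex.add_re, Complex.one_re] at h2
      linarith
    have e : F z * (z - b) * (s z + 1) ^ 3
        = (b - a) * ((s z + 1) + 2) - 4 * (b - x) * (s z + 1) := by
      have hne : (z - b) * (s z - 1) * (s z + 1) ≠ 0 := hk ▸ hD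
      have h1 : z - b ≠ 0 := by rintro h; simp [h] at hne
      have h2 : s z - 1 ≠ 0 := by rintro h; simp [h] at hne
      have h3 : s z + 1 ≠ 0 := by rintro h; simp [h] at hne
      simp only [hF]
      rw [← hk]
      field_simp
      ring
    have e' := congrArg norm e
    rw [norm_mul, norm_mul, norm_pow] at e'
    have h1 := norm_sub_le ((b - a) * ((s z + 1) + 2)) (4 * (b - x) * (s z + 1))
    have h2 := norm_add_le (s z + 1) 2
    rw [norm_mul, norm_mul, norm_mul, ← e'] at h1
    simp only [Complex.norm_ofNat] at h1 h2
    set σ := ‖s z + 1‖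
    have h3 : ‖b - a‖ * ‖s z + 1 + 2‖ ≤ 2 * r * (3 * σ) :=
      mul_le_mul hD2 (by linarith) (norm_nonneg _) (by positivity)
    have h4 : 4 * ‖b - x‖ * σ ≤ 4 * r * σ := by gcongr
    have h5 : ‖F z‖ * ‖z - b‖ * σ ^ 3 ≤ (10 * r) * σ ^ 3 := by
      have : σ ≤ σ ^ 3 := le_self_pow₀ hσ (by norm_num)
      nlinarith
    have h6 : ‖F z‖ * ‖z - b‖ ≤ 10 * r := le_of_mul_le_mul_right h5 (by positivity)
    have h7 := norm_sub_le_norm_sub_add_norm_sub z b x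
    have h8 : 3 / 4 * ‖z - x‖ ≤ ‖z - b‖ := by linarith
    have h9 := mul_le_mul_of_nonneg_left h8 (norm_nonneg (F z))
    linarith
  refine ⟨F, ?_, by simp [hF], fun z hz => ?_, fun z hz hzη => ?_⟩
  · have hsub : ∀ c : ℂ, UA K (fun z => z - c) := fun c =>
      ((UA.ident K).add (UA.const K (-c))).congr fun z _ => sub_eq_add_neg _ _
    have hs1 : UA K (fun z => s z + (-1)) := hs.add (UA.const K (-1))
    have h := (UA.const K 1).add ((((UA.const K (-4 / (b - a) ^ 2)).mul hKc (hsub x)).mul hKc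
      (hsub b)).mul hKc (hs1.pow hKc 2))
    refine h.congr fun z _ => ?_
    simp only [hF]
    field_simp
    ring
  · by_cases hzr : 4 * r ≤ ‖z - x‖
    · have h1 := far z hz hzr
      have h2 := mul_le_mul_of_nonneg_left hzr (norm_nonneg (F z))
      by_contra! h3
      nlinarith
    · push Not at hzr
      have hk := key z hz
      have hk' := congrArg norm hk
      rw [norm_mul, norm_mul] at hk'
      have h1 := norm_sub_le_norm_sub_add_norm_sub z x b
      rw [norm_sub_rev x b] at h1
      have h2 : ‖s z - 1‖ ≤ ‖s z + 1‖ + 2 := by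
        have : s z - 1 = (s z + 1) - 2 := by ring
        rw [this]
        simpa using norm_sub_le (s z + 1) 2
      have hσ : 1 / 25 ≤ ‖s z + 1‖ := by
        by_contra! h3
        have h4 : ‖z - b‖ * ‖s z - 1‖ ≤ (5 * r) * (51 / 25) :=
          mul_le_mul (by linarith) (by linarith) (norm_nonneg _) (by positivity)
        have h5 : ‖z - b‖ * ‖s z - 1‖ * ‖s z + 1‖ ≤ (5 * r) * (51 / 25) * (1 / 25) :=
          mul_le_mul h4 h3.le (norm_nonneg _) (by positivity)
        linarith
      have e : (F z - 1) * (b - a) * (s z + 1) = - (4 * (z - x) * (s z - 1)) := by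
        have hne : (z - b) * (s z - 1) * (s z + 1) ≠ 0 := hk ▸ hD
        have h1 : z - b ≠ 0 := by rintro h; simp [h] at hne
        have h2 : s z - 1 ≠ 0 := by rintro h; simp [h] at hne
        have h3 : s z + 1 ≠ 0 := by rintro h; simp [h] at hne
        simp only [hF]
        rw [← hk]
        field_simp
        ring
      have e' := congrArg norm e
      rw [norm_neg, norm_mul, norm_mul, norm_mul, norm_mul] at e'
      simp only [Complex.norm_ofNat] at e'
      have h6 : ‖s z - 1‖ ≤ 51 * ‖s z + 1‖ := by linarith
      have h7 : 4 * ‖z - x‖ * ‖s z - 1‖ ≤ 4 * (4 * r) * (51 * ‖s z + 1‖) := by gcongr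
      have h8 : ‖F z - 1‖ * ‖b - a‖ * ‖s z + 1‖ ≤ (816 * r) * ‖s z + 1‖ := by linarith
      have h9 : ‖F z - 1‖ * ‖b - a‖ ≤ 816 * r := le_of_mul_le_mul_right h8 (by linarith)
      have h10 := mul_le_mul_of_nonneg_left hab (norm_nonneg (F z - 1))
      have h11 : ‖F z - 1‖ ≤ 1632 := by
        by_contra! h
        nlinarith
      have h12 := norm_add_le (F z - 1) 1
      simp only [sub_add_cancel, norm_one] at h12
      linarith
  · have h1 := far z hz (by linarith)
    by_contra! h2
    have h3 : 1 / 4 * η < ‖F z‖ * ‖z - x‖ := by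
      have := mul_le_mul_of_nonneg_left hzη (norm_nonneg (F z))
      nlinarith
    linarith

/-- Bishop's peak point criterion. -/
theorem exists_peak_s6 {K : Set ℂ} {x : ℂ} (hxK : x ∈ K) {M : ℝ} (hM : 1 ≤ M)
    (H : ∀ η : ℝ, 0 < η → ∃ F : ℂ → ℂ, UA K F ∧ F x = 1 ∧ (∀ z ∈ K, ‖F z‖ ≤ M) ∧
      ∀ z ∈ K, η ≤ ‖z - x‖ → ‖F z‖ ≤ 1 / 4)
    (hKc : IsCompact K) :
    ∃ f : ℂ → ℂ, UA K f ∧ f x = 1 ∧ ∀ y ∈ K, y ≠ x → ‖f y‖ < 1 := by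
  obtain ⟨μ, hμ⟩ : ∃ μ : ℝ, μ = 1 / (4 * M) := ⟨_, rfl⟩
  have hμ0 : 0 < μ := by rw [hμ]; positivity
  have hμM : μ * M = 1 / 4 := by rw [hμ]; field_simp
  have hμ1 : μ ≤ 1 / 4 := by nlinarith
  obtain ⟨l, hl⟩ : ∃ l : ℝ, l = 1 - μ := ⟨_, rfl⟩
  have hl0 : 0 < l := by linarith
  have hl1 : l < 1 := by linarith
  -- choice of the next correction
  have step : ∀ (n : ℕ) (S : {S : ℂ → ℂ // UA K S ∧ S x = ((1 - l ^ n : ℝ) : ℂ)}),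
      ∃ (η : ℝ) (F : ℂ → ℂ), 0 < η ∧ η ≤ 1 / ((n : ℝ) + 1) ∧
        (∀ z ∈ K, ‖z - x‖ < η → ‖S.1 z‖ ≤ 1 - l ^ n + l ^ n / 4) ∧
        UA K F ∧ F x = 1 ∧ (∀ z ∈ K, ‖F z‖ ≤ M) ∧
        ∀ z ∈ K, η ≤ ‖z - x‖ → ‖F z‖ ≤ 1 / 4 := by
    rintro n ⟨S, hS, hSx⟩
    have hln : 0 < l ^ n := pow_pos hl0 n
    have hln1 : l ^ n ≤ 1 := pow_le_one₀ hl0.le hl1.le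
    obtain ⟨δ, hδ, hδS⟩ := Metric.continuousOn_iff.1 hS.continuousOn x hxK (l ^ n / 4)
      (by positivity)
    have hη : 0 < min δ (1 / ((n : ℝ) + 1)) := lt_min hδ (by positivity)
    obtain ⟨F, hF⟩ := H _ hη
    refine ⟨_, F, hη, min_le_right _ _, fun z hz hzx => ?_, hF⟩
    have h1 := hδS z hz (by rw [dist_eq_norm]; exact hzx.trans_le (min_le_left _ _))
    rw [dist_eq_norm, hSx] at h1
    have h2 := norm_le_norm_add_norm_sub' (S z) ((1 - l ^ n : ℝ) : ℂ)
    rw [Complex.norm_real, Real.norm_of_nonneg (by linarith)] at h2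
    show ‖S z‖ ≤ _
    linarith
  choose η F hη hηn hS hFU hFx hFM hFs using step
  let S : (n : ℕ) → {S : ℂ → ℂ // UA K S ∧ S x = ((1 - l ^ n : ℝ) : ℂ)} := fun n =>
    Nat.rec ⟨fun _ => 0, UA.const K 0, by simp⟩
      (fun n T => ⟨fun z => T.1 z + ((μ * l ^ n : ℝ) : ℂ) * F n T z,
        T.2.1.add ((UA.const K _).mul hKc (hFU n T)), by
          simp only [T.2.2, hFx, hl, Nat.succ_eq_add_one, pow_succ]; push_cast; ring⟩) n
  have hsucc : ∀ n z, (S (n + 1)).1 z = (S n).1 z + ((μ * l ^ n : ℝ) : ℂ) * F n (S n) z :=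
    fun n z => rfl
  have hdiff : ∀ n z, ‖(S (n + 1)).1 z - (S n).1 z‖ = μ * l ^ n * ‖F n (S n) z‖ := by
    intro n z
    rw [hsucc, add_sub_cancel_left, norm_mul, Complex.norm_real,
      Real.norm_of_nonneg (by positivity)]
  have hgeo : ∀ z ∈ K, ∀ n, dist ((S n).1 z) ((S (n + 1)).1 z) ≤ 1 / 4 * l ^ n := by
    intro z hz n
    rw [dist_comm, dist_eq_norm, hdiff]
    have h1 := mul_le_mul_of_nonneg_left (hFM n (S n) z hz)
      (by positivity : 0 ≤ μ * l ^ n)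
    calc _ ≤ _ := h1
      _ = (μ * M) * l ^ n := by ring
      _ = _ := by rw [hμM]
  have hlim : ∀ z, ∃ w, z ∈ K → Filter.Tendsto (fun n => (S n).1 z) Filter.atTop (nhds w) := by
    intro z
    by_cases hz : z ∈ K
    · obtain ⟨w, hw⟩ := cauchySeq_tendsto_of_complete
        (cauchySeq_of_le_geometric l _ hl1 (hgeo z hz))
      exact ⟨w, fun _ => hw⟩
    · exact ⟨0, fun h => absurd h hz⟩
  choose f hf using hlim
  have hpow : Filter.Tendsto (fun n => l ^ n) Filter.atTop (nhds 0) :=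
    tendsto_pow_atTop_nhds_zero_of_lt_one hl0.le hl1
  refine ⟨f, UA.lim fun ε hε => ?_, ?_, fun y hy hyx => ?_⟩
  · have h1 : Filter.Tendsto (fun n => 1 / 4 * l ^ n / (1 - l)) Filter.atTop (nhds 0) := by
      simpa using (hpow.const_mul (1 / 4 : ℝ)).div_const (1 - l)
    obtain ⟨n, hn⟩ := (h1.eventually (gt_mem_nhds hε)).exists
    refine ⟨(S n).1, (S n).2.1, fun z hz => ?_⟩
    have := dist_le_of_le_geometric_of_tendsto l _ hl1 (hgeo z hz) (hf z hz) n
    rw [dist_comm, dist_eq_norm] at this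
    linarith
  · refine tendsto_nhds_unique (hf x hxK) ?_
    have h1 : Filter.Tendsto (fun n => ((1 - l ^ n : ℝ) : ℂ)) Filter.atTop (nhds ((1 : ℝ) : ℂ)) := by
      refine (Complex.continuous_ofReal.tendsto 1).comp ?_
      simpa using hpow.const_sub 1
    rw [Complex.ofReal_one] at h1
    exact h1.congr fun n => ((S n).2.2).symm
  · -- tail estimate
    have tail : ∀ m : ℕ, (∀ k, m ≤ k → η k (S k) ≤ ‖y - x‖) → ∀ N, m ≤ N →
        ‖(S N).1 y‖ ≤ ‖(S m).1 y‖ + (l ^ m - l ^ N) / 4 := by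
      intro m hm N hN
      induction N, hN using Nat.le_induction with
      | base => simp
      | succ N hN ih =>
        have h1 := norm_le_norm_add_norm_sub' ((S (N + 1)).1 y) ((S N).1 y)
        rw [hdiff] at h1
        have h2 := mul_le_mul_of_nonneg_left (hFs N (S N) y hy (hm N hN))
          (by positivity : 0 ≤ μ * l ^ N)
        have h3 : l ^ (N + 1) = l ^ N - μ * l ^ N := by rw [hl]; ring
        linarith
    have fin : ∀ (m : ℕ) (c : ℝ), (∀ k, m ≤ k → η k (S k) ≤ ‖y - x‖) →
        ‖(S m).1 y‖ + l ^ m / 4 ≤ c → ‖f y‖ ≤ c := by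
      intro m c hm hc
      refine le_of_tendsto (hf y hy).norm ?_
      filter_upwards [Filter.eventually_ge_atTop m] with N hN
      have h1 := tail m hm N hN
      have h2 : 0 < l ^ N := pow_pos hl0 N
      linarith
    have hpos : 0 < ‖y - x‖ := norm_pos_iff.2 (sub_ne_zero.2 hyx)
    obtain ⟨N₀, hN₀⟩ := exists_nat_one_div_lt hpos
    have hbig : ∀ k, N₀ ≤ k → η k (S k) ≤ ‖y - x‖ := by
      intro k hk
      have h1 := hηn k (S k)
      have h2 : 1 / ((k : ℝ) + 1) ≤ 1 / ((N₀ : ℝ) + 1) := by gcongr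
      linarith
    by_cases hex : ∃ k, ‖y - x‖ < η k (S k)
    · classical
      obtain ⟨n, hn, hmax⟩ : ∃ n, ‖y - x‖ < η n (S n) ∧
          ∀ k, n + 1 ≤ k → η k (S k) ≤ ‖y - x‖ := by
        obtain ⟨k₀, hk₀⟩ := hex
        have hb : k₀ ≤ N₀ := by
          by_contra! h
          linarith [hbig k₀ h.le]
        refine ⟨Nat.findGreatest (fun k => ‖y - x‖ < η k (S k)) N₀,
          Nat.findGreatest_spec (P := fun k => ‖y - x‖ < η k (S k)) hb hk₀, fun k hk => ?_⟩
        by_cases hkN : k ≤ N₀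
        · exact not_lt.1 (Nat.findGreatest_is_greatest
            (P := fun k => ‖y - x‖ < η k (S k)) (Nat.lt_of_succ_le hk) hkN)
        · exact hbig k (by omega)
      have hln : 0 < l ^ n := pow_pos hl0 n
      have h1 := hS n (S n) y hy hn
      have h2 := hgeo y hy n
      rw [dist_comm, dist_eq_norm] at h2
      have h3 := norm_le_norm_add_norm_sub' ((S (n + 1)).1 y) ((S n).1 y)
      have h4 : l ^ (n + 1) ≤ l ^ n := pow_le_pow_of_le_one hl0.le hl1.le (Nat.le_succ n)
      have := fin (n + 1) (1 - l ^ n / 4) hmax (by linarith)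
      linarith
    · push Not at hex
      have := fin 0 (1 / 4) (fun k _ => hex k) (by
        have : (S 0).1 y = 0 := rfl
        rw [this]; simp)
      linarith

/-- Every boundary point of a compact polynomially convex set `K ⊆ ℂ`
is a peak point for the algebra `P(K)`. -/
theorem stmt6 (K : Set ℂ) (hKc : IsCompact K) (hK : PolyConvex1 K)
    (x : ℂ) (hx : x ∈ frontier K) :
    ∃ f : ℂ → ℂ, MemPolyAlg K f ∧ f x = 1 ∧ ∀ y ∈ K, y ≠ x → ‖f y‖ < 1 := by
  have hxK : x ∈ K := hKc.isClosed.frontier_subset hx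
  obtain ⟨f, hf, hfx, hfy⟩ := exists_peak_s6 hxK (M := 2000) (by norm_num)
    (fun η hη => exists_local hKc hK hx hη) hKc
  exact ⟨f, ⟨hf.continuousOn, hf⟩, hfx, hfy⟩
end
end

section
/- Let D = {z ∈ ℂ : |z| ≤ r} with r > 0 sufficiently small, and set X₁ = {(z, z̄/(1+z̄)) : z ∈ D} and X₂ = {(−z, z̄/(1+z̄)) : z ∈ D}, so that X₁ ∪ X₂ = π⁻¹(X) for π(z, w) = (z², w) and X = {(z², z̄/(1+z̄)) : z ∈ D}. Then R(X₁ ∪ X₂) = C(X₁ ∪ X₂); in particular, X₁ ∪ X₂ is rationally convex. -/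
open Complex MvPolynomial Metric

noncomputable section

/-- `R(K) = C(K)` for `K ⊆ ℂ²` (with `ℂ²` realized as `Fin 2 → ℂ`): every continuous
function on `K` is a uniform limit on `K` of rational functions with poles off `K`. -/
def RatEqC (K : Set (Fin 2 → ℂ)) : Prop :=
  ∀ f : (Fin 2 → ℂ) → ℂ, ContinuousOn f K → ∀ ε : ℝ, 0 < ε →
    ∃ P Q : MvPolynomial (Fin 2) ℂ, (∀ x ∈ K, eval x Q ≠ 0) ∧
      ∀ x ∈ K, ‖f x - eval x P / eval x Q‖ < ε

/-- The rationally convex hull of `K ⊆ ℂ²`. -/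
def RHull (K : Set (Fin 2 → ℂ)) : Set (Fin 2 → ℂ) :=
  {z | ∀ P Q : MvPolynomial (Fin 2) ℂ, (∀ x ∈ K ∪ {z}, eval x Q ≠ 0) →
    ‖eval z P / eval z Q‖ ≤ sSup ((fun w => ‖eval w P / eval w Q‖) '' K)}

lemma sgn_poly (ε : ℝ) (hε : 0 < ε) : ∃ q : Polynomial ℝ, ∀ t : ℝ, 0 ≤ t → t ≤ 1 →
    t * |q.eval (t ^ 2) - 1| < ε ∧ t * |q.eval (-t ^ 2) + 1| < ε := by
  have hd : (0 : ℝ) < ε ^ 2 := by positivity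
  have hne : ∀ x : ℝ, |x| + ε ^ 2 ≠ 0 := fun x => by positivity
  obtain ⟨q, hq⟩ := exists_polynomial_near_of_continuousOn (-1) 1
    (fun x : ℝ => x / (|x| + ε ^ 2))
    (Continuous.continuousOn (continuous_id.div (by fun_prop) hne)) (ε / 4) (by positivity)
  refine ⟨q, fun t h0 h1 => ?_⟩
  have ht2 : t ^ 2 ≤ 1 := by nlinarith
  have hpos : 0 < t ^ 2 + ε ^ 2 := by positivity
  have a1 := hq (t ^ 2) ⟨by nlinarith, ht2⟩
  have a2 := hq (-t ^ 2) ⟨by linarith, by nlinarith⟩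
  simp only [abs_neg, abs_of_nonneg (sq_nonneg t)] at a1 a2
  have key : t * (ε ^ 2 / (t ^ 2 + ε ^ 2)) ≤ ε / 2 := by
    rw [← mul_div_assoc, div_le_iff₀ hpos]
    nlinarith [mul_nonneg hε.le (sq_nonneg (t - ε))]
  have e1 : t ^ 2 / (t ^ 2 + ε ^ 2) = 1 - ε ^ 2 / (t ^ 2 + ε ^ 2) := by field_simp; ring
  have hr : 0 ≤ ε ^ 2 / (t ^ 2 + ε ^ 2) := by positivity
  rw [neg_div] at a2
  rw [e1] at a1 a2
  set ρ := ε ^ 2 / (t ^ 2 + ε ^ 2)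
  have b1 : |q.eval (t ^ 2) - 1| ≤ ε / 4 + ρ := by
    rw [abs_lt] at a1; rw [abs_le]; constructor <;> linarith
  have b2 : |q.eval (-t ^ 2) + 1| ≤ ε / 4 + ρ := by
    rw [abs_lt] at a2; rw [abs_le]; constructor <;> linarith
  constructor
  · nlinarith [mul_le_mul_of_nonneg_left b1 h0]
  · nlinarith [mul_le_mul_of_nonneg_left b2 h0]

lemma star_mem_closure {K : Type*} [TopologicalSpace K] [CompactSpace K]
    (A : Subalgebra ℂ C(K, ℂ)) (a b : C(K, ℂ)) (ha : a ∈ A) (hb : b ∈ A)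
    (h1 : ∀ x, ‖a x‖ ≤ 1)
    (h : ∀ x, (starRingEnd ℂ) (a x) = b x ∨ (starRingEnd ℂ) (a x) = - b x) :
    star a ∈ A.topologicalClosure := by
  rw [← SetLike.mem_coe, Subalgebra.topologicalClosure_coe, Metric.mem_closure_iff]
  intro ε hε
  obtain ⟨q, hq⟩ := sgn_poly ε hε
  refine ⟨b * Polynomial.aeval (a * b) (q.map (algebraMap ℝ ℂ)), ?_, ?_⟩
  · exact A.mul_mem hb (Algebra.adjoin_le
      (Set.singleton_subset_iff.mpr (A.mul_mem ha hb))
      (Polynomial.aeval_mem_adjoin_singleton ℂ (a * b)))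
  rw [ContinuousMap.dist_lt_iff hε]
  intro x
  have hev : (Polynomial.aeval (a * b) (q.map (algebraMap ℝ ℂ))) x
      = (q.map (algebraMap ℝ ℂ)).eval (a x * b x) := by
    have := Polynomial.aeval_algHom_apply
      (ContinuousMap.evalAlgHom ℂ ℂ x) (a * b) (q.map (algebraMap ℝ ℂ))
    rw [Polynomial.coe_aeval_eq_eval] at this
    exact this.symm
  have hre : ∀ y : ℝ, (q.map (algebraMap ℝ ℂ)).eval (y : ℂ) = ((q.eval y : ℝ) : ℂ) := by
    intro y
    rw [Polynomial.eval_map]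
    exact Polynomial.eval₂_at_apply (algebraMap ℝ ℂ) y
  rw [dist_eq_norm, ContinuousMap.mul_apply, hev, ContinuousMap.star_apply]
  have hn := hq ‖a x‖ (norm_nonneg _) (h1 x)
  change ‖(starRingEnd ℂ) (a x) - _‖ < ε
  have hm := Complex.mul_conj' (a x)
  rcases h x with hx | hx
  · have hp : a x * b x = ((‖a x‖ ^ 2 : ℝ) : ℂ) := by rw [← hx, hm]; push_cast; rfl
    have hb' : ‖b x‖ = ‖a x‖ := by rw [← hx, Complex.norm_conj]
    rw [hp, hre, hx]
    rw [show b x - b x * ((q.eval (‖a x‖ ^ 2) : ℝ) : ℂ)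
      = -(b x * ((q.eval (‖a x‖ ^ 2) - 1 : ℝ) : ℂ)) by push_cast; ring,
      norm_neg, norm_mul, hb', Complex.norm_real]
    exact hn.1
  · have hbx : b x = - (starRingEnd ℂ) (a x) := by rw [hx, neg_neg]
    have hp : a x * b x = ((-‖a x‖ ^ 2 : ℝ) : ℂ) := by
      rw [hbx, mul_neg, hm]; push_cast; rfl
    have hb' : ‖b x‖ = ‖a x‖ := by rw [hbx, norm_neg, Complex.norm_conj]
    rw [hp, hre, hx]
    rw [show -b x - b x * ((q.eval (-‖a x‖ ^ 2) : ℝ) : ℂ)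
      = -(b x * ((q.eval (-‖a x‖ ^ 2) + 1 : ℝ) : ℂ)) by push_cast; ring,
      norm_neg, norm_mul, hb', Complex.norm_real]
    exact hn.2

/-- The algebra of rational functions with poles off `K`. -/
def ratAlg (K : Set (Fin 2 → ℂ)) : Subalgebra ℂ C(K, ℂ) where
  carrier := {f | ∃ P Q : MvPolynomial (Fin 2) ℂ, (∀ x ∈ K, eval x Q ≠ 0) ∧
      ∀ x : K, f x = eval x.1 P / eval x.1 Q}
  mul_mem' := by
    rintro f g ⟨P, Q, hQ, hf⟩ ⟨P', Q', hQ', hg⟩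
    refine ⟨P * P', Q * Q', fun x hx => ?_, fun x => ?_⟩
    · rw [map_mul]; exact mul_ne_zero (hQ x hx) (hQ' x hx)
    · rw [ContinuousMap.mul_apply, hf, hg, map_mul, map_mul, div_mul_div_comm]
  add_mem' := by
    rintro f g ⟨P, Q, hQ, hf⟩ ⟨P', Q', hQ', hg⟩
    refine ⟨P * Q' + Q * P', Q * Q', fun x hx => ?_, fun x => ?_⟩
    · rw [map_mul]; exact mul_ne_zero (hQ x hx) (hQ' x hx)
    · rw [ContinuousMap.add_apply, hf, hg, map_mul, map_add, map_mul, map_mul,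
        div_add_div _ _ (hQ _ x.2) (hQ' _ x.2)]
  algebraMap_mem' := by
    intro c
    exact ⟨C c, 1, by simp, by simp⟩

lemma ratEqC_of (K : Set (Fin 2 → ℂ)) (hK : IsCompact K)
    (h1 : ∀ x ∈ K, 1 - x 1 ≠ 0) (h0 : ∀ x ∈ K, ‖x 0‖ ≤ 1)
    (h : ∀ x ∈ K, (starRingEnd ℂ) (x 0) = x 1 / (1 - x 1) ∨
      (starRingEnd ℂ) (x 0) = - (x 1 / (1 - x 1))) : RatEqC K := by
  have : CompactSpace K := isCompact_iff_compactSpace.mp hK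
  have c0 : ∀ i : Fin 2, Continuous (fun x : K => x.1 i) :=
    fun i => (continuous_apply i).comp continuous_subtype_val
  let a : C(K, ℂ) := ⟨fun x => x.1 0, c0 0⟩
  let b : C(K, ℂ) := ⟨fun x => x.1 1 / (1 - x.1 1),
    Continuous.div (c0 1) (continuous_const.sub (c0 1)) (fun x => h1 _ x.2)⟩
  have ha : a ∈ ratAlg K := ⟨X 0, 1, by simp, by simp [a]⟩
  have hb : b ∈ ratAlg K := ⟨X 1, 1 - X 1, by simpa using h1, by simp [b]⟩
  have hab : ∀ x, (starRingEnd ℂ) (a x) = b x ∨ (starRingEnd ℂ) (a x) = - b x :=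
    fun x => h _ x.2
  have hba : ∀ x, (starRingEnd ℂ) (b x) = a x ∨ (starRingEnd ℂ) (b x) = - a x := by
    intro x
    rcases hab x with hx | hx
    · left; rw [← hx, Complex.conj_conj]
    · right; rw [← neg_neg (b x), ← hx, map_neg, Complex.conj_conj]
  have hna : ∀ x, ‖a x‖ ≤ 1 := fun x => h0 _ x.2
  have hnb : ∀ x, ‖b x‖ ≤ 1 := by
    intro x
    rw [← Complex.norm_conj]
    rcases hba x with hx | hx <;> rw [hx]
    · exact hna x
    · rw [norm_neg]; exact hna x
  have sa := star_mem_closure _ a b ha hb hna hab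
  have sb := star_mem_closure _ b a hb ha hnb hba
  have hle := (ratAlg K).le_topologicalClosure
  let S := StarAlgebra.adjoin ℂ ({a, b} : Set C(K, ℂ))
  have hS : S.toSubalgebra ≤ (ratAlg K).topologicalClosure := by
    rw [StarAlgebra.adjoin_toSubalgebra]
    apply Algebra.adjoin_le
    rintro f (hf | hf)
    · rcases hf with rfl | rfl
      · exact hle ha
      · exact hle hb
    · rw [Set.mem_star] at hf
      rcases hf with hf | hf
      · rw [← star_star f, hf]; exact sa
      · rw [← star_star f, hf]; exact sb
  have haS : a ∈ S := StarAlgebra.subset_adjoin ℂ _ (by simp)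
  have hbS : b ∈ S := StarAlgebra.subset_adjoin ℂ _ (by simp)
  have hsep : S.SeparatesPoints := by
    intro x y hxy
    by_cases e0 : x.1 0 = y.1 0
    · refine ⟨b, ⟨b, hbS, rfl⟩, fun hbe => hxy ?_⟩
      have hbe' : x.1 1 / (1 - x.1 1) = y.1 1 / (1 - y.1 1) := hbe
      rw [div_eq_div_iff (h1 _ x.2) (h1 _ y.2)] at hbe'
      apply Subtype.ext
      funext i
      fin_cases i
      · exact e0
      · change x.1 1 = y.1 1
        linear_combination hbe'
    · exact ⟨a, ⟨a, haS, rfl⟩, e0⟩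
  have htop := ContinuousMap.starSubalgebra_topologicalClosure_eq_top_of_separatesPoints S hsep
  intro f hf ε hε
  let F : C(K, ℂ) := ⟨fun x => f x.1, continuousOn_iff_continuous_domRestrict.mp hf⟩
  have hF : F ∈ S.topologicalClosure := by rw [htop]; trivial
  have hF2 : F ∈ closure (ratAlg K : Set C(K, ℂ)) := by
    have h3 : F ∈ closure (S : Set C(K, ℂ)) := hF
    have h4 : closure (S : Set C(K, ℂ)) ⊆ closure (ratAlg K : Set C(K, ℂ)) :=
      closure_minimal (fun g hg => hS hg) isClosed_closure
    exact h4 h3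
  rw [Metric.mem_closure_iff] at hF2
  obtain ⟨g, ⟨P, Q, hQ, hg⟩, hd⟩ := hF2 ε hε
  refine ⟨P, Q, hQ, fun x hx => ?_⟩
  rw [ContinuousMap.dist_lt_iff hε] at hd
  have := hd ⟨x, hx⟩
  rw [hg, dist_eq_norm] at this
  exact this

lemma exists_poly_vanish (K : Set (Fin 2 → ℂ)) (hK : IsCompact K) (hR : RatEqC K) (z : Fin 2 → ℂ) (hz : z ∉ K) :
    ∃ Q : MvPolynomial (Fin 2) ℂ, eval z Q = 0 ∧ ∀ x ∈ K, eval x Q ≠ 0 := by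
  let d : (Fin 2 → ℂ) → ℂ := fun x =>
    (x 0 - z 0) * (starRingEnd ℂ) (x 0 - z 0) + (x 1 - z 1) * (starRingEnd ℂ) (x 1 - z 1)
  have hd : ∀ x ∈ K, d x ≠ 0 := by
    intro x hx h0
    apply hz
    simp only [d, Complex.mul_conj] at h0
    have h0' : Complex.normSq (x 0 - z 0) + Complex.normSq (x 1 - z 1) = 0 := by
      exact_mod_cast h0
    have p0 := Complex.normSq_nonneg (x 0 - z 0)
    have p1 := Complex.normSq_nonneg (x 1 - z 1)
    have q0 : Complex.normSq (x 0 - z 0) = 0 := by linarith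
    have q1 : Complex.normSq (x 1 - z 1) = 0 := by linarith
    rw [Complex.normSq_eq_zero, sub_eq_zero] at q0 q1
    have : z = x := by
      funext i
      fin_cases i
      · exact q0.symm
      · exact q1.symm
    rw [this]; exact hx
  have hdc : ContinuousOn d K := by
    have := Complex.continuous_conj
    apply Continuous.continuousOn
    fun_prop
  have hfc : ∀ i : Fin 2, ContinuousOn (fun x => (starRingEnd ℂ) (x i - z i) / d x) K := by
    intro i
    refine ContinuousOn.div (Continuous.continuousOn ?_) hdc hd
    exact Complex.continuous_conj.comp (by fun_prop)
  obtain ⟨M, hM, hMK⟩ : ∃ M : ℝ, 0 < M ∧ ∀ x ∈ K, ∀ i : Fin 2, ‖x i - z i‖ ≤ M := by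
    obtain ⟨M, hM⟩ := hK.exists_bound_of_continuousOn (f := fun x => x - z)
      (by fun_prop)
    refine ⟨max M 1, by positivity, fun x hx i => ?_⟩
    exact (norm_le_pi_norm (x - z) i).trans ((hM x hx).trans (le_max_left _ _))
  obtain ⟨P, Q, hQ, hP⟩ := hR _ (hfc 0) (1 / (4 * M)) (by positivity)
  obtain ⟨P', Q', hQ', hP'⟩ := hR _ (hfc 1) (1 / (4 * M)) (by positivity)
  refine ⟨(X 0 - C (z 0)) * P * Q' + (X 1 - C (z 1)) * P' * Q, by simp, fun x hx h0 => ?_⟩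
  have n0 := hQ x hx
  have n1 := hQ' x hx
  have nd := hd x hx
  have e0 := hP x hx
  have e1 := hP' x hx
  simp only [map_add, map_mul, map_sub, eval_X, eval_C] at h0
  have hid : (x 0 - z 0) * ((starRingEnd ℂ) (x 0 - z 0) / d x - eval x P / eval x Q)
      + (x 1 - z 1) * ((starRingEnd ℂ) (x 1 - z 1) / d x - eval x P' / eval x Q') = 1 := by
    have i1 : (x 0 - z 0) * ((starRingEnd ℂ) (x 0 - z 0) / d x)
        + (x 1 - z 1) * ((starRingEnd ℂ) (x 1 - z 1) / d x) = 1 := by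
      rw [← mul_div_assoc, ← mul_div_assoc, ← add_div]
      exact div_self nd
    have i2 : (x 0 - z 0) * (eval x P / eval x Q) + (x 1 - z 1) * (eval x P' / eval x Q') = 0 := by
      field_simp
      linear_combination h0
    linear_combination i1 - i2
  have hn := congrArg norm hid
  rw [norm_one] at hn
  have b0 : ‖(x 0 - z 0) * ((starRingEnd ℂ) (x 0 - z 0) / d x - eval x P / eval x Q)‖
      ≤ M * (1 / (4 * M)) := by
    rw [norm_mul]
    exact mul_le_mul (hMK x hx 0) e0.le (norm_nonneg _) hM.le
  have b1 : ‖(x 1 - z 1) * ((starRingEnd ℂ) (x 1 - z 1) / d x - eval x P' / eval x Q')‖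
      ≤ M * (1 / (4 * M)) := by
    rw [norm_mul]
    exact mul_le_mul (hMK x hx 1) e1.le (norm_nonneg _) hM.le
  have hM4 : M * (1 / (4 * M)) = 1 / 4 := by field_simp
  have := norm_add_le ((x 0 - z 0) * ((starRingEnd ℂ) (x 0 - z 0) / d x - eval x P / eval x Q))
    ((x 1 - z 1) * ((starRingEnd ℂ) (x 1 - z 1) / d x - eval x P' / eval x Q'))
  linarith

lemma rhull_eq (K : Set (Fin 2 → ℂ)) (hK : IsCompact K) (hR : RatEqC K) : RHull K = K := by
  apply Set.Subset.antisymm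
  · intro z hz
    by_contra hzK
    obtain ⟨Q, hQz, hQ⟩ := exists_poly_vanish K hK hR z hzK
    obtain ⟨m, hm, hmK⟩ : ∃ m : ℝ, 0 < m ∧ ∀ x ∈ K, m ≤ ‖eval x Q‖ := by
      rcases K.eq_empty_or_nonempty with rfl | hne
      · exact ⟨1, one_pos, by simp⟩
      · obtain ⟨x0, hx0, hmin⟩ := hK.exists_isMinOn hne
          (f := fun x => ‖eval x Q‖) ((MvPolynomial.continuous_eval Q).norm.continuousOn)
        exact ⟨_, norm_pos_iff.mpr (hQ x0 hx0), fun x hx => hmin hx⟩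
    have hlow : ∀ x ∈ K, 2 * m / 3 ≤ ‖eval x (Q + C ((m / 3 : ℝ) : ℂ))‖ := by
      intro x hx
      have h1 := hmK x hx
      have h2 := norm_sub_norm_le (eval x Q) (-((m / 3 : ℝ) : ℂ))
      rw [norm_neg, Complex.norm_real, Real.norm_of_nonneg (by positivity), sub_neg_eq_add] at h2
      rw [map_add, eval_C]
      linarith
    have hzv : eval z (Q + C ((m / 3 : ℝ) : ℂ)) = ((m / 3 : ℝ) : ℂ) := by
      rw [map_add, eval_C, hQz, zero_add]
    have := hz 1 (Q + C ((m / 3 : ℝ) : ℂ)) (by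
      rintro x (hx | hx)
      · intro h0
        have := hlow x hx
        rw [h0, norm_zero] at this
        linarith
      · rw [Set.mem_singleton_iff.mp hx, hzv]
        exact_mod_cast (by positivity : m / 3 ≠ 0))
    have hs : sSup ((fun w => ‖eval w (1 : MvPolynomial (Fin 2) ℂ) /
        eval w (Q + C ((m / 3 : ℝ) : ℂ))‖) '' K) ≤ 3 / (2 * m) := by
      apply Real.sSup_le
      · rintro _ ⟨x, hx, rfl⟩
        simp only [map_one, norm_div, norm_one]
        rw [show 3 / (2 * m) = 1 / (2 * m / 3) by field_simp]
        exact one_div_le_one_div_of_le (by positivity) (hlow x hx)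
      · positivity
    rw [hzv, map_one, norm_div, norm_one, Complex.norm_real,
      Real.norm_of_nonneg (by positivity)] at this
    have h5 := this.trans hs
    rw [div_le_div_iff₀ (by positivity) (by positivity)] at h5
    linarith
  · intro z hz P Q hQ
    have hc : ContinuousOn (fun w => ‖eval w P / eval w Q‖) K :=
      ((MvPolynomial.continuous_eval P).continuousOn.div
        (MvPolynomial.continuous_eval Q).continuousOn (fun x hx => hQ x (Or.inl hx))).norm
    exact le_csSup (hK.image_of_continuousOn hc).bddAbove ⟨z, hz, rfl⟩

/-- For `D` a sufficiently small closed disk centered at the origin and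
`X₁ = {(z, z̄/(1+z̄)) : z ∈ D}`, `X₂ = {(−z, z̄/(1+z̄)) : z ∈ D}`, one has
`R(X₁ ∪ X₂) = C(X₁ ∪ X₂)`; in particular `X₁ ∪ X₂` is rationally convex. -/
theorem stmt10 :
    ∃ r₀ : ℝ, 0 < r₀ ∧ ∀ r : ℝ, 0 < r → r ≤ r₀ →
      ∀ X₁ X₂ : Set (Fin 2 → ℂ),
        X₁ = (fun z : ℂ => ![z, (starRingEnd ℂ) z / (1 + (starRingEnd ℂ) z)]) ''
            closedBall (0 : ℂ) r →
        X₂ = (fun z : ℂ => ![-z, (starRingEnd ℂ) z / (1 + (starRingEnd ℂ) z)]) ''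
            closedBall (0 : ℂ) r →
        RatEqC (X₁ ∪ X₂) ∧ RHull (X₁ ∪ X₂) = X₁ ∪ X₂ := by
  refine ⟨1 / 2, by norm_num, ?_⟩
  rintro r hr hr2 X₁ X₂ rfl rfl
  have hne : ∀ z ∈ closedBall (0 : ℂ) r, 1 + (starRingEnd ℂ) z ≠ 0 := by
    intro z hz h0
    rw [mem_closedBall_zero_iff] at hz
    have h1 : (starRingEnd ℂ) z = -1 := by linear_combination h0
    have h2 := Complex.norm_conj z
    rw [h1, norm_neg, norm_one] at h2
    linarith
  have hcw : ContinuousOn (fun z : ℂ => (starRingEnd ℂ) z / (1 + (starRingEnd ℂ) z))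
      (closedBall (0 : ℂ) r) :=
    ContinuousOn.div Complex.continuous_conj.continuousOn
      (continuous_const.add Complex.continuous_conj).continuousOn hne
  have hc : ∀ g : ℂ → ℂ, Continuous g → ContinuousOn
      (fun z : ℂ => ![g z, (starRingEnd ℂ) z / (1 + (starRingEnd ℂ) z)])
      (closedBall (0 : ℂ) r) := by
    intro g hg
    rw [continuousOn_pi]
    intro i
    fin_cases i
    · exact hg.continuousOn
    · exact hcw
  have hK := ((isCompact_closedBall (0 : ℂ) r).image_of_continuousOn (hc _ continuous_id)).union
    ((isCompact_closedBall (0 : ℂ) r).image_of_continuousOn (hc _ continuous_neg))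
  simp only [id] at hK
  have hw : ∀ z ∈ closedBall (0 : ℂ) r,
      1 - (starRingEnd ℂ) z / (1 + (starRingEnd ℂ) z) = 1 / (1 + (starRingEnd ℂ) z) := by
    intro z hz
    have := hne z hz
    field_simp
    ring
  have hu : ∀ z ∈ closedBall (0 : ℂ) r,
      (starRingEnd ℂ) z / (1 + (starRingEnd ℂ) z) /
        (1 - (starRingEnd ℂ) z / (1 + (starRingEnd ℂ) z)) = (starRingEnd ℂ) z := by
    intro z hz
    have := hne z hz
    rw [hw z hz]
    field_simp
  have hR := ratEqC_of _ hK (by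
      rintro _ (⟨z, hz, rfl⟩ | ⟨z, hz, rfl⟩)
      all_goals
        simp only [Matrix.cons_val_one, Matrix.cons_val_zero]
        rw [hw z hz]
        exact one_div_ne_zero (hne z hz)) (by
      rintro _ (⟨z, hz, rfl⟩ | ⟨z, hz, rfl⟩)
      all_goals
        rw [mem_closedBall_zero_iff] at hz
        simp only [Matrix.cons_val_zero, norm_neg]
        linarith) (by
      rintro _ (⟨z, hz, rfl⟩ | ⟨z, hz, rfl⟩)
      · left
        simp only [Matrix.cons_val_one, Matrix.cons_val_zero]
        rw [hu z hz]
      · right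
        simp only [Matrix.cons_val_one, Matrix.cons_val_zero]
        rw [hu z hz, map_neg])
  exact ⟨hR, rhull_eq _ hK hR⟩
end
end
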